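/- arXiv:1910.06388 — 2 statements merged into one kernel-verified Lean document; each statement's English description precedes it below -/
import Mathlib

section
/- For all ε > 0 and δ > 0 there exists a constant c > 0 (depending on δ and ε) such that, for 100% of fundamental discriminants D, the number of quadratic Dirichlet characters χ modulo |D| satisfying L(1,χ) ≥ exp(−c(log log |D|)^{1 − (log 2)/2 + ε}) is at least (1 − δ) times the total number of quadratic Dirichlet characters modulo |D|. -/
open Filter Topology NumberField

noncomputable section

/-- A fundamental discriminant: an integer `D ≠ 1` that is either squarefree and `≡ 1 (mod 4)`,
or `4m` with `m` squarefree and `m ≡ 2, 3 (mod 4)`. -/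
def IsFundDiscr (D : ℤ) : Prop :=
  D ≠ 1 ∧ ((Squarefree D ∧ D % 4 = 1) ∨
    ∃ m : ℤ, D = 4 * m ∧ Squarefree m ∧ (m % 4 = 2 ∨ m % 4 = 3))

/-- The number of fundamental discriminants `D` with `|D| ≤ X` satisfying `P`. -/
def fdCount (P : ℤ → Prop) (X : ℝ) : ℕ :=
  Nat.card {D : ℤ // IsFundDiscr D ∧ |(D : ℝ)| ≤ X ∧ P D}

/-- The property `P` holds for 100% of fundamental discriminants. -/
def FdDensityOne (P : ℤ → Prop) : Prop :=
  Tendsto (fun X : ℝ => (fdCount P X : ℝ) / (fdCount (fun _ => True) X : ℝ)) atTop (𝓝 1)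


/-- The quadratic (or trivial) characters mod `q`. -/
def QS (q : ℕ) [NeZero q] : Finset (DirichletCharacter ℂ q) :=
  (Set.toFinite {χ : DirichletCharacter ℂ q | χ ^ 2 = 1}).toFinset

lemma mem_QS {q : ℕ} [NeZero q] {χ : DirichletCharacter ℂ q} : χ ∈ QS q ↔ χ ^ 2 = 1 := by
  simp [QS]

lemma one_mem_QS (q : ℕ) [NeZero q] : (1 : DirichletCharacter ℂ q) ∈ QS q := by
  simp [mem_QS]

lemma QS_card_pos (q : ℕ) [NeZero q] : (0 : ℝ) < (QS q).card := by
  exact_mod_cast Finset.card_pos.2 ⟨1, one_mem_QS q⟩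

lemma quad_re {q : ℕ} {χ : DirichletCharacter ℂ q} (h : χ ^ 2 = 1) (n : ZMod q) :
    (((χ n).re : ℝ) : ℂ) = χ n := by
  rcases MulChar.isQuadratic_iff_sq_eq_one.mpr h n with h | h | h <;> simp [h]

lemma quad_abs {q : ℕ} (χ : DirichletCharacter ℂ q) (n : ZMod q) :
    |(χ n).re| ≤ 1 := (Complex.abs_re_le_norm _).trans (χ.norm_le_one n)

lemma quad_mul {q : ℕ} {χ : DirichletCharacter ℂ q} (h : χ ^ 2 = 1) (m n : ZMod q) :
    (χ (m * n)).re = (χ m).re * (χ n).re := by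
  have := quad_re h (m * n)
  rw [map_mul, ← quad_re h m, ← quad_re h n] at this
  rw [map_mul, ← quad_re h m, ← quad_re h n]
  exact_mod_cast this.symm

open ArithmeticFunction in
/-- coefficients of `log ζ(s)` -/
def wt (s : ℝ) (n : ℕ) : ℝ := vonMangoldt n / ((n : ℝ) ^ s * Real.log n)

lemma wt_nonneg (s : ℝ) (n : ℕ) : 0 ≤ wt s n := by
  unfold wt
  have := ArithmeticFunction.vonMangoldt_nonneg (n := n)
  have := Real.log_natCast_nonneg n
  positivity

lemma wt_summable {s : ℝ} (hs : 1 < s) : Summable (wt s) := by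
  refine Summable.of_nonneg_of_le (wt_nonneg s) (fun n => ?_) (Real.summable_one_div_nat_rpow.2 hs)
  unfold wt
  have h1 := ArithmeticFunction.vonMangoldt_le_log (n := n)
  have h2 := Real.log_natCast_nonneg n
  rcases h2.eq_or_lt with h | h
  · rw [← h]; simp; positivity
  · rcases Nat.eq_zero_or_pos n with rfl | hn
    · simp at h
    · have : (0 : ℝ) < (n : ℝ) ^ s := by positivity
      rw [div_le_div_iff₀ (by positivity) this]
      nlinarith

/-- `log L(s,χ)` for real `s > 1` and quadratic `χ`. -/
def fL {q : ℕ} (s : ℝ) (χ : DirichletCharacter ℂ q) : ℝ := ∑' n : ℕ, wt s n * (χ (n : ZMod q)).re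

lemma fL_summable {q : ℕ} {s : ℝ} (hs : 1 < s) (χ : DirichletCharacter ℂ q) :
    Summable (fun n : ℕ => wt s n * (χ (n : ZMod q)).re) := by
  refine Summable.of_norm_bounded (wt_summable hs) (fun n => ?_)
  rw [Real.norm_eq_abs, abs_mul, abs_of_nonneg (wt_nonneg s n)]
  exact mul_le_of_le_one_right (wt_nonneg s n) (quad_abs χ _)

lemma fL_abs_le {q : ℕ} {s : ℝ} (hs : 1 < s) (χ : DirichletCharacter ℂ q) :
    |fL s χ| ≤ ∑' n, wt s n := by
  have h := (fL_summable hs χ)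
  have h2 : ∀ n : ℕ, |wt s n * (χ (n : ZMod q)).re| ≤ wt s n := fun n => by
    rw [abs_mul, abs_of_nonneg (wt_nonneg s n)]
    exact mul_le_of_le_one_right (wt_nonneg s n) (quad_abs χ _)
  rw [abs_le]
  constructor
  · rw [← tsum_neg]
    exact Summable.tsum_le_tsum (fun n => (abs_le.1 (h2 n)).1) (wt_summable hs).neg h
  · exact Summable.tsum_le_tsum (fun n => (abs_le.1 (h2 n)).2) h (wt_summable hs)

lemma exp_fL {q : ℕ} [NeZero q] {s : ℝ} (hs : 1 < s) {χ : DirichletCharacter ℂ q} (h : χ ^ 2 = 1) :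
    χ.LFunction s = ((Real.exp (fL s χ) : ℝ) : ℂ) := by
  rw [DirichletCharacter.LFunction_eq_LSeries _ (by simpa using hs),
    ← DirichletCharacter.LSeries_eq_exp_LSeries χ (by simpa using hs), LSeries_def₀ (by simp),
    Complex.ofReal_exp]
  congr 1
  rw [fL, Complex.ofReal_tsum]
  refine tsum_congr fun n => ?_
  rw [Complex.ofReal_mul, quad_re h, wt]
  push_cast
  rw [Complex.ofReal_cpow (by positivity)]
  simp [field]

lemma exp_wt {s : ℝ} (hs : 1 < s) :
    riemannZeta s = ((Real.exp (∑' n, wt s n) : ℝ) : ℂ) := by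
  rw [← riemannZeta_eq_exp_LSeries (by simpa using hs), LSeries_def₀ (by simp), Complex.ofReal_exp]
  congr 1
  rw [Complex.ofReal_tsum]
  refine tsum_congr fun n => ?_
  rw [wt]
  push_cast
  rw [Complex.ofReal_cpow (by positivity)]
  simp [field]

lemma QS_sum {q : ℕ} [NeZero q] (n : ZMod q) :
    (∀ χ ∈ QS q, χ n = 1) ∧ ∑ χ ∈ QS q, (χ n).re = (QS q).card ∨
     ∑ χ ∈ QS q, (χ n).re = 0 := by
  by_cases h : ∀ χ ∈ QS q, χ n = 1
  · left
    refine ⟨h, ?_⟩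
    rw [Finset.sum_congr rfl (fun χ hχ => by rw [h χ hχ])]
    simp
  · right
    push Not at h
    obtain ⟨ψ, hψ, hne⟩ := h
    have key : ψ n * ∑ χ ∈ QS q, χ n = ∑ χ ∈ QS q, χ n := by
      rw [Finset.mul_sum]
      refine Finset.sum_bij (fun χ _ => ψ * χ) ?_ ?_ ?_ ?_
      · intro χ hχ
        rw [mem_QS] at *
        rw [mul_pow, hχ, hψ, one_mul]
      · intro a _ b _ hab
        exact mul_left_cancel hab
      · intro b hb
        refine ⟨ψ⁻¹ * b, ?_, by simp⟩
        rw [mem_QS] at *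
        rw [mul_pow, hb, inv_pow, hψ]; simp
      · intro χ _
        rfl
    have h0 : ∑ χ ∈ QS q, χ n = 0 := by
      have : (ψ n - 1) * ∑ χ ∈ QS q, χ n = 0 := by rw [sub_mul, key]; ring
      rcases mul_eq_zero.1 this with h | h
      · exact absurd (sub_eq_zero.1 h) hne
      · exact h
    have := congrArg Complex.re h0
    simpa using this

lemma QS_sum_nonneg {q : ℕ} [NeZero q] (n : ZMod q) : 0 ≤ ∑ χ ∈ QS q, (χ n).re := by
  rcases QS_sum n with h | h
  · rw [h.2]; positivity
  · rw [h]

lemma QS_avg_le {q d : ℕ} [NeZero q] [NeZero d] (hd : d ∣ q) (n : ℕ) :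
    (∑ χ ∈ QS q, (χ (n : ZMod q)).re) / (QS q).card ≤
      (∑ χ ∈ QS d, (χ (n : ZMod d)).re) / (QS d).card := by
  rcases QS_sum (n : ZMod q) with h | h
  · have hn : IsUnit (n : ZMod q) := by
      by_contra hn
      have := h.1 1 (one_mem_QS q)
      rw [MulChar.map_nonunit _ hn] at this
      simp at this
    have h1 : ∀ χ ∈ QS d, χ (n : ZMod d) = 1 := by
      intro χ hχ
      have h2 := h.1 (DirichletCharacter.changeLevel hd χ) (by
        rw [mem_QS] at *
        rw [← map_pow, hχ, map_one])
      have h3 := DirichletCharacter.changeLevel_eq_cast_of_dvd χ hd hn.unit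
      rw [IsUnit.unit_spec, ZMod.cast_natCast hd] at h3
      rw [← h3, h2]
    rw [h.2, Finset.sum_congr rfl (fun χ hχ => by rw [h1 χ hχ])]
    simp only [Complex.one_re, Finset.sum_const, nsmul_eq_mul, mul_one]
    rw [div_self (QS_card_pos q).ne', div_self (QS_card_pos d).ne']
  · rw [h, zero_div]
    exact div_nonneg (QS_sum_nonneg _) (by positivity)

lemma fL_avg_nonneg {q : ℕ} [NeZero q] {s : ℝ} (hs : 1 < s) : 0 ≤ ∑ χ ∈ QS q, fL s χ := by
  unfold fL
  rw [← Summable.tsum_finsetSum (fun χ _ => fL_summable hs χ)]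
  refine tsum_nonneg fun n => ?_
  rw [← Finset.mul_sum]
  exact mul_nonneg (wt_nonneg _ _) (QS_sum_nonneg _)

lemma fL_sq {q : ℕ} {s : ℝ} (hs : 1 < s) {χ : DirichletCharacter ℂ q} (h : χ ^ 2 = 1) :
    Summable (fun z : ℕ × ℕ => wt s z.1 * wt s z.2 * (χ ((z.1 * z.2 : ℕ) : ZMod q)).re) ∧
    fL s χ ^ 2 = ∑' z : ℕ × ℕ, wt s z.1 * wt s z.2 * (χ ((z.1 * z.2 : ℕ) : ZMod q)).re := by
  have e : ∀ z : ℕ × ℕ, wt s z.1 * wt s z.2 * (χ ((z.1 * z.2 : ℕ) : ZMod q)).re =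
      (wt s z.1 * (χ (z.1 : ZMod q)).re) * (wt s z.2 * (χ (z.2 : ZMod q)).re) := by
    intro z
    rw [Nat.cast_mul, quad_mul h]; ring
  have hn := (fL_summable hs χ).norm
  simp_rw [e]
  refine ⟨summable_mul_of_summable_norm hn hn, ?_⟩
  rw [← tsum_mul_tsum_of_summable_norm hn hn, sq]
  rfl

lemma fL_sq_avg_le {q d : ℕ} [NeZero q] [NeZero d] (hd : d ∣ q) {s : ℝ} (hs : 1 < s) :
    (∑ χ ∈ QS q, fL s χ ^ 2) / (QS q).card ≤ (∑ χ ∈ QS d, fL s χ ^ 2) / (QS d).card := by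
  have key : ∀ (r : ℕ) [NeZero r], Summable (fun z : ℕ × ℕ => wt s z.1 * wt s z.2 *
      ((∑ χ ∈ QS r, (χ ((z.1 * z.2 : ℕ) : ZMod r)).re) / (QS r).card)) ∧
      (∑ χ ∈ QS r, fL s χ ^ 2) / (QS r).card = ∑' z : ℕ × ℕ, wt s z.1 * wt s z.2 *
      ((∑ χ ∈ QS r, (χ ((z.1 * z.2 : ℕ) : ZMod r)).re) / (QS r).card) := by
    intro r _
    have e : ∀ z : ℕ × ℕ, wt s z.1 * wt s z.2 *
      ((∑ χ ∈ QS r, (χ ((z.1 * z.2 : ℕ) : ZMod r)).re) / (QS r).card) =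
      (∑ χ ∈ QS r, wt s z.1 * wt s z.2 * (χ ((z.1 * z.2 : ℕ) : ZMod r)).re) / (QS r).card := by
      intro z
      rw [← Finset.mul_sum]; ring
    simp_rw [e]
    refine ⟨(summable_sum fun χ hχ => (fL_sq hs (mem_QS.1 hχ)).1).div_const _, ?_⟩
    rw [tsum_div_const, Summable.tsum_finsetSum (fun χ hχ => (fL_sq hs (mem_QS.1 hχ)).1)]
    congr 1
    exact Finset.sum_congr rfl (fun χ hχ => (fL_sq hs (mem_QS.1 hχ)).2)
  rw [(key q).2, (key d).2]
  refine Summable.tsum_le_tsum (fun z => ?_) (key q).1 (key d).1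
  exact mul_le_mul_of_nonneg_left (QS_avg_le hd _) (mul_nonneg (wt_nonneg _ _) (wt_nonneg _ _))

/-- Second moment bound. -/
lemma fL_sq_avg_bound {q d : ℕ} [NeZero q] [NeZero d] (hd : d ∣ q) {s B : ℝ} (hs : 1 < s)
    (hB : 0 ≤ B) (hf : ∀ χ ∈ QS d, χ ≠ 1 → fL s χ ≤ B) :
    (∑ χ ∈ QS q, fL s χ ^ 2) ≤ (QS q).card * (2 * (∑' n, wt s n) *
      ((∑' n, wt s n) / (QS d).card + B)) := by
  set M := ∑' n, wt s n with hM
  have hM0 : 0 ≤ M := tsum_nonneg (wt_nonneg s)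
  have h1 := fL_sq_avg_le hd hs
  have hq := QS_card_pos q
  have hdp := QS_card_pos d
  rw [div_le_iff₀ hq] at h1
  refine h1.trans ?_
  rw [mul_comm]
  refine mul_le_mul_of_nonneg_left ?_ hq.le
  rw [div_le_iff₀ hdp]
  have h2 : ∑ χ ∈ QS d, fL s χ ^ 2 ≤ ∑ χ ∈ QS d, M * |fL s χ| := by
    refine Finset.sum_le_sum fun χ _ => ?_
    rw [← sq_abs, sq]
    exact mul_le_mul_of_nonneg_right (fL_abs_le hs χ) (abs_nonneg _)
  have h3 : ∑ χ ∈ QS d, |fL s χ| = 2 * (∑ χ ∈ QS d, max (fL s χ) 0) - ∑ χ ∈ QS d, fL s χ := by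
    rw [Finset.mul_sum, ← Finset.sum_sub_distrib]
    refine Finset.sum_congr rfl fun χ _ => ?_
    rcases le_total 0 (fL s χ) with h | h
    · rw [abs_of_nonneg h, max_eq_left h]; ring
    · rw [abs_of_nonpos h, max_eq_right h]; ring
  have h4 : ∑ χ ∈ QS d, max (fL s χ) 0 ≤ M + (QS d).card * B := by
    classical
    rw [← Finset.add_sum_erase _ _ (one_mem_QS d)]
    refine add_le_add (max_le ((le_abs_self _).trans (fL_abs_le hs _)) hM0) ?_
    calc _ ≤ ∑ χ ∈ (QS d).erase 1, B := by
          refine Finset.sum_le_sum fun χ hχ => ?_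
          rw [Finset.mem_erase] at hχ
          exact max_le (hf χ hχ.2 hχ.1) hB
      _ = ((QS d).erase 1).card * B := by simp
      _ ≤ _ := by
          gcongr
          exact Finset.erase_subset _ _
  have h5 := fL_avg_nonneg (q := d) hs
  rw [← Finset.mul_sum] at h2
  calc _ ≤ M * ∑ χ ∈ QS d, |fL s χ| := h2
    _ ≤ M * (2 * (M + (QS d).card * B)) := by
        refine mul_le_mul_of_nonneg_left ?_ hM0
        linarith
    _ = _ := by field_simp


lemma sum_range_char {q : ℕ} [NeZero q] {χ : DirichletCharacter ℂ q} (hχ : χ ≠ 1) :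
    ∑ i ∈ Finset.range q, χ (i : ZMod q) = 0 := by
  rw [← MulChar.sum_eq_zero_of_ne_one hχ]
  refine Finset.sum_nbij' (fun i => (i : ZMod q)) (fun a => a.val) ?_ ?_ ?_ ?_ ?_
  · simp
  · intro a _
    simpa using ZMod.val_lt a
  · intro a ha
    exact ZMod.val_cast_of_lt (by simpa using ha)
  · intro a _
    simp
  · simp

lemma char_tsum_bound {q : ℕ} [NeZero q] {χ : DirichletCharacter ℂ q} (hχ : χ ≠ 1) {g : ℕ → ℝ}
    (hg0 : ∀ n, 0 ≤ g n) (hg : ∀ m n, q ≤ m → m ≤ n → g n ≤ g m) (hs : Summable g) :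
    ‖∑' n : ℕ, χ (n : ZMod q) * (g n : ℂ)‖ ≤ ∑ n ∈ Finset.range q, g n + q * g q := by
  have hsum : Summable (fun n : ℕ => χ (n : ZMod q) * (g n : ℂ)) := by
    refine Summable.of_norm_bounded hs (fun n => ?_)
    rw [norm_mul, Complex.norm_real, Real.norm_of_nonneg (hg0 n)]
    exact mul_le_of_le_one_left (hg0 n) (χ.norm_le_one _)
  have hterm : ∀ J : ℕ, ‖∑ n ∈ Finset.range (q * (J + 1)), χ (n : ZMod q) * (g n : ℂ)‖ ≤
      ∑ n ∈ Finset.range q, g n + q * (g q - g (q * (J + 1))) := by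
    intro J
    induction J with
    | zero =>
      simp only [zero_add, mul_one, sub_self, mul_zero, add_zero]
      refine (norm_sum_le _ _).trans (Finset.sum_le_sum fun n _ => ?_)
      rw [norm_mul, Complex.norm_real, Real.norm_of_nonneg (hg0 n)]
      exact mul_le_of_le_one_left (hg0 n) (χ.norm_le_one _)
    | succ J ih =>
      rw [show q * (J + 1 + 1) = q * (J + 1) + q by ring, Finset.sum_range_add]
      have hblock : ∑ x ∈ Finset.range q, χ ((q * (J + 1) + x : ℕ) : ZMod q) *
          (g (q * (J + 1) + x) : ℂ) = ∑ x ∈ Finset.range q, χ (x : ZMod q) *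
          ((g (q * (J + 1) + x) - g (q * (J + 1) + q) : ℝ) : ℂ) := by
        have : ∑ x ∈ Finset.range q, χ (x : ZMod q) * ((g (q * (J + 1) + q) : ℝ) : ℂ) = 0 := by
          rw [← Finset.sum_mul, sum_range_char hχ, zero_mul]
        rw [← sub_zero (∑ x ∈ Finset.range q, χ ((q * (J + 1) + x : ℕ) : ZMod q) * _), ← this,
          ← Finset.sum_sub_distrib]
        refine Finset.sum_congr rfl fun x _ => ?_
        push_cast
        simp
        ring
      have hb2 : ‖∑ x ∈ Finset.range q, χ ((q * (J + 1) + x : ℕ) : ZMod q) *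
          (g (q * (J + 1) + x) : ℂ)‖ ≤ q * (g (q * (J + 1)) - g (q * (J + 1) + q)) := by
        rw [hblock]
        refine (norm_sum_le _ _).trans ?_
        calc _ ≤ ∑ x ∈ Finset.range q, (g (q * (J + 1)) - g (q * (J + 1) + q)) := by
              refine Finset.sum_le_sum fun x hx => ?_
              have hx : x < q := by simpa using hx
              have hq : q ≤ q * (J + 1) := Nat.le_mul_of_pos_right _ (by omega)
              have h1 := hg (q * (J + 1)) (q * (J + 1) + x) hq (by omega)
              have h2 := hg (q * (J + 1) + x) (q * (J + 1) + q) (by omega) (by omega)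
              rw [norm_mul, Complex.norm_real, Real.norm_of_nonneg (by linarith)]
              refine (mul_le_of_le_one_left (by linarith) (χ.norm_le_one _)).trans (by linarith)
          _ = _ := by simp; ring
      refine (norm_add_le _ _).trans ?_
      linarith
  have ht : Tendsto (fun J : ℕ => ‖∑ n ∈ Finset.range (q * (J + 1)), χ (n : ZMod q) * (g n : ℂ)‖)
      atTop (𝓝 ‖∑' n : ℕ, χ (n : ZMod q) * (g n : ℂ)‖) := by
    refine Tendsto.norm ?_
    refine hsum.hasSum.tendsto_sum_nat.comp ?_
    refine tendsto_atTop_mono (fun J => ?_) tendsto_id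
    have : 0 < q := Nat.pos_of_ne_zero (NeZero.ne q)
    simp only [id]
    nlinarith
  refine le_of_tendsto' ht fun J => (hterm J).trans ?_
  have := hg0 (q * (J + 1))
  have hq : (0 : ℝ) ≤ q := by positivity
  nlinarith

lemma LFunction_tsum {q : ℕ} [NeZero q] (χ : DirichletCharacter ℂ q) {s : ℝ} (hs : 1 < s) :
    χ.LFunction s = ∑' n : ℕ, χ (n : ZMod q) * (((n : ℝ) ^ (-s) : ℝ) : ℂ) := by
  rw [DirichletCharacter.LFunction_eq_LSeries _ (by simpa using hs), LSeries]
  refine tsum_congr fun n => ?_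
  rcases Nat.eq_zero_or_pos n with rfl | hn
  · simp [Real.zero_rpow (by linarith : -s ≠ 0)]
  · rw [LSeries.term_of_ne_zero hn.ne', Complex.ofReal_cpow (by positivity)]
    push_cast
    rw [Complex.cpow_neg, div_eq_mul_inv]

lemma sum_inv_range (q : ℕ) (hq : 0 < q) :
    ∑ n ∈ Finset.range q, ((n : ℝ))⁻¹ ≤ 1 + Real.log q := by
  obtain ⟨k, rfl⟩ : ∃ k, q = k + 1 := ⟨q - 1, by omega⟩
  rw [Finset.sum_range_succ']
  simp only [Nat.cast_zero, inv_zero, add_zero]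
  have h := harmonic_le_one_add_log k
  have e : ((harmonic k : ℚ) : ℝ) = ∑ i ∈ Finset.range k, ((↑(i + 1) : ℝ))⁻¹ := by
    rw [harmonic]; push_cast; rfl
  rw [← e]
  refine h.trans ?_
  rcases Nat.eq_zero_or_pos k with rfl | hk
  · simp
  · gcongr
    omega

lemma LFunction_le {q : ℕ} [NeZero q] {χ : DirichletCharacter ℂ q} (hχ : χ ≠ 1) {s : ℝ}
    (hs : 1 < s) : ‖χ.LFunction s‖ ≤ 2 + Real.log q := by
  have hq : 0 < q := Nat.pos_of_ne_zero (NeZero.ne q)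
  rw [LFunction_tsum χ hs]
  have hle : ∀ n : ℕ, (n : ℝ) ^ (-s) ≤ (n : ℝ)⁻¹ := fun n => by
    rcases Nat.eq_zero_or_pos n with rfl | hn
    · simp [Real.zero_rpow (by linarith : -s ≠ 0)]
    · rw [← Real.rpow_neg_one]
      exact Real.rpow_le_rpow_of_exponent_le (by exact_mod_cast hn) (by linarith)
  refine (char_tsum_bound hχ (fun n => by positivity) (fun m n hm hmn => ?_)
    (Real.summable_nat_rpow.2 (by linarith))).trans ?_
  · have : (0 : ℝ) < m := by exact_mod_cast hq.trans_le hm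
    exact Real.rpow_le_rpow_of_nonpos this (by exact_mod_cast hmn) (by linarith)
  · have h1 : ∑ n ∈ Finset.range q, (n : ℝ) ^ (-s) ≤ 1 + Real.log q :=
      (Finset.sum_le_sum fun n _ => hle n).trans (sum_inv_range q hq)
    have hq' : (0 : ℝ) < q := by exact_mod_cast hq
    have h2 : q * (q : ℝ) ^ (-s) ≤ 1 := by
      calc q * (q : ℝ) ^ (-s) ≤ q * (q : ℝ)⁻¹ := by gcongr; exact hle q
        _ = 1 := by field_simp
    linarith

lemma rpow_diff_anti {m n a b : ℝ} (hm : 3 ≤ m) (hmn : m ≤ n) (ha : 1 ≤ a) (hab : a ≤ b) :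
    n ^ (-a) - n ^ (-b) ≤ m ^ (-a) - m ^ (-b) := by
  have hm0 : 0 < m := by linarith
  have hn0 : 0 < n := by linarith
  have key : AntitoneOn (fun u : ℝ => m ^ (-u) - n ^ (-u)) (Set.Ici 1) := by
    have hd : ∀ u : ℝ, HasDerivAt (fun u : ℝ => m ^ (-u) - n ^ (-u))
        (m ^ (-u) * Real.log m * (-1) - n ^ (-u) * Real.log n * (-1)) u := by
      intro u
      have h1 := ((Real.hasStrictDerivAt_const_rpow hm0 (-u)).hasDerivAt.comp u (hasDerivAt_neg u))
      have h2 := ((Real.hasStrictDerivAt_const_rpow hn0 (-u)).hasDerivAt.comp u (hasDerivAt_neg u))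
      exact h1.sub h2
    refine antitoneOn_of_deriv_nonpos (convex_Ici 1)
      (fun u _ => (hd u).continuousAt.continuousWithinAt)
      (fun u _ => (hd u).differentiableAt.differentiableWithinAt) (fun u hu => ?_)
    rw [(hd u).deriv]
    have hu : 1 < u := by simpa using hu
    have he : Real.exp (u⁻¹) ≤ 3 := by
      calc Real.exp (u⁻¹) ≤ Real.exp 1 := by
            apply Real.exp_le_exp.2
            exact inv_le_one_of_one_le₀ hu.le
        _ ≤ 3 := by have := Real.exp_one_lt_d9; linarith
    have := Real.log_div_self_rpow_antitoneOn (a := u) (by linarith)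
      (show m ∈ Set.Ici (Real.exp u⁻¹) from Set.mem_Ici.2 (by linarith))
      (show n ∈ Set.Ici (Real.exp u⁻¹) from Set.mem_Ici.2 (by linarith)) hmn
    simp only [] at this
    rw [Real.rpow_neg hm0.le, Real.rpow_neg hn0.le]
    rw [div_eq_mul_inv, div_eq_mul_inv] at this
    linarith
  have := key (show a ∈ Set.Ici 1 from ha) (show b ∈ Set.Ici 1 from ha.trans hab) hab
  simp only [] at this
  linarith

lemma rpow_diff_le {n : ℕ} {q : ℝ} (hn : (n : ℝ) ≤ q) {a b : ℝ} (ha : 1 < a)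
    (hab : a ≤ b) :
    (n : ℝ) ^ (-a) - (n : ℝ) ^ (-b) ≤ (b - a) * Real.log q * (n : ℝ)⁻¹ := by
  rcases Nat.eq_zero_or_pos n with rfl | h0
  · simp [Real.zero_rpow (by linarith : -a ≠ 0), Real.zero_rpow (by linarith : -b ≠ 0)]
  · have hn0 : (0 : ℝ) < n := by exact_mod_cast h0
    have hn1 : (1 : ℝ) ≤ n := by exact_mod_cast h0
    have h1 : (n : ℝ) ^ (-b) = (n : ℝ) ^ (-a) * (n : ℝ) ^ (-(b - a)) := by
      rw [← Real.rpow_add hn0]; congr 1; ring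
    have h2 : 1 - (b - a) * Real.log n ≤ (n : ℝ) ^ (-(b - a)) := by
      rw [Real.rpow_def_of_pos hn0]
      have := Real.add_one_le_exp (Real.log n * -(b - a))
      linarith
    have h3 : (n : ℝ) ^ (-a) ≤ (n : ℝ)⁻¹ := by
      rw [← Real.rpow_neg_one]
      exact Real.rpow_le_rpow_of_exponent_le hn1 (by linarith)
    have h4 : Real.log n ≤ Real.log q := Real.log_le_log hn0 hn
    have h5 := Real.log_nonneg hn1
    calc _ = (n : ℝ) ^ (-a) * (1 - (n : ℝ) ^ (-(b - a))) := by rw [h1]; ring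
      _ ≤ (n : ℝ) ^ (-a) * ((b - a) * Real.log n) := by gcongr; linarith
      _ ≤ (n : ℝ)⁻¹ * ((b - a) * Real.log q) := by
          apply mul_le_mul h3 _ _ (by positivity)
          · apply mul_le_mul_of_nonneg_left h4; linarith
          · apply mul_nonneg _ h5; linarith
      _ = _ := by ring

lemma LFunction_diff_le {q : ℕ} [NeZero q] (hq : 3 ≤ q) {χ : DirichletCharacter ℂ q} (hχ : χ ≠ 1)
    {a b : ℝ} (ha : 1 < a) (hab : a ≤ b) :
    ‖χ.LFunction a - χ.LFunction b‖ ≤ (b - 1) * (Real.log q * (2 + Real.log q)) := by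
  have hs : ∀ s : ℝ, 1 < s → Summable (fun n : ℕ => (n : ℝ) ^ (-s)) :=
    fun s hs => Real.summable_nat_rpow.2 (by linarith)
  have hsum : ∀ s : ℝ, 1 < s → Summable (fun n : ℕ => χ (n : ZMod q) * (((n : ℝ) ^ (-s) : ℝ) : ℂ)) := by
    intro s h
    refine Summable.of_norm_bounded (hs s h) (fun n => ?_)
    rw [norm_mul, Complex.norm_real, Real.norm_of_nonneg (by positivity)]
    exact mul_le_of_le_one_left (by positivity) (χ.norm_le_one _)
  have hb : 1 < b := by linarith
  have hq' : (3 : ℝ) ≤ q := by exact_mod_cast hq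
  have hlog : 0 ≤ Real.log q := Real.log_nonneg (by linarith)
  rw [LFunction_tsum χ ha, LFunction_tsum χ hb, ← (hsum a ha).tsum_sub (hsum b hb)]
  have e : ∀ n : ℕ, χ (n : ZMod q) * (((n : ℝ) ^ (-a) : ℝ) : ℂ) -
      χ (n : ZMod q) * (((n : ℝ) ^ (-b) : ℝ) : ℂ) =
      χ (n : ZMod q) * (((n : ℝ) ^ (-a) - (n : ℝ) ^ (-b) : ℝ) : ℂ) := by
    intro n; push_cast; ring
  simp_rw [e]
  refine (char_tsum_bound hχ (fun n => ?_) (fun m n hm hmn => ?_) ((hs a ha).sub (hs b hb))).trans ?_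
  · rcases Nat.eq_zero_or_pos n with rfl | h0
    · simp [Real.zero_rpow (by linarith : -a ≠ 0), Real.zero_rpow (by linarith : -b ≠ 0)]
    · rw [sub_nonneg]
      exact Real.rpow_le_rpow_of_exponent_le (by exact_mod_cast h0) (by linarith)
  · exact rpow_diff_anti (by exact_mod_cast hq.trans hm) (by exact_mod_cast hmn) ha.le hab
  · have h1 : ∑ n ∈ Finset.range q, ((n : ℝ) ^ (-a) - (n : ℝ) ^ (-b)) ≤
        (b - a) * Real.log q * (1 + Real.log q) := by
      calc _ ≤ ∑ n ∈ Finset.range q, (b - a) * Real.log q * (n : ℝ)⁻¹ := by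
            refine Finset.sum_le_sum fun n hn => rpow_diff_le ?_ ha hab
            exact_mod_cast (Finset.mem_range.1 hn).le
        _ ≤ _ := by
            rw [← Finset.mul_sum]
            exact mul_le_mul_of_nonneg_left (sum_inv_range q (by omega))
              (mul_nonneg (by linarith) hlog)
    have h2 : q * ((q : ℝ) ^ (-a) - (q : ℝ) ^ (-b)) ≤ (b - a) * Real.log q := by
      calc _ ≤ q * ((b - a) * Real.log q * (q : ℝ)⁻¹) := by
            gcongr
            exact rpow_diff_le le_rfl ha hab
        _ = _ := by field_simp
    have h3 : (b - a) * (Real.log q * (2 + Real.log q)) ≤ (b - 1) * (Real.log q * (2 + Real.log q)) := by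
      gcongr
    linarith

lemma LFunction_one_diff_le {q : ℕ} [NeZero q] (hq : 3 ≤ q) {χ : DirichletCharacter ℂ q}
    (hχ : χ ≠ 1) {b : ℝ} (hb : 1 < b) :
    ‖χ.LFunction 1 - χ.LFunction b‖ ≤ (b - 1) * (Real.log q * (2 + Real.log q)) := by
  have hc : Continuous (fun a : ℝ => ‖χ.LFunction (a : ℂ) - χ.LFunction b‖) := by
    have := (DirichletCharacter.differentiable_LFunction hχ).continuous
    fun_prop
  have ht : Tendsto (fun a : ℝ => ‖χ.LFunction (a : ℂ) - χ.LFunction b‖) (𝓝[>] 1)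
      (𝓝 ‖χ.LFunction ((1 : ℝ) : ℂ) - χ.LFunction b‖) := hc.continuousAt.continuousWithinAt.tendsto
  rw [Complex.ofReal_one] at ht
  refine le_of_tendsto ht ?_
  filter_upwards [Ioc_mem_nhdsGT hb] with a ha
  exact LFunction_diff_le hq hχ ha.1 ha.2


lemma bad_card_le {q d : ℕ} [NeZero q] [NeZero d] (hq : 3 ≤ q) (hd : d ∣ q) {u δ : ℝ} (hδ : 0 < δ)
    (hu : 2 ≤ u) (huδ : 112 ≤ δ * u) (hlog : Real.log q = Real.exp (u ^ 8))
    (hM : ∑' n, wt (1 + (Real.log q ^ 3)⁻¹) n ≤ 4 * u ^ 8) (hcard : u ^ 8 ≤ (QS d).card)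
    (hlogd : Real.log d ≤ Real.exp u) :
    (((QS q).filter (fun χ => χ ≠ 1 ∧ ¬ Real.exp (-(2 * u ^ 5)) ≤ (χ.LFunction 1).re)).card : ℝ) ≤
      δ / 2 * (QS q).card := by
  set s : ℝ := 1 + (Real.log q ^ 3)⁻¹ with hs_def
  have hlq : 1 ≤ Real.log q := by rw [hlog]; exact Real.one_le_exp (by positivity)
  have hs : 1 < s := by
    have : 0 < (Real.log q ^ 3)⁻¹ := by positivity
    linarith
  have hB : ∀ χ ∈ QS d, χ ≠ 1 → fL s χ ≤ 2 + u := by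
    intro χ hχ hne
    have h1 := LFunction_le hne hs
    rw [exp_fL hs (mem_QS.1 hχ), Complex.norm_real, Real.norm_of_nonneg (Real.exp_pos _).le] at h1
    rw [← Real.exp_le_exp, Real.exp_add]
    have h2 : (3 : ℝ) ≤ Real.exp 2 := by
      have := Real.add_one_le_exp (2 : ℝ); linarith
    have h3 : (1 : ℝ) ≤ Real.exp u := Real.one_le_exp (by linarith)
    nlinarith
  have hsq := fL_sq_avg_bound hd hs (by linarith : (0 : ℝ) ≤ 2 + u) hB
  set M := ∑' n, wt s n with hMdef
  have hM0 : 0 ≤ M := tsum_nonneg (wt_nonneg s)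
  have hQ := QS_card_pos q
  have hQd := QS_card_pos d
  have hMd : M / (QS d).card ≤ 4 := by
    rw [div_le_iff₀ hQd]; linarith
  have hV : 2 * M * (M / (QS d).card + (2 + u)) ≤ 56 * u ^ 9 := by
    calc _ ≤ 2 * (4 * u ^ 8) * (4 + (2 + u)) := by gcongr
      _ ≤ 2 * (4 * u ^ 8) * (7 * u) := by gcongr; linarith
      _ = _ := by ring
  have hbad : ∀ χ ∈ (QS q).filter (fun χ => χ ≠ 1 ∧ ¬ Real.exp (-(2 * u ^ 5)) ≤ (χ.LFunction 1).re),
      u ^ 10 ≤ fL s χ ^ 2 := by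
    intro χ hχ
    rw [Finset.mem_filter] at hχ
    obtain ⟨h1, h2, h3⟩ := hχ
    by_contra hcon
    apply h3
    have hT : -(u ^ 5) ≤ fL s χ := by
      have : |fL s χ| ≤ u ^ 5 := by
        apply abs_le_of_sq_le_sq _ (by positivity)
        push Not at hcon
        calc _ ≤ u ^ 10 := hcon.le
          _ = _ := by ring
      exact (abs_le.1 this).1
    have hdiff := LFunction_one_diff_le hq h2 hs
    rw [exp_fL hs (mem_QS.1 h1)] at hdiff
    have hre := (Complex.abs_re_le_norm _).trans hdiff
    rw [Complex.sub_re, Complex.ofReal_re] at hre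
    have hre2 := (abs_le.1 hre).1
    have hE : Real.exp (-(u ^ 5)) ≤ Real.exp (fL s χ) := Real.exp_le_exp.2 hT
    have hsm : (s - 1) * (Real.log q * (2 + Real.log q)) ≤ 3 * Real.exp (-(u ^ 8)) := by
      rw [Real.exp_neg, ← hlog, hs_def]
      have : (1 + (Real.log q ^ 3)⁻¹ - 1) * (Real.log q * (2 + Real.log q)) ≤
          (1 + (Real.log q ^ 3)⁻¹ - 1) * (Real.log q * (3 * Real.log q)) := by
        gcongr
        linarith
      refine this.trans (le_of_eq ?_)
      field_simp
      ring
    have h8 : 2 * u ^ 5 + 2 ≤ u ^ 8 := by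
      have : (32 : ℝ) ≤ u ^ 5 := by
        calc (32 : ℝ) = 2 ^ 5 := by norm_num
          _ ≤ u ^ 5 := by gcongr
      have h3' : (8 : ℝ) ≤ u ^ 3 := by
        calc (8 : ℝ) = 2 ^ 3 := by norm_num
          _ ≤ u ^ 3 := by gcongr
      nlinarith
    have h3e : 3 * Real.exp (-(u ^ 8)) ≤ Real.exp (-(2 * u ^ 5)) := by
      calc 3 * Real.exp (-(u ^ 8)) ≤ Real.exp 2 * Real.exp (-(u ^ 8)) := by
            gcongr
            have := Real.add_one_le_exp (2 : ℝ); linarith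
        _ = Real.exp (2 - u ^ 8) := by rw [← Real.exp_add]; ring_nf
        _ ≤ _ := Real.exp_le_exp.2 (by linarith)
    have h2e : 2 * Real.exp (-(2 * u ^ 5)) ≤ Real.exp (-(u ^ 5)) := by
      have : (1 : ℝ) ≤ u ^ 5 := one_le_pow₀ (by linarith)
      calc 2 * Real.exp (-(2 * u ^ 5)) ≤ Real.exp 1 * Real.exp (-(2 * u ^ 5)) := by
            gcongr
            have := Real.add_one_le_exp (1 : ℝ); linarith
        _ = Real.exp (1 - 2 * u ^ 5) := by rw [← Real.exp_add]; ring_nf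
        _ ≤ _ := Real.exp_le_exp.2 (by linarith)
    linarith
  set bad := (QS q).filter (fun χ => χ ≠ 1 ∧ ¬ Real.exp (-(2 * u ^ 5)) ≤ (χ.LFunction 1).re)
  have h1 : (bad.card : ℝ) * u ^ 10 ≤ ∑ χ ∈ QS q, fL s χ ^ 2 := by
    calc (bad.card : ℝ) * u ^ 10 = ∑ χ ∈ bad, u ^ 10 := by simp
      _ ≤ ∑ χ ∈ bad, fL s χ ^ 2 := Finset.sum_le_sum hbad
      _ ≤ _ := Finset.sum_le_sum_of_subset_of_nonneg (Finset.filter_subset _ _)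
        (fun _ _ _ => sq_nonneg _)
  have h2 : (bad.card : ℝ) * u ^ 10 ≤ (QS q).card * (56 * u ^ 9) :=
    h1.trans (hsq.trans (by gcongr))
  have hu9 : 0 < u ^ 9 := by positivity
  have h3 : (bad.card : ℝ) * u ≤ (QS q).card * 56 := by
    have : (bad.card * u) * u ^ 9 ≤ ((QS q).card * 56) * u ^ 9 := by
      calc _ = (bad.card : ℝ) * u ^ 10 := by ring
        _ ≤ _ := h2
        _ = _ := by ring
    exact le_of_mul_le_mul_right this hu9
  have hu0 : 0 < u := by linarith
  have h4 : (QS q).card * 56 ≤ (δ / 2 * (QS q).card) * u := by nlinarith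
  exact le_of_mul_le_mul_right (h3.trans h4) hu0

/-- The condition on the modulus: a small divisor with many quadratic characters. -/
def GoodMod (q : ℕ) : Prop := ∃ (d : ℕ) (_ : NeZero d), d ∣ q ∧
  Real.log (Real.log q) ≤ (QS d).card ∧ Real.log d ≤ Real.exp (Real.log (Real.log q) ^ (1 / 8 : ℝ))

lemma zeta_eventually : ∀ᶠ x : ℝ in atTop, ∑' n, wt (1 + (x ^ 3)⁻¹) n ≤ Real.log 2 + 3 * Real.log x := by
  have h1 : Tendsto (fun x : ℝ => ((1 + (x ^ 3)⁻¹ : ℝ) : ℂ)) atTop (𝓝[≠] 1) := by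
    rw [tendsto_nhdsWithin_iff]
    constructor
    · have h2 : Tendsto (fun x : ℝ => (1 + (x ^ 3)⁻¹ : ℝ)) atTop (𝓝 (1 + 0)) :=
        (tendsto_inv_atTop_zero.comp (tendsto_pow_atTop (by norm_num))).const_add 1
      rw [add_zero] at h2
      have := (Complex.continuous_ofReal.tendsto 1).comp h2
      rw [Complex.ofReal_one] at this
      exact this
    · filter_upwards [eventually_gt_atTop 0] with x hx
      have : (x ^ 3)⁻¹ ≠ 0 := by positivity
      simp only [Set.mem_compl_iff, Set.mem_singleton_iff]
      intro h
      have h' : (1 + (x ^ 3)⁻¹ : ℝ) = 1 := by exact_mod_cast h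
      exact this (by linarith)
  have h2 := (riemannZeta_residue_one.comp h1).norm
  have h3 : ∀ᶠ x : ℝ in atTop, _ < (2 : ℝ) := h2.eventually (gt_mem_nhds (by norm_num))
  filter_upwards [h3, eventually_gt_atTop 0] with x hx h0
  have hp : 0 < (x ^ 3)⁻¹ := by positivity
  have hs : 1 < 1 + (x ^ 3)⁻¹ := by linarith
  simp only [Function.comp_apply] at hx
  rw [exp_wt hs, norm_mul, Complex.norm_real, Real.norm_of_nonneg (Real.exp_pos _).le,
    ← Complex.ofReal_one, ← Complex.ofReal_sub, Complex.norm_real, add_sub_cancel_left,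
    Real.norm_of_nonneg hp.le, inv_mul_lt_iff₀ (by positivity)] at hx
  have := Real.log_le_log (Real.exp_pos _) hx.le
  rw [Real.log_exp, Real.log_mul (by positivity) (by norm_num), Real.log_pow] at this
  push_cast at this
  linarith

lemma tendsto_u : Tendsto (fun q : ℕ => Real.log (Real.log q) ^ (1 / 8 : ℝ)) atTop atTop :=
  (tendsto_rpow_atTop (by norm_num)).comp (Real.tendsto_log_atTop.comp
    (Real.tendsto_log_atTop.comp tendsto_natCast_atTop_atTop))

theorem goodMod_main (e δ : ℝ) (he : 5 / 8 ≤ e) (hδ : 0 < δ) : ∃ q₀ : ℕ, ∀ q : ℕ, q₀ ≤ q →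
    GoodMod q → ∀ [NeZero q],
        (1 - δ) * (Nat.card {χ : DirichletCharacter ℂ q // χ ^ 2 = 1 ∧ χ ≠ 1} : ℝ) ≤
          (Nat.card {χ : DirichletCharacter ℂ q // χ ^ 2 = 1 ∧ χ ≠ 1 ∧
            Real.exp (-(2 * Real.log (Real.log q) ^ e)) ≤ (χ.LFunction 1).re} : ℝ) := by
  have hz := (Real.tendsto_log_atTop.comp (tendsto_natCast_atTop_atTop (R := ℝ))).eventually
    zeta_eventually
  have hl := (Real.tendsto_log_atTop.comp (Real.tendsto_log_atTop.comp
    (tendsto_natCast_atTop_atTop (R := ℝ)))).eventually_ge_atTop 1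
  have hl0 := (Real.tendsto_log_atTop.comp
    (tendsto_natCast_atTop_atTop (R := ℝ))).eventually_ge_atTop 1
  obtain ⟨q₀, hq₀⟩ := eventually_atTop.1 (hz.and (hl.and (hl0.and ((tendsto_u.eventually_ge_atTop 2).and
    ((tendsto_u.eventually_ge_atTop (112 / δ)).and (eventually_ge_atTop 3))))))
  refine ⟨q₀, fun q hq hgood _ => ?_⟩
  obtain ⟨hz, hl, hl0, hu, huδ, hq3⟩ := hq₀ q hq
  simp only [Function.comp_apply] at hz hl hl0
  obtain ⟨d, _, hdq, hcard, hlogd⟩ := hgood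
  set ℓ := Real.log (Real.log q) with hℓ
  set u := ℓ ^ (1 / 8 : ℝ) with hu_def
  have hu8 : u ^ 8 = ℓ := by
    rw [hu_def, ← Real.rpow_natCast, ← Real.rpow_mul (by linarith)]
    norm_num
  have hu5 : u ^ 5 = ℓ ^ (5 / 8 : ℝ) := by
    rw [hu_def, ← Real.rpow_natCast, ← Real.rpow_mul (by linarith)]
    norm_num
  have hbad := bad_card_le hq3 hdq hδ hu (by rwa [div_le_iff₀ hδ, mul_comm] at huδ)
    (by rw [hu8, hℓ, Real.exp_log (by linarith)])
    (by
      rw [hu8]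
      have : Real.log 2 ≤ 1 := by have := Real.log_two_lt_d9; linarith
      linarith) (by rwa [hu8]) hlogd
  classical
  have hexp : Real.exp (-(2 * ℓ ^ e)) ≤ Real.exp (-(2 * u ^ 5)) := by
    rw [hu5]
    apply Real.exp_le_exp.2
    have := Real.rpow_le_rpow_of_exponent_le hl he
    linarith
  have c1 : Nat.card {χ : DirichletCharacter ℂ q // χ ^ 2 = 1 ∧ χ ≠ 1} =
      ((QS q).filter (fun χ => χ ≠ 1)).card := by
    exact Nat.subtype_card _ (fun χ => by simp [mem_QS])
  have c2 : Nat.card {χ : DirichletCharacter ℂ q // χ ^ 2 = 1 ∧ χ ≠ 1 ∧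
            Real.exp (-(2 * ℓ ^ e)) ≤ (χ.LFunction 1).re} =
      ((QS q).filter (fun χ => χ ≠ 1 ∧ Real.exp (-(2 * ℓ ^ e)) ≤ (χ.LFunction 1).re)).card := by
    exact Nat.subtype_card _ (fun χ => by simp [mem_QS])
  rw [c1, c2]
  have hsplit : ((QS q).filter (fun χ => χ ≠ 1)).card ≤
      ((QS q).filter (fun χ => χ ≠ 1 ∧ Real.exp (-(2 * ℓ ^ e)) ≤ (χ.LFunction 1).re)).card +
      ((QS q).filter (fun χ => χ ≠ 1 ∧ ¬ Real.exp (-(2 * u ^ 5)) ≤ (χ.LFunction 1).re)).card := by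
    refine le_trans (Finset.card_le_card ?_) (Finset.card_union_le _ _)
    intro χ hχ
    simp only [Finset.mem_union, Finset.mem_filter] at hχ ⊢
    by_cases h : Real.exp (-(2 * u ^ 5)) ≤ (χ.LFunction 1).re
    · exact Or.inl ⟨hχ.1, hχ.2, hexp.trans h⟩
    · exact Or.inr ⟨hχ.1, hχ.2, h⟩
  have htot : ((QS q).filter (fun χ => χ ≠ 1)).card + 1 = (QS q).card := by
    rw [Finset.filter_ne', Finset.card_erase_add_one (one_mem_QS q)]
  set A := ((QS q).filter (fun χ => χ ≠ 1)).card
  set G := ((QS q).filter (fun χ => χ ≠ 1 ∧ Real.exp (-(2 * ℓ ^ e)) ≤ (χ.LFunction 1).re)).card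
  set Bd := ((QS q).filter (fun χ => χ ≠ 1 ∧ ¬ Real.exp (-(2 * u ^ 5)) ≤ (χ.LFunction 1).re)).card
  rcases Nat.eq_zero_or_pos A with hA | hA
  · rw [hA]; simp
  · have h1 : (A : ℝ) ≤ G + Bd := by exact_mod_cast hsplit
    have h2 : (A : ℝ) + 1 = (QS q).card := by exact_mod_cast htot
    have h3 : (1 : ℝ) ≤ A := by exact_mod_cast hA
    rw [← h2] at hbad
    nlinarith


lemma card_sq_congr {G H : Type*} [Group G] [Group H] (e : G ≃* H) :
    Nat.card {g : G // g ^ 2 = 1} = Nat.card {h : H // h ^ 2 = 1} := by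
  refine Nat.card_congr (e.toEquiv.subtypeEquiv fun g => ?_)
  simp [← map_pow]

lemma card_sq_prod {G H : Type*} [Group G] [Group H] :
    Nat.card {g : G × H // g ^ 2 = 1} =
      Nat.card {g : G // g ^ 2 = 1} * Nat.card {h : H // h ^ 2 = 1} := by
  rw [← Nat.card_prod]
  refine Nat.card_congr ((Equiv.subtypeEquivRight fun g => ?_).trans
    (Equiv.subtypeProdEquivProd (p := fun g : G => g ^ 2 = 1) (q := fun h : H => h ^ 2 = 1)))
  rw [Prod.ext_iff]
  simp

lemma card_QS (q : ℕ) [NeZero q] : (QS q).card = Nat.card {x : (ZMod q)ˣ // x ^ 2 = 1} := by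
  rw [← card_sq_congr (DirichletCharacter.mulEquiv_units ℂ q).some]
  exact (Nat.subtype_card _ (fun χ => by simp [mem_QS])).symm

lemma two_le_card_sq (p : ℕ) (hp : p.Prime) (h2 : 2 < p) :
    2 ≤ Nat.card {x : (ZMod p)ˣ // x ^ 2 = 1} := by
  have : Fact p.Prime := ⟨hp⟩
  have : Fact (2 < p) := ⟨h2⟩
  have hne : (⟨1, by simp⟩ : {x : (ZMod p)ˣ // x ^ 2 = 1}) ≠ ⟨-1, by simp⟩ := by
    intro h
    have h3 : (1 : (ZMod p)ˣ) = -1 := congrArg Subtype.val h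
    have h4 := congrArg Units.val h3
    simp only [Units.val_one, Units.val_neg] at h4
    exact ZMod.neg_one_ne_one h4.symm
  have : 1 < Nat.card {x : (ZMod p)ˣ // x ^ 2 = 1} := by
    rw [Finite.one_lt_card_iff_nontrivial]
    exact ⟨_, _, hne⟩
  exact this

lemma card_QS_prod (S : Finset ℕ) (hS : ∀ p ∈ S, p.Prime ∧ 2 < p) [NeZero (∏ p ∈ S, p)] :
    2 ^ S.card ≤ (QS (∏ p ∈ S, p)).card := by
  rw [card_QS]
  have key : 2 ^ S.card ≤ Nat.card {x : (ZMod (∏ p ∈ S, p))ˣ // x ^ 2 = 1} := by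
    induction S using Finset.induction_on with
    | empty =>
      change 1 ≤ Nat.card {x : (ZMod 1)ˣ // x ^ 2 = 1}
      have : Nonempty {x : (ZMod 1)ˣ // x ^ 2 = 1} := ⟨⟨1, by simp⟩⟩
      exact Nat.card_pos
    | insert p S hp ih =>
      have ih' := ih (fun r hr => hS r (Finset.mem_insert_of_mem hr))
      have hpp := hS p (Finset.mem_insert_self _ _)
      have hco : Nat.Coprime p (∏ r ∈ S, r) := by
        refine Nat.Coprime.prod_right fun r hr => ?_
        rw [Nat.coprime_primes hpp.1 (hS r (Finset.mem_insert_of_mem hr)).1]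
        rintro rfl
        exact hp hr
      rw [Finset.prod_insert hp, Finset.card_insert_of_notMem hp,
        card_sq_congr ((Units.mapEquiv (ZMod.chineseRemainder hco).toMulEquiv).trans
          MulEquiv.prodUnits), card_sq_prod, pow_succ, mul_comm]
      exact Nat.mul_le_mul (two_le_card_sq p hpp.1 hpp.2) ih'
  exact key


lemma mertens_lower (N : ℕ) (hN : 3 ≤ N) :
    Real.log (Real.log N) / 2 ≤ ∑ p ∈ N.primesBelow, (p : ℝ)⁻¹ := by
  let f : ℕ →* ℝ :=
    { toFun := fun n => (n : ℝ)⁻¹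
      map_one' := by simp
      map_mul' := fun a b => by push_cast; rw [mul_inv] }
  have hf : ∀ {p : ℕ}, p.Prime → ‖f p‖ < 1 := by
    intro p hp
    change ‖(p : ℝ)⁻¹‖ < 1
    rw [Real.norm_of_nonneg (by positivity)]
    exact inv_lt_one_of_one_lt₀ (by exact_mod_cast hp.one_lt)
  obtain ⟨h1, h2⟩ := EulerProduct.summable_and_hasSum_smoothNumbers_prod_primesBelow_geometric hf N
  have hlogN : 1 < Real.log N := by
    rw [Real.lt_log_iff_exp_lt (by positivity)]
    have := Real.exp_one_lt_d9
    have h3 : (3 : ℝ) ≤ N := by exact_mod_cast hN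
    linarith
  have h3 : Real.log N ≤ ∏ p ∈ N.primesBelow, (1 - f p)⁻¹ := by
    have hh := log_add_one_le_harmonic (N - 1)
    rw [show N - 1 + 1 = N by omega] at hh
    refine hh.trans ?_
    have e : ((harmonic (N - 1) : ℚ) : ℝ) = ∑ i ∈ Finset.range (N - 1), ((↑(i + 1) : ℝ))⁻¹ := by
      rw [harmonic]; push_cast; rfl
    rw [e, ← h2.tsum_eq]
    have hmem : ∀ i ∈ Finset.range (N - 1), i + 1 ∈ N.smoothNumbers := by
      intro i hi
      rw [Finset.mem_range] at hi
      exact Nat.mem_smoothNumbers_of_lt (by omega) (by omega)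
    have hs : Summable (fun m : N.smoothNumbers => f m) := h2.summable
    let g : Finset.range (N - 1) → N.smoothNumbers := fun i => ⟨i.1 + 1, hmem i.1 i.2⟩
    have hg : Function.Injective g := by
      intro a b hab
      have : a.1 + 1 = b.1 + 1 := congrArg Subtype.val hab
      exact Subtype.ext (by omega)
    calc ∑ i ∈ Finset.range (N - 1), ((↑(i + 1) : ℝ))⁻¹
        = ∑ i : Finset.range (N - 1), f (g i) := by
          rw [← Finset.sum_coe_sort]; rfl
      _ = ∑ m ∈ Finset.univ.map ⟨g, hg⟩, f m := by rw [Finset.sum_map]; rfl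
      _ ≤ _ := hs.sum_le_tsum _ (fun m _ => by change (0 : ℝ) ≤ (m : ℝ)⁻¹; positivity)
  have hpos : ∀ p ∈ N.primesBelow, 0 < (1 - f p)⁻¹ := by
    intro p hp
    have := (abs_lt.1 (Real.norm_eq_abs _ ▸ hf (Nat.prime_of_mem_primesBelow hp))).2
    exact inv_pos.2 (by linarith)
  have h4 := Real.log_le_log (by linarith) h3
  rw [Real.log_prod (fun p hp => (hpos p hp).ne')] at h4
  have h5 : ∑ p ∈ N.primesBelow, Real.log (1 - f p)⁻¹ ≤ ∑ p ∈ N.primesBelow, 2 * (p : ℝ)⁻¹ := by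
    refine Finset.sum_le_sum fun p hp => ?_
    have hp' := Nat.prime_of_mem_primesBelow hp
    have h2p : (2 : ℝ) ≤ p := by exact_mod_cast hp'.two_le
    refine (Real.log_le_sub_one_of_pos (hpos p hp)).trans ?_
    change (1 - (p : ℝ)⁻¹)⁻¹ - 1 ≤ 2 * (p : ℝ)⁻¹
    have : (1 - (p : ℝ)⁻¹)⁻¹ - 1 = 1 / (p - 1) := by
      have h1 : (p : ℝ) - 1 ≠ 0 := by linarith
      field_simp
      ring
    rw [this, ← div_eq_mul_inv, div_le_div_iff₀ (by linarith) (by linarith)]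
    linarith
  rw [← Finset.mul_sum] at h5
  linarith

lemma card_dvd_Icc (Y m : ℕ) : ((Finset.Icc 1 Y).filter (fun n => m ∣ n)).card = Y / m := by
  exact Nat.Ioc_filter_dvd_card_eq_div Y m

lemma turan (P : Finset ℕ) (hP : ∀ p ∈ P, p.Prime) (Y : ℕ) (hPY : P.card ≤ Y)
    (hμ : 0 < ∑ p ∈ P, (p : ℝ)⁻¹) :
    (((Finset.Icc 1 Y).filter (fun n =>
      ((P.filter (fun p => p ∣ n)).card : ℝ) < (∑ p ∈ P, (p : ℝ)⁻¹) / 2)).card : ℝ) ≤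
      12 * Y / (∑ p ∈ P, (p : ℝ)⁻¹) := by
  set μ := ∑ p ∈ P, (p : ℝ)⁻¹ with hμdef
  set W : ℕ → ℝ := fun n => ((P.filter (fun p => p ∣ n)).card : ℝ) with hW
  have hWs : ∀ n, W n = ∑ p ∈ P, (if p ∣ n then (1 : ℝ) else 0) := by
    intro n
    simp [hW]
  have hind : ∀ m : ℕ, ∑ n ∈ Finset.Icc 1 Y, (if m ∣ n then (1 : ℝ) else 0) = ((Y / m : ℕ) : ℝ) := by
    intro m
    rw [← card_dvd_Icc Y m]
    simp
  have hS1 : Y * μ - P.card ≤ ∑ n ∈ Finset.Icc 1 Y, W n := by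
    simp_rw [hWs]
    rw [Finset.sum_comm]
    simp_rw [hind]
    rw [hμdef, Finset.mul_sum, Finset.card_eq_sum_ones, Nat.cast_sum, ← Finset.sum_sub_distrib]
    refine Finset.sum_le_sum fun p hp => ?_
    have hp0 : 0 < p := (hP p hp).pos
    have := Nat.lt_div_mul_add hp0 (a := Y)
    have h' : (Y : ℝ) < (Y / p : ℕ) * p + p := by exact_mod_cast this
    have hp0' : (0 : ℝ) < p := by exact_mod_cast hp0
    rw [← div_eq_mul_inv, sub_le_iff_le_add, div_le_iff₀ hp0']
    push_cast
    linarith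
  have hS2 : ∑ n ∈ Finset.Icc 1 Y, W n ^ 2 ≤ Y * μ ^ 2 + Y * μ := by
    have e : ∀ n, W n ^ 2 = ∑ p ∈ P, ∑ r ∈ P, (if p ∣ n ∧ r ∣ n then (1 : ℝ) else 0) := by
      intro n
      rw [hWs, sq, Finset.sum_mul_sum]
      refine Finset.sum_congr rfl fun p _ => Finset.sum_congr rfl fun r _ => ?_
      by_cases h1 : p ∣ n <;> by_cases h2 : r ∣ n <;> simp [h1, h2]
    simp_rw [e]
    rw [Finset.sum_comm]
    have e2 : (Y : ℝ) * μ ^ 2 + Y * μ = ∑ p ∈ P, (∑ r ∈ P, Y * ((p : ℝ)⁻¹ * (r : ℝ)⁻¹) +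
        Y * (p : ℝ)⁻¹) := by
      rw [Finset.sum_add_distrib, ← Finset.mul_sum, sq, hμdef, Finset.sum_mul_sum, Finset.mul_sum]
      simp_rw [Finset.mul_sum]
    rw [e2]
    refine Finset.sum_le_sum fun p hp => ?_
    rw [Finset.sum_comm, ← Finset.sum_erase_add _ _ hp]
    refine add_le_add ?_ ?_
    · calc _ ≤ ∑ r ∈ P.erase p, Y * ((p : ℝ)⁻¹ * (r : ℝ)⁻¹) := by
            refine Finset.sum_le_sum fun r hr => ?_
            rw [Finset.mem_erase] at hr
            have hco : Nat.Coprime p r := (Nat.coprime_primes (hP p hp) (hP r hr.2)).2 hr.1.symm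
            calc _ = ∑ n ∈ Finset.Icc 1 Y, (if p * r ∣ n then (1 : ℝ) else 0) := by
                  refine Finset.sum_congr rfl fun n _ => ?_
                  have hiff : (p ∣ n ∧ r ∣ n) ↔ p * r ∣ n :=
                    ⟨fun h => hco.mul_dvd_of_dvd_of_dvd h.1 h.2,
                      fun h => ⟨(dvd_mul_right p r).trans h, (dvd_mul_left r p).trans h⟩⟩
                  simp only [hiff]
              _ ≤ _ := by
                  rw [hind]
                  refine Nat.cast_div_le.trans (le_of_eq ?_)
                  push_cast
                  rw [div_eq_mul_inv, mul_inv]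
        _ ≤ _ := Finset.sum_le_sum_of_subset_of_nonneg (Finset.erase_subset _ _)
            (fun _ _ _ => by positivity)
    · simp only [and_self]
      rw [hind, ← div_eq_mul_inv]
      exact Nat.cast_div_le
  have hvar : ∑ n ∈ Finset.Icc 1 Y, (W n - μ) ^ 2 ≤ 3 * Y * μ := by
    have e : ∑ n ∈ Finset.Icc 1 Y, (W n - μ) ^ 2 = ∑ n ∈ Finset.Icc 1 Y, W n ^ 2 -
        2 * μ * ∑ n ∈ Finset.Icc 1 Y, W n + Y * μ ^ 2 := by
      simp_rw [sub_sq]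
      rw [Finset.sum_add_distrib, Finset.sum_sub_distrib, Finset.mul_sum]
      simp only [Finset.sum_const, Nat.card_Icc, nsmul_eq_mul, Nat.add_sub_cancel]
      congr 2
      exact Finset.sum_congr rfl fun n _ => by ring
    have hP' : (P.card : ℝ) ≤ Y := by exact_mod_cast hPY
    rw [e]
    nlinarith
  set B := (Finset.Icc 1 Y).filter (fun n => W n < μ / 2) with hB
  have h1 : (B.card : ℝ) * (μ ^ 2 / 4) ≤ 3 * Y * μ := by
    calc (B.card : ℝ) * (μ ^ 2 / 4) = ∑ n ∈ B, μ ^ 2 / 4 := by simp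
      _ ≤ ∑ n ∈ B, (W n - μ) ^ 2 := by
          refine Finset.sum_le_sum fun n hn => ?_
          have := (Finset.mem_filter.1 hn).2
          nlinarith
      _ ≤ ∑ n ∈ Finset.Icc 1 Y, (W n - μ) ^ 2 :=
          Finset.sum_le_sum_of_subset_of_nonneg (Finset.filter_subset _ _)
            (fun _ _ _ => sq_nonneg _)
      _ ≤ _ := hvar
  rw [le_div_iff₀ hμ]
  have : (B.card * μ) * μ ≤ (12 * Y) * μ := by nlinarith
  exact le_of_mul_le_mul_right this hμ


lemma card_dvd_lin (K m : ℕ) (hm : Odd m) :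
    ((Finset.Icc 1 K).filter (fun k => m ∣ 4 * k + 1)).card ≤ K / m + 1 := by
  have hco : Nat.Coprime m 4 := by
    have : Nat.Coprime m (2 ^ 2) := Nat.Coprime.pow_right 2 (Nat.coprime_two_right.2 hm)
    simpa using this
  rw [← Finset.card_range (K / m + 1)]
  refine Finset.card_le_card_of_injOn (fun k => k / m) ?_ ?_
  · intro k hk
    have hk' := Finset.mem_filter.1 (Finset.mem_coe.1 hk)
    have := (Finset.mem_Icc.1 hk'.1).2
    simp only [Finset.coe_range, Set.mem_Iio]
    exact Nat.lt_succ_of_le (Nat.div_le_div_right this)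
  · intro a ha b hb hab
    have ha' := (Finset.mem_filter.1 (Finset.mem_coe.1 ha)).2
    have hb' := (Finset.mem_filter.1 (Finset.mem_coe.1 hb)).2
    have h1 : 4 * a + 1 ≡ 4 * b + 1 [MOD m] :=
      ((Nat.modEq_zero_iff_dvd).2 ha').trans ((Nat.modEq_zero_iff_dvd).2 hb').symm
    have h2 : 4 * a ≡ 4 * b [MOD m] := Nat.ModEq.add_right_cancel' 1 h1
    have h3 : a ≡ b [MOD m] := Nat.ModEq.cancel_left_of_coprime hco h2
    have h4 : a / m = b / m := hab
    rw [← Nat.div_add_mod a m, ← Nat.div_add_mod b m, h4, h3]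

lemma sum_odd_sq (J : ℕ) : ∑ j ∈ Finset.Icc 1 J, (1 : ℝ) / (2 * j + 1) ^ 2 ≤
    1 / 4 * (1 - 1 / ((J : ℝ) + 1)) := by
  induction J with
  | zero => simp
  | succ J ih =>
    rw [Finset.sum_Icc_succ_top (by omega)]
    have : (1 : ℝ) / (2 * ((J + 1 : ℕ) : ℝ) + 1) ^ 2 ≤
        1 / 4 * (1 / (J + 1) - 1 / (((J + 1 : ℕ) : ℝ) + 1)) := by
      push_cast
      have hJ : (0 : ℝ) ≤ J := by positivity
      have e : (1 : ℝ) / 4 * (1 / (J + 1) - 1 / ((J : ℝ) + 1 + 1)) =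
          1 / (4 * ((J + 1) * (J + 1 + 1))) := by
        field_simp
        ring
      rw [e]
      apply one_div_le_one_div_of_le (by positivity)
      nlinarith
    linarith

lemma good_count (K : ℕ) (hK : 4 ≤ K) :
    (K : ℝ) / 4 ≤ ((Finset.Icc 1 K).filter (fun k => Squarefree (4 * k + 1))).card := by
  have h0 := Finset.card_filter_add_card_filter_not (s := Finset.Icc 1 K)
    (fun k => Squarefree (4 * k + 1))
  have hbad : (((Finset.Icc 1 K).filter (fun k => ¬ Squarefree (4 * k + 1))).card : ℝ) ≤
      K / 4 + Nat.sqrt K := by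
    have hsub : (Finset.Icc 1 K).filter (fun k => ¬ Squarefree (4 * k + 1)) ⊆
        (Finset.Icc 1 (Nat.sqrt K)).biUnion (fun j =>
          (Finset.Icc 1 K).filter (fun k => (2 * j + 1) ^ 2 ∣ 4 * k + 1)) := by
      intro k hk
      obtain ⟨hk1, hk2⟩ := Finset.mem_filter.1 hk
      rw [Nat.squarefree_iff_prime_squarefree] at hk2
      push Not at hk2
      obtain ⟨p, hp, hpd⟩ := hk2
      have hodd : Odd p := by
        rcases hp.eq_two_or_odd' with h | h
        · subst h
          omega
        · exact h
      obtain ⟨j, rfl⟩ := hodd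
      have hle := Nat.le_of_dvd (by omega) hpd
      have hkK := (Finset.mem_Icc.1 hk1).2
      rw [Finset.mem_biUnion]
      refine ⟨j, Finset.mem_Icc.2 ⟨?_, ?_⟩, Finset.mem_filter.2 ⟨hk1, ?_⟩⟩
      · have := hp.two_le
        omega
      · rw [Nat.le_sqrt]
        nlinarith
      · rw [sq]; exact hpd
    have h1 := (Finset.card_le_card hsub).trans Finset.card_biUnion_le
    have h2 : ((∑ j ∈ Finset.Icc 1 (Nat.sqrt K),
        ((Finset.Icc 1 K).filter (fun k => (2 * j + 1) ^ 2 ∣ 4 * k + 1)).card : ℕ) : ℝ) ≤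
        ∑ j ∈ Finset.Icc 1 (Nat.sqrt K), ((K : ℝ) * (1 / (2 * j + 1) ^ 2) + 1) := by
      push_cast
      refine Finset.sum_le_sum fun j _ => ?_
      have h3 := card_dvd_lin K ((2 * j + 1) ^ 2) ((odd_two_mul_add_one j).pow)
      have h4 : (((Finset.Icc 1 K).filter (fun k => (2 * j + 1) ^ 2 ∣ 4 * k + 1)).card : ℝ) ≤
        ((K / (2 * j + 1) ^ 2 : ℕ) : ℝ) + 1 := by exact_mod_cast h3
      have h5 : ((K / (2 * j + 1) ^ 2 : ℕ) : ℝ) ≤ K / ((2 * j + 1) ^ 2 : ℕ) := Nat.cast_div_le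
      push_cast at h5
      rw [mul_one_div]
      linarith
    rw [Finset.sum_add_distrib, ← Finset.mul_sum] at h2
    have h6 := sum_odd_sq (Nat.sqrt K)
    have h7 : ∑ j ∈ Finset.Icc 1 (Nat.sqrt K), (1 : ℝ) / (2 * j + 1) ^ 2 ≤ 1 / 4 := by
      have : (0 : ℝ) ≤ 1 / ((Nat.sqrt K : ℝ) + 1) := by positivity
      linarith
    have h8 := mul_le_mul_of_nonneg_left h7 (Nat.cast_nonneg (α := ℝ) K)
    simp only [Finset.sum_const, Nat.card_Icc, nsmul_eq_mul, mul_one, Nat.add_sub_cancel] at h2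
    have h9 := (Nat.cast_le (α := ℝ)).2 h1
    linarith
  have hs : 2 * (Nat.sqrt K : ℝ) ≤ K := by
    have h1 : 2 ≤ Nat.sqrt K := Nat.le_sqrt.2 (by omega)
    have h2 := Nat.sqrt_le K
    have : 2 * Nat.sqrt K ≤ K := by nlinarith
    exact_mod_cast this
  have h0' := congrArg (Nat.cast (R := ℝ)) h0
  push_cast at h0'
  simp only [Nat.card_Icc, Nat.add_sub_cancel] at h0'
  linarith

open Classical in
/-- The fundamental discriminants up to `X` with property `P`, as a finset. -/
def FDset (P : ℤ → Prop) (X : ℝ) : Finset ℤ :=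
  (Finset.Icc (-⌊X⌋) ⌊X⌋).filter (fun D => IsFundDiscr D ∧ P D)

lemma mem_FDset {P : ℤ → Prop} {X : ℝ} {D : ℤ} :
    D ∈ FDset P X ↔ D ∈ Finset.Icc (-⌊X⌋) ⌊X⌋ ∧ IsFundDiscr D ∧ P D := by
  classical
  simp only [FDset, Finset.mem_filter]

lemma fdCount_eq (P : ℤ → Prop) (X : ℝ) : fdCount P X = (FDset P X).card := by
  unfold fdCount
  refine Nat.subtype_card _ fun D => ?_
  rw [mem_FDset, Finset.mem_Icc, ← abs_le, Int.le_floor]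
  push_cast
  tauto

lemma fdCount_lower (X : ℝ) (hX : 21 ≤ X) : X / 32 ≤ (fdCount (fun _ => True) X : ℝ) := by
  classical
  set K := ⌊(X - 1) / 4⌋₊ with hKdef
  have hK1 : (X - 1) / 4 < K + 1 := Nat.lt_floor_add_one _
  have hK2 : (K : ℝ) ≤ (X - 1) / 4 := Nat.floor_le (by linarith)
  have hK4 : 4 ≤ K := Nat.le_floor (by push_cast; linarith)
  have h := good_count K hK4
  rw [fdCount_eq]
  have hle : ((Finset.Icc 1 K).filter (fun k => Squarefree (4 * k + 1))).card ≤
      (FDset (fun _ => True) X).card := by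
    refine Finset.card_le_card_of_injOn (fun k : ℕ => (4 * (k : ℤ) + 1)) ?_ ?_
    · intro k hk
      obtain ⟨h1, h2⟩ := Finset.mem_filter.1 (Finset.mem_coe.1 hk)
      obtain ⟨h3, h4⟩ := Finset.mem_Icc.1 h1
      have h5 : (k : ℝ) ≤ K := by exact_mod_cast h4
      rw [Finset.mem_coe, mem_FDset, Finset.mem_Icc, ← abs_le, Int.le_floor]
      refine ⟨?_, ⟨?_, Or.inl ⟨?_, ?_⟩⟩, trivial⟩
      · rw [abs_of_nonneg (by positivity)]
        push_cast
        linarith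
      · dsimp only; omega
      · have := Int.squarefree_natCast.2 h2
        simpa using this
      · dsimp only; omega
    · intro a _ b _ hab
      dsimp only at hab
      omega
  have hle' := (Nat.cast_le (α := ℝ)).2 hle
  linarith

/-- Reduction of the density statement to a count of exceptional moduli. -/
lemma density_of (P : ℤ → Prop) (Q : ℕ → Prop) (hPQ : ∀ D : ℤ, Q D.natAbs → P D)
    (hQ : ∀ η : ℝ, 0 < η → ∀ᶠ X : ℝ in atTop, ∃ B : Finset ℕ,
      (∀ n ∈ Finset.Icc 1 ⌊X⌋₊, ¬ Q n → n ∈ B) ∧ (B.card : ℝ) ≤ η * X) : FdDensityOne P := by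
  classical
  unfold FdDensityOne
  rw [Metric.tendsto_nhds]
  intro η hη
  filter_upwards [hQ (η / 128) (by positivity), eventually_ge_atTop (21 : ℝ)] with X hB hX
  obtain ⟨B, hB1, hB2⟩ := hB
  have hlow := fdCount_lower X hX
  set T : ℝ := (fdCount (fun _ => True) X : ℝ) with hT
  have hTpos : 0 < T := by linarith
  have hcard : fdCount (fun _ => True) X ≤ fdCount P X + 2 * B.card := by
    rw [fdCount_eq, fdCount_eq]
    have hsub : FDset (fun _ => True) X ⊆
        FDset P X ∪
        (B.image (fun n : ℕ => (n : ℤ)) ∪ B.image (fun n : ℕ => -(n : ℤ))) := by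
      intro D hD
      rw [mem_FDset] at hD
      obtain ⟨hD1, hD2, -⟩ := hD
      by_cases hp : P D
      · exact Finset.mem_union_left _ (mem_FDset.2 ⟨hD1, hD2, hp⟩)
      · refine Finset.mem_union_right _ ?_
        have hq : ¬ Q D.natAbs := fun h => hp (hPQ D h)
        have hD0 : D ≠ 0 := by
          rintro rfl
          rcases hD2.2 with ⟨-, h⟩ | ⟨m, h1, h2, h3⟩
          · simp at h
          · omega
        have hmem : D.natAbs ∈ B := by
          refine hB1 _ (Finset.mem_Icc.2 ⟨by omega, ?_⟩) hq
          have h1 := Finset.mem_Icc.1 hD1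
          rw [← Int.floor_toNat]
          omega
        rw [Finset.mem_union, Finset.mem_image, Finset.mem_image]
        rcases Int.natAbs_eq D with h | h
        · exact Or.inl ⟨_, hmem, h.symm⟩
        · exact Or.inr ⟨_, hmem, h.symm⟩
    refine (Finset.card_le_card hsub).trans ((Finset.card_union_le _ _).trans ?_)
    have h1 := Finset.card_union_le (B.image (fun n : ℕ => (n : ℤ))) (B.image (fun n : ℕ => -(n : ℤ)))
    have h2 := Finset.card_image_le (s := B) (f := fun n : ℕ => (n : ℤ))
    have h3 := Finset.card_image_le (s := B) (f := fun n : ℕ => -(n : ℤ))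
    omega
  have hle : fdCount P X ≤ fdCount (fun _ => True) X := by
    rw [fdCount_eq, fdCount_eq]
    refine Finset.card_le_card fun D hD => ?_
    rw [mem_FDset] at hD ⊢
    exact ⟨hD.1, hD.2.1, trivial⟩
  have hcard' : T ≤ fdCount P X + 2 * B.card := by rw [hT]; exact_mod_cast hcard
  have hle' : (fdCount P X : ℝ) ≤ T := by rw [hT]; exact_mod_cast hle
  rw [Real.dist_eq, abs_lt]
  have e : (fdCount P X : ℝ) / T ≤ 1 := div_le_one_of_le₀ hle' hTpos.le
  have e2 : 1 - η < (fdCount P X : ℝ) / T := by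
    rw [lt_div_iff₀ hTpos]
    nlinarith
  constructor <;> linarith


lemma goodMod_of : ∀ᶠ v : ℝ in atTop, ∀ n : ℕ, v ^ 16 - 1 ≤ Real.log (Real.log n) →
    Real.log (Real.log n) ≤ v ^ 16 → ∀ T : Finset ℕ,
    (∀ p ∈ T, p.Prime ∧ 2 < p ∧ p ∣ n ∧ (p : ℝ) ≤ Real.exp (Real.exp v)) →
    v / 8 ≤ T.card → GoodMod n := by
  have hb : 0 < Real.log 2 / 8 := by have := Real.log_pos one_lt_two; positivity
  have h1 := (isLittleO_pow_exp_pos_mul_atTop 16 hb).bound (show (0 : ℝ) < 1 / 2 by norm_num)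
  filter_upwards [h1, eventually_ge_atTop (3 : ℝ)] with v hv1 hv n hn1 hn2 T hT hTc
  have hv0 : 0 < v := by linarith
  rw [Real.norm_of_nonneg (by positivity), Real.norm_of_nonneg (by positivity)] at hv1
  set K := ⌊v / 8⌋₊ with hK
  have hKv : (K : ℝ) ≤ v / 8 := Nat.floor_le (by positivity)
  have hKv' : v / 8 < K + 1 := Nat.lt_floor_add_one _
  have hKT : K ≤ T.card := by
    have : (K : ℝ) ≤ T.card := hKv.trans hTc
    exact_mod_cast this
  obtain ⟨S, hST, hSc⟩ := Finset.exists_subset_card_eq hKT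
  have hne : ∏ p ∈ S, p ≠ 0 := Finset.prod_ne_zero_iff.2 fun p hp => (hT p (hST hp)).1.ne_zero
  haveI : NeZero (∏ p ∈ S, p) := ⟨hne⟩
  refine ⟨∏ p ∈ S, p, ⟨hne⟩, ?_, ?_, ?_⟩
  · exact Finset.prod_primes_dvd n (fun p hp => (hT p (hST hp)).1.prime)
      (fun p hp => (hT p (hST hp)).2.2.1)
  · have h2 := card_QS_prod S (fun p hp => ⟨(hT p (hST hp)).1, (hT p (hST hp)).2.1⟩)
    have h3 : ((2 : ℝ) ^ S.card) ≤ (QS (∏ p ∈ S, p)).card := by exact_mod_cast h2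
    refine hn2.trans (le_trans ?_ h3)
    rw [hSc]
    have h4 : Real.exp (Real.log 2 / 8 * v) ≤ 2 ^ (K + 1) := by
      have : ((2 : ℝ) ^ (K + 1)) = Real.exp (Real.log 2 * (K + 1)) := by
        rw [← Real.rpow_natCast, Real.rpow_def_of_pos (by norm_num)]
        push_cast
        rfl
      rw [this, Real.exp_le_exp]
      have := Real.log_pos one_lt_two
      nlinarith
    rw [pow_succ] at h4
    linarith
  · have h2 : Real.log ((∏ p ∈ S, p : ℕ) : ℝ) ≤ K * Real.exp v := by
      rw [Nat.cast_prod, Real.log_prod (fun p hp => by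
        have := (hT p (hST hp)).1.ne_zero
        exact_mod_cast this), ← hSc, ← nsmul_eq_mul]
      refine Finset.sum_le_card_nsmul _ _ _ fun p hp => ?_
      have hp' := hT p (hST hp)
      have hp0 : (0 : ℝ) < p := by exact_mod_cast hp'.1.pos
      rw [Real.log_le_iff_le_exp hp0]
      exact hp'.2.2.2
    have h3 : (K : ℝ) * Real.exp v ≤ Real.exp (2 * v) := by
      rw [two_mul, Real.exp_add]
      refine mul_le_mul_of_nonneg_right ?_ (Real.exp_pos _).le
      have := Real.add_one_le_exp v
      linarith
    refine h2.trans (h3.trans ?_)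
    rw [Real.exp_le_exp]
    have h4 : (2 * v) = ((2 * v) ^ 8) ^ (1 / 8 : ℝ) := by
      rw [← Real.rpow_natCast, ← Real.rpow_mul (by positivity)]
      norm_num
    rw [h4]
    refine Real.rpow_le_rpow (by positivity) (le_trans ?_ hn1) (by norm_num)
    have h5 : (3 : ℝ) ^ 8 ≤ v ^ 8 := pow_le_pow_left₀ (by norm_num) hv 8
    nlinarith

lemma goodMod_count (η : ℝ) (hη : 0 < η) : ∀ᶠ X : ℝ in atTop, ∃ B : Finset ℕ,
      (∀ n ∈ Finset.Icc 1 ⌊X⌋₊, ¬ GoodMod n → n ∈ B) ∧ (B.card : ℝ) ≤ η * X := by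
  classical
  have hloglog : Tendsto (fun X : ℝ => Real.log (Real.log X)) atTop atTop :=
    Real.tendsto_log_atTop.comp Real.tendsto_log_atTop
  have hv : Tendsto (fun X : ℝ => Real.log (Real.log X) ^ (1 / 16 : ℝ)) atTop atTop :=
    (tendsto_rpow_atTop (by norm_num)).comp hloglog
  filter_upwards [hv.eventually goodMod_of, hv.eventually (eventually_ge_atTop (3 : ℝ)),
    hv.eventually (eventually_ge_atTop (96 / η)), hloglog.eventually (eventually_ge_atTop (1 : ℝ)),
    eventually_ge_atTop (4 / η ^ 2), eventually_ge_atTop (1 : ℝ)]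
    with X hX1 hX3 hX4 hX5 hX6 hX7
  have hv16 : (Real.log (Real.log X) ^ (1 / 16 : ℝ)) ^ 16 = Real.log (Real.log X) := by
    rw [← Real.rpow_natCast, ← Real.rpow_mul (by linarith)]
    norm_num
  set v := Real.log (Real.log X) ^ (1 / 16 : ℝ) with hvdef
  have hlogX : 1 < Real.log X := by
    by_contra hcon
    have : Real.log (Real.log X) ≤ 0 :=
      Real.log_nonpos (Real.log_nonneg hX7) (not_lt.1 hcon)
    linarith
  set N := ⌈Real.exp (Real.exp v)⌉₊ with hN
  have hyN : Real.exp (Real.exp v) ≤ N := Nat.le_ceil _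
  have hlogyN : Real.exp v ≤ Real.log N := by
    rw [Real.le_log_iff_exp_le (lt_of_lt_of_le (Real.exp_pos _) hyN)]
    exact hyN
  have hev : v + 1 ≤ Real.exp v := Real.add_one_le_exp v
  have heev : Real.exp v + 1 ≤ Real.exp (Real.exp v) := Real.add_one_le_exp _
  have hN3 : 3 ≤ N := by
    have : (3 : ℝ) ≤ N := by linarith
    exact_mod_cast this
  have hm := mertens_lower N hN3
  have hvN : v ≤ Real.log (Real.log N) := by
    rw [Real.le_log_iff_exp_le (by linarith)]
    exact hlogyN
  set P := N.primesBelow.erase 2 with hPdef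
  have hPp : ∀ p ∈ P, p.Prime ∧ 2 < p ∧ (p : ℝ) ≤ Real.exp (Real.exp v) := by
    intro p hp
    rw [hPdef, Finset.mem_erase] at hp
    have hpp := Nat.prime_of_mem_primesBelow hp.2
    have hlt := Nat.lt_of_mem_primesBelow hp.2
    exact ⟨hpp, lt_of_le_of_ne hpp.two_le (Ne.symm hp.1), (Nat.lt_ceil.1 hlt).le⟩
  have hμ : v / 4 ≤ ∑ p ∈ P, (p : ℝ)⁻¹ := by
    have : ∑ p ∈ N.primesBelow, (p : ℝ)⁻¹ = (∑ p ∈ P, (p : ℝ)⁻¹) + ((2 : ℕ) : ℝ)⁻¹ := by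
      rw [hPdef, Finset.sum_erase_add]
      rw [Nat.mem_primesBelow]
      exact ⟨by omega, Nat.prime_two⟩
    rw [this] at hm
    push_cast at hm
    norm_num at hm
    linarith
  have hμpos : 0 < ∑ p ∈ P, (p : ℝ)⁻¹ := by linarith
  have hXee : X = Real.exp (Real.exp (v ^ 16)) := by
    rw [hv16, Real.exp_log (by linarith), Real.exp_log (by linarith)]
  have hPY : P.card ≤ ⌊X⌋₊ := by
    have h1 : P.card ≤ N - 1 := by
      have h2 : P ⊆ Finset.Ico 1 N := by
        intro p hp
        have h3 := (hPp p hp).1.pos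
        rw [hPdef, Finset.mem_erase] at hp
        exact Finset.mem_Ico.2 ⟨h3, Nat.lt_of_mem_primesBelow hp.2⟩
      simpa using Finset.card_le_card h2
    refine h1.trans (Nat.le_floor ?_)
    have h4 : ((N - 1 : ℕ) : ℝ) ≤ Real.exp (Real.exp v) := by
      have : N - 1 < N := by omega
      exact (Nat.lt_ceil.1 this).le
    refine h4.trans ?_
    rw [hXee, Real.exp_le_exp, Real.exp_le_exp]
    exact le_self_pow₀ (by linarith) (by norm_num)
  have ht := turan P (fun p hp => (hPp p hp).1) ⌊X⌋₊ hPY hμpos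
  refine ⟨Finset.Icc 1 ⌊√X⌋₊ ∪ (Finset.Icc 1 ⌊X⌋₊).filter (fun n =>
      ((P.filter (fun p => p ∣ n)).card : ℝ) < (∑ p ∈ P, (p : ℝ)⁻¹) / 2), ?_, ?_⟩
  · intro n hn hng
    by_contra hcon
    rw [Finset.mem_union, not_or] at hcon
    obtain ⟨hc1, hc2⟩ := hcon
    have hn' := Finset.mem_Icc.1 hn
    have hsq : √X < n := by
      rw [Finset.mem_Icc, not_and] at hc1
      exact (Nat.floor_lt (Real.sqrt_nonneg X)).1 (not_le.1 (hc1 hn'.1))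
    have hnX : (n : ℝ) ≤ X := (Nat.le_floor_iff (by linarith)).1 hn'.2
    have hn0 : (0 : ℝ) < n := by exact_mod_cast hn'.1
    have hlogn : Real.log X / 2 ≤ Real.log n := by
      rw [← Real.log_sqrt (by linarith)]
      exact Real.log_le_log (Real.sqrt_pos.2 (by linarith)) hsq.le
    refine hng (hX1 n ?_ ?_ (P.filter (fun p => p ∣ n)) ?_ ?_)
    · have h1 := Real.log_le_log (by linarith) hlogn
      rw [Real.log_div (by linarith) (by norm_num)] at h1
      have := Real.log_two_lt_d9
      rw [hv16]
      linarith
    · rw [hv16]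
      exact Real.log_le_log (by linarith) (Real.log_le_log hn0 hnX)
    · intro p hp
      obtain ⟨hp1, hp2⟩ := Finset.mem_filter.1 hp
      obtain ⟨h1, h2, h3⟩ := hPp p hp1
      exact ⟨h1, h2, hp2, h3⟩
    · rw [Finset.mem_filter, not_and] at hc2
      have := not_lt.1 (hc2 hn)
      linarith
  · have h1 := Finset.card_union_le (Finset.Icc 1 ⌊√X⌋₊) ((Finset.Icc 1 ⌊X⌋₊).filter (fun n =>
      ((P.filter (fun p => p ∣ n)).card : ℝ) < (∑ p ∈ P, (p : ℝ)⁻¹) / 2))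
    have h1' := (Nat.cast_le (α := ℝ)).2 h1
    rw [Nat.cast_add, Nat.card_Icc, Nat.add_sub_cancel] at h1'
    have h2 : (⌊√X⌋₊ : ℝ) ≤ √X := Nat.floor_le (Real.sqrt_nonneg X)
    have h3 : √X ≤ η / 2 * X := by
      have h4 : 2 / η ≤ √X := by
        apply Real.le_sqrt_of_sq_le
        rw [div_pow]
        norm_num
        exact hX6
      rw [div_le_iff₀ hη] at h4
      have h5 := Real.mul_self_sqrt (show 0 ≤ X by linarith)
      have h6 := Real.sqrt_nonneg X
      nlinarith
    have h4 : 12 * (⌊X⌋₊ : ℝ) / ∑ p ∈ P, (p : ℝ)⁻¹ ≤ η / 2 * X := by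
      rw [div_le_iff₀ hμpos]
      have h5 : (⌊X⌋₊ : ℝ) ≤ X := Nat.floor_le (by linarith)
      have h6 : 24 / η ≤ ∑ p ∈ P, (p : ℝ)⁻¹ := by
        refine le_trans ?_ hμ
        rw [le_div_iff₀ (by norm_num)]
        refine le_trans (le_of_eq ?_) hX4
        ring
      rw [div_le_iff₀ hη] at h6
      nlinarith
    linarith


theorem main_density (e δ : ℝ) (he : 5 / 8 ≤ e) (hδ : 0 < δ) :
    FdDensityOne (fun D =>
      ∀ [NeZero D.natAbs],
        (1 - δ) * (Nat.card {χ : DirichletCharacter ℂ D.natAbs // χ ^ 2 = 1 ∧ χ ≠ 1} : ℝ) ≤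
          (Nat.card {χ : DirichletCharacter ℂ D.natAbs // χ ^ 2 = 1 ∧ χ ≠ 1 ∧
            Real.exp (-(2 * Real.log (Real.log |(D : ℝ)|) ^ e)) ≤
              (χ.LFunction 1).re} : ℝ)) := by
  classical
  obtain ⟨q₀, hq₀⟩ := goodMod_main e δ he hδ
  refine density_of _ (fun n => q₀ ≤ n ∧ GoodMod n) ?_ ?_
  · intro D hD _
    have h : |(D : ℝ)| = (D.natAbs : ℝ) := by rw [Nat.cast_natAbs, Int.cast_abs]
    rw [h]
    exact hq₀ D.natAbs hD.1 hD.2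
  · intro η hη
    filter_upwards [goodMod_count (η / 2) (by positivity),
      eventually_ge_atTop (2 * q₀ / η : ℝ)] with X hX1 hX2
    obtain ⟨B, hB1, hB2⟩ := hX1
    refine ⟨Finset.range q₀ ∪ B, ?_, ?_⟩
    · intro n hn hq
      rw [Finset.mem_union, Finset.mem_range]
      by_cases h : n < q₀
      · exact Or.inl h
      · exact Or.inr (hB1 n hn fun hg => hq ⟨not_lt.1 h, hg⟩)
    · have h1 := (Nat.cast_le (α := ℝ)).2 (Finset.card_union_le (Finset.range q₀) B)
      rw [Nat.cast_add, Finset.card_range] at h1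
      rw [div_le_iff₀ hη] at hX2
      linarith


/-- For all `ε, δ > 0` there is `c > 0` such that for 100% of fundamental discriminants `D`, at
least a proportion `1 - δ` of quadratic Dirichlet characters `χ` mod `|D|` satisfy
`L(1,χ) ≥ exp(-c (log log |D|)^{1 - (log 2)/2 + ε})`. -/
theorem statement_4 (ε δ : ℝ) (hε : 0 < ε) (hδ : 0 < δ) :
    ∃ c : ℝ, 0 < c ∧ FdDensityOne (fun D =>
      ∀ [NeZero D.natAbs],
        (1 - δ) * (Nat.card {χ : DirichletCharacter ℂ D.natAbs // χ ^ 2 = 1 ∧ χ ≠ 1} : ℝ) ≤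
          (Nat.card {χ : DirichletCharacter ℂ D.natAbs // χ ^ 2 = 1 ∧ χ ≠ 1 ∧
            Real.exp (-(c * Real.log (Real.log |(D : ℝ)|) ^ (1 - Real.log 2 / 2 + ε))) ≤
              (χ.LFunction 1).re} : ℝ)) := by
  have h2 := Real.log_two_lt_d9
  exact ⟨2, two_pos, main_density _ δ (by linarith) hδ⟩
end
end

section
/- There exist absolute constants c > 0 and C > 0 with the following property. Let D be a fundamental discriminant with |D| ≥ 16 and let Y be a real number with 3 ≤ Y < |D|. Let V be the set of quadratic Dirichlet characters χ modulo |D| such that L(s,χ) has no real zero β with β > 1 − c/log |D|. Then ∑_{χ ∈ V} (log L(1,χ))² ≤ C · #V · [ (log log |D|)·(log(ω_Y(D) + 2) + log log Y) + (log log |D|)²/2^{ω_Y(D)} ]. -/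
open Filter Topology NumberField

noncomputable section

/-- `ω_Y(D)`: the number of primes `p ≤ Y` dividing `D`. -/
def omegaY (Y : ℝ) (D : ℤ) : ℕ :=
  Nat.card {p : ℕ // p.Prime ∧ (p : ℝ) ≤ Y ∧ (p : ℤ) ∣ D}

namespace QM

def gk (y : ℝ) : ℝ := 1 / y - 1 / (Real.exp y - 1)

lemma exp_sub_one_pos {y : ℝ} (hy : 0 < y) : 0 < Real.exp y - 1 := by
  have := Real.add_one_lt_exp hy.ne'
  linarith

lemma gk_nonneg {y : ℝ} (hy : 0 < y) : 0 ≤ gk y := by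
  have h := Real.add_one_le_exp y
  have : 1 / (Real.exp y - 1) ≤ 1 / y := one_div_le_one_div_of_le hy (by linarith)
  unfold gk; linarith

lemma gk_le_one {y : ℝ} (hy : 0 < y) : gk y ≤ 1 := by
  have h1 := exp_sub_one_pos hy
  have h := Real.add_one_le_exp (-y)
  have h2 : Real.exp (-y) * Real.exp y = 1 := by rw [← Real.exp_add]; simp
  have h3 : (-y + 1) * Real.exp y ≤ 1 := by
    have := mul_le_mul_of_nonneg_right h (Real.exp_pos y).le
    linarith
  have : 1 / y ≤ 1 + 1 / (Real.exp y - 1) := by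
    rw [div_le_iff₀ hy]
    have : (1 + 1 / (Real.exp y - 1)) * y = y * Real.exp y / (Real.exp y - 1) := by
      field_simp; ring
    rw [this, le_div_iff₀ h1]; linarith
  unfold gk; linarith

lemma gk_anti : AntitoneOn gk (Set.Ioi 0) := by
  have hd : ∀ x ∈ Set.Ioi (0 : ℝ), HasDerivAt gk
      (-1 / x ^ 2 - (-Real.exp x / (Real.exp x - 1) ^ 2)) x := by
    intro x hx
    have h1 := exp_sub_one_pos hx
    have e1 : HasDerivAt (fun y : ℝ => 1 / y) (-1 / x ^ 2) x := by
      simpa [neg_div] using hasDerivAt_inv (ne_of_gt hx)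
    have e2 : HasDerivAt (fun y : ℝ => 1 / (Real.exp y - 1))
        (-Real.exp x / (Real.exp x - 1) ^ 2) x := by
      have := ((Real.hasDerivAt_exp x).sub_const 1).inv h1.ne'
      refine this.congr_of_eventuallyEq (Eventually.of_forall fun y => ?_)
      simp
    exact e1.sub e2
  apply antitoneOn_of_deriv_nonpos (convex_Ioi 0)
  · exact fun x hx => (hd x hx).continuousAt.continuousWithinAt
  · intro x hx
    rw [interior_Ioi] at hx
    exact (hd x hx).differentiableAt.differentiableWithinAt
  · intro x hx
    rw [interior_Ioi] at hx
    rw [(hd x hx).deriv]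
    have hx0 : 0 < x := hx
    have h1 := exp_sub_one_pos hx0
    have hs : x / 2 ≤ Real.sinh (x / 2) := Real.self_le_sinh_iff.2 (by positivity)
    have hE : Real.exp x = Real.exp (x / 2) ^ 2 := by rw [← Real.exp_nat_mul]; congr 1; push_cast; ring
    have hp := Real.exp_pos (x / 2)
    have hinv : Real.exp (-(x / 2)) * Real.exp (x / 2) = 1 := by rw [← Real.exp_add]; simp
    have key : x * Real.exp (x / 2) ≤ Real.exp x - 1 := by
      rw [Real.sinh_eq] at hs
      have : x ≤ Real.exp (x / 2) - Real.exp (-(x / 2)) := by linarith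
      have := mul_le_mul_of_nonneg_right this hp.le
      rw [sub_mul, hinv] at this
      rw [hE]; nlinarith
    have key2 : x ^ 2 * Real.exp x ≤ (Real.exp x - 1) ^ 2 := by
      have := pow_le_pow_left₀ (by positivity) key 2
      rw [mul_pow, ← hE] at this; exact this
    have : Real.exp x / (Real.exp x - 1) ^ 2 ≤ 1 / x ^ 2 := by
      rw [div_le_div_iff₀ (by positivity) (by positivity)]; linarith
    have e : -1 / x ^ 2 - (-Real.exp x / (Real.exp x - 1) ^ 2) =
      Real.exp x / (Real.exp x - 1) ^ 2 - 1 / x ^ 2 := by ring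
    rw [e]; linarith

lemma abel {a g : ℕ → ℝ} {B : ℝ} (ha : ∀ N, |∑ i ∈ Finset.range N, a i| ≤ B)
    (hg : Antitone g) (hg0 : ∀ i, 0 ≤ g i) (N : ℕ) :
    |∑ i ∈ Finset.range N, a i * g i| ≤ B * g 0 := by
  have hid : ∀ N, ∑ i ∈ Finset.range N, a i * g i = (∑ i ∈ Finset.range N, a i) * g N +
      ∑ i ∈ Finset.range N, (∑ j ∈ Finset.range (i + 1), a j) * (g i - g (i + 1)) := by
    intro N
    induction N with
    | zero => simp
    | succ n ih => 
      rw [Finset.sum_range_succ, ih, Finset.sum_range_succ (fun i => (∑ j ∈ Finset.range (i + 1), a j) * (g i - g (i + 1))), Finset.sum_range_succ a]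
      ring
  rw [hid]
  have h1 : |(∑ i ∈ Finset.range N, a i) * g N| ≤ B * g N := by
    rw [abs_mul, abs_of_nonneg (hg0 N)]
    exact mul_le_mul_of_nonneg_right (ha N) (hg0 N)
  have h2 : |∑ i ∈ Finset.range N, (∑ j ∈ Finset.range (i + 1), a j) * (g i - g (i + 1))| ≤
      ∑ i ∈ Finset.range N, B * (g i - g (i + 1)) := by
    refine (Finset.abs_sum_le_sum_abs _ _).trans (Finset.sum_le_sum fun i _ => ?_)
    have : 0 ≤ g i - g (i + 1) := sub_nonneg.2 (hg (Nat.le_succ i))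
    rw [abs_mul, abs_of_nonneg this]
    exact mul_le_mul_of_nonneg_right (ha _) this
  rw [← Finset.mul_sum, Finset.sum_range_sub'] at h2
  refine (abs_add_le _ _).trans ?_
  linarith

/-- divisor sum -/
def rr (a : ℕ → ℝ) (n : ℕ) : ℝ := ∑ d ∈ n.divisors, a d

lemma lambert {a : ℕ → ℝ} (ha : ∀ n, |a n| ≤ 1) {u : ℝ} (hu : 0 < u) :
    ∃ S : ℝ, HasSum (fun n : ℕ => rr a n * Real.exp (-n * u)) S ∧
      HasSum (fun i : ℕ => a (i + 1) * (1 / (Real.exp ((i + 1 : ℕ) * u) - 1))) S := by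
  set z := Real.exp (-u) with hz
  have hz0 : 0 < z := Real.exp_pos _
  have hz1 : z < 1 := by rw [hz]; exact Real.exp_lt_one_iff.2 (by linarith)
  have hzn : ‖z‖ < 1 := by rwa [Real.norm_of_nonneg hz0.le]
  have hpow : ∀ n : ℕ, z ^ n = Real.exp (-n * u) := fun n => by
    rw [hz, ← Real.exp_nat_mul]; congr 1; ring
  let f : ℕ+ × ℕ+ → ℝ := fun c => a c.1 * z ^ (c.1 * c.2 : ℕ)
  have hf : Summable f := by
    refine Summable.of_norm_bounded (summable_prod_mul_pow (𝕜 := ℝ) 0 hzn) fun c => ?_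
    simp only [f, norm_mul, pow_zero, one_mul, Real.norm_eq_abs, abs_of_pos (pow_pos hz0 _)]
    exact mul_le_of_le_one_left (pow_pos hz0 _).le (ha _)
  refine ⟨∑' c, f c, ?_, ?_⟩
  · have h1 := sigmaAntidiagonalEquivProd.hasSum_iff.2 hf.hasSum
    have h2 := h1.sigma (g := fun n : ℕ+ => rr a n * z ^ (n : ℕ)) (fun n => by
      convert! hasSum_fintype _ using 1
      have e0 : ∀ b : (n : ℕ).divisorsAntidiagonal, (f ∘ sigmaAntidiagonalEquivProd) ⟨n, b⟩ =
        a b.1.1 * z ^ (b.1.1 * b.1.2) := fun b => rfl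
      simp only [e0]
      rw [Finset.univ_eq_attach, Finset.sum_attach (n : ℕ).divisorsAntidiagonal (fun x => a x.1 * z ^ (x.1 * x.2)),
        Nat.sum_divisorsAntidiagonal (fun x y => a x * z ^ (x * y)), rr, Finset.sum_mul]
      refine Finset.sum_congr rfl fun i hi => ?_
      rw [Nat.mul_div_cancel' (Nat.dvd_of_mem_divisors hi)])
    have h3 : HasSum (fun n : ℕ => rr a n * z ^ n) (∑' c, f c) := by
      have := (Function.Injective.hasSum_iff PNat.coe_injective (f := fun n : ℕ => rr a n * z ^ n) (a := ∑' c, f c) ?_).1 h2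
      · exact this
      · intro n hn
        have : n = 0 := by
          by_contra h
          exact hn ⟨⟨n, Nat.pos_of_ne_zero h⟩, rfl⟩
        simp [this, rr]
    simpa only [hpow] using h3
  · have h2 := hf.hasSum.prod_fiberwise (g := fun d : ℕ+ => a d * (1 / (Real.exp ((d : ℕ) * u) - 1))) (fun d => by
      simp only [f]
      apply HasSum.mul_left
      have hlt : z ^ (d : ℕ) < 1 := pow_lt_one₀ hz0.le hz1 d.ne_zero
      have h4 := (hasSum_geometric_of_lt_one (pow_nonneg hz0.le d) hlt).mul_left (z ^ (d : ℕ))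
      rw [← Equiv.pnatEquivNat.symm.hasSum_iff]
      convert! h4 using 1
      · ext m; simp [Function.comp, Nat.succPNat, ← pow_mul]; ring
      · rw [hpow, ← div_eq_mul_inv, neg_mul, Real.exp_neg]
        have := exp_sub_one_pos (show 0 < (d : ℕ) * u by have := d.pos; positivity)
        have h5 := Real.exp_pos ((d : ℕ) * u)
        field_simp)
    rw [← Equiv.pnatEquivNat.symm.hasSum_iff] at h2
    convert! h2 using 1

lemma key_const {a : ℕ → ℝ} {B : ℝ} (ha : ∀ n, |a n| ≤ 1)
    (hB : ∀ N, |∑ i ∈ Finset.range N, a (i + 1)| ≤ B) :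
    ∃ lam : ℝ, ∀ u : ℝ, 0 < u → |∑' n : ℕ, rr a n * Real.exp (-n * u) - lam / u| ≤ B := by
  have hc : CauchySeq fun n => ∑ i ∈ Finset.range n, (1 / ((i : ℝ) + 1)) • a (i + 1) := by
    refine Antitone.cauchySeq_series_mul_of_tendsto_zero_of_bounded ?_ 
      tendsto_one_div_add_atTop_nhds_zero_nat (b := B) (fun n => hB n)
    intro i j hij
    have : (i : ℝ) ≤ j := by exact_mod_cast hij
    exact one_div_le_one_div_of_le (by positivity) (by linarith)
  obtain ⟨lam, hl⟩ := cauchySeq_tendsto_of_complete hc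
  refine ⟨lam, fun u hu => ?_⟩
  obtain ⟨S, h1, h2⟩ := lambert ha hu
  rw [h1.tsum_eq]
  have h3 := (h2.tendsto_sum_nat.sub (hl.div_const u)).abs
  refine le_of_tendsto h3 (Eventually.of_forall fun N => ?_)
  have e : ∑ i ∈ Finset.range N, a (i + 1) * (1 / (Real.exp ((i + 1 : ℕ) * u) - 1)) -
      (∑ i ∈ Finset.range N, (1 / ((i : ℝ) + 1)) • a (i + 1)) / u =
      - ∑ i ∈ Finset.range N, a (i + 1) * gk ((i + 1 : ℕ) * u) := by
    rw [Finset.sum_div, ← Finset.sum_sub_distrib, ← Finset.sum_neg_distrib]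
    refine Finset.sum_congr rfl fun i _ => ?_
    simp only [gk, smul_eq_mul]
    push_cast
    have : (i : ℝ) + 1 ≠ 0 := by positivity
    field_simp
    ring
  rw [e, abs_neg]
  have hB0 : 0 ≤ B := (abs_nonneg _).trans (hB 0)
  have hpos : ∀ i : ℕ, 0 < ((i + 1 : ℕ) : ℝ) * u := fun i => by positivity
  refine (abel (a := fun i => a (i + 1)) (g := fun i => gk ((i + 1 : ℕ) * u)) hB ?_ ?_ N).trans ?_
  · intro i j hij
    apply gk_anti (hpos i) (hpos j)
    have : ((i + 1 : ℕ) : ℝ) ≤ (j + 1 : ℕ) := by exact_mod_cast Nat.succ_le_succ hij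
    exact mul_le_mul_of_nonneg_right this hu.le
  · exact fun i => gk_nonneg (hpos i)
  · exact mul_le_of_le_one_right hB0 (gk_le_one (hpos 0))

end QM

namespace QM
open MeasureTheory Set

def Phi (r : ℕ → ℝ) (u : ℝ) : ℝ := ∑' n : ℕ, r n * Real.exp (-n * u)

structure Dat (r : ℕ → ℝ) (lam B : ℝ) : Prop where
  nonneg : ∀ n, 0 ≤ r n
  zero : r 0 = 0
  one : r 1 = 1
  sumexp : ∀ u : ℝ, 0 < u → Summable fun n : ℕ => r n * Real.exp (-n * u)
  sumpow : ∀ σ : ℝ, 1 < σ → Summable fun n : ℕ => r n / (n : ℝ) ^ σ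
  bd : ∀ u : ℝ, 0 < u → |Phi r u - lam / u| ≤ B

variable {r : ℕ → ℝ} {lam B : ℝ}

lemma Dat.term_nonneg (h : Dat r lam B) (u : ℝ) (n : ℕ) : 0 ≤ r n * Real.exp (-n * u) :=
  mul_nonneg (h.nonneg n) (Real.exp_pos _).le

lemma Dat.Phi_nonneg (h : Dat r lam B) (u : ℝ) : 0 ≤ Phi r u := tsum_nonneg (h.term_nonneg u)

lemma Dat.anti (h : Dat r lam B) : AntitoneOn (Phi r) (Ioi 0) := by
  intro u hu v hv huv
  refine (h.sumexp v hv).tsum_le_tsum (fun n => ?_) (h.sumexp u hu)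
  refine mul_le_mul_of_nonneg_left (Real.exp_le_exp.2 ?_) (h.nonneg n)
  have : (n : ℝ) * u ≤ n * v := mul_le_mul_of_nonneg_left huv (Nat.cast_nonneg n)
  linarith

lemma Dat.decay (h : Dat r lam B) {u : ℝ} (hu : 1 ≤ u) :
    Phi r u ≤ Phi r 1 * Real.exp (-(u - 1)) := by
  unfold Phi
  rw [← tsum_mul_right]
  refine (h.sumexp u (by linarith)).tsum_le_tsum (fun n => ?_) ((h.sumexp 1 one_pos).mul_right _)
  rcases Nat.eq_zero_or_pos n with rfl | hn
  · simp [h.zero]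
  rw [mul_assoc, ← Real.exp_add]
  refine mul_le_mul_of_nonneg_left (Real.exp_le_exp.2 ?_) (h.nonneg n)
  have : (1 : ℝ) ≤ n := by exact_mod_cast hn
  nlinarith

lemma Dat.Phi_one (h : Dat r lam B) : 1 / 3 ≤ Phi r 1 := by
  have h1 := (h.sumexp 1 one_pos).le_tsum 1 (fun n _ => h.term_nonneg 1 n)
  have h2 : r 1 * Real.exp (-(1 : ℕ) * 1) ≤ Phi r 1 := h1
  rw [h.one] at h2
  have h3 : Real.exp (-(1:ℕ) * 1) = (Real.exp 1)⁻¹ := by rw [← Real.exp_neg]; simp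
  rw [h3] at h2
  have h4 : (1/3 : ℝ) ≤ (Real.exp 1)⁻¹ := by
    rw [one_div]
    exact inv_anti₀ (Real.exp_pos _) (by have := Real.exp_one_lt_d9; linarith)
  linarith

/-- the truncated function -/
def ff (r : ℕ → ℝ) (lam u0 : ℝ) (u : ℝ) : ℝ := Phi r u - if u ≤ u0 then lam / u else 0

def hh (lam u0 : ℝ) (u : ℝ) : ℝ := if u ≤ u0 then lam / u else 0

lemma Dat.locint (h : Dat r lam B) : LocallyIntegrableOn (fun u => (Phi r u : ℂ)) (Ioi 0) := by
  rw [locallyIntegrableOn_iff isOpen_Ioi.isLocallyClosed]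
  intro k hk hc
  exact ((h.anti.mono hk).integrableOn_isCompact hc).ofReal

lemma locint_hh (lam u0 : ℝ) : LocallyIntegrableOn (fun u => (hh lam u0 u : ℂ)) (Ioi 0) := by
  rw [locallyIntegrableOn_iff isOpen_Ioi.isLocallyClosed]
  intro k hk hc
  have h1 : IntegrableOn (fun u : ℝ => lam / u) k := by
    apply ContinuousOn.integrableOn_compact hc
    exact continuousOn_const.div continuousOn_id (fun x hx => ne_of_gt (hk hx))
  have h2 := (h1.indicator (measurableSet_Iic (a := u0))).ofReal (𝕜 := ℂ)
  refine h2.congr (Eventually.of_forall fun u => ?_)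
  simp [hh, indicator]

lemma Dat.top (h : Dat r lam B) : (fun u => (Phi r u : ℂ)) =O[atTop] fun t => Real.exp (-1 * t) := by
  refine Asymptotics.IsBigO.of_bound (Phi r 1 * Real.exp 1) ?_
  filter_upwards [eventually_ge_atTop 1] with u hu
  rw [Complex.norm_real, Real.norm_of_nonneg (h.Phi_nonneg u), Real.norm_of_nonneg (Real.exp_pos _).le,
    mul_assoc, ← Real.exp_add]
  refine (h.decay hu).trans_eq ?_
  congr 2; ring

lemma Dat.bot (h : Dat r lam B) : (fun u => (Phi r u : ℂ)) =O[𝓝[>] 0] fun t : ℝ => t ^ (-1 : ℝ) := by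
  refine Asymptotics.IsBigO.of_bound (B + |lam|) ?_
  filter_upwards [Ioc_mem_nhdsGT (zero_lt_one' ℝ)] with u hu
  have hu0 : 0 < u := hu.1
  rw [Complex.norm_real, Real.norm_eq_abs, Real.rpow_neg_one, Real.norm_of_nonneg (by positivity)]
  have h1 := h.bd u hu0
  have hB : 0 ≤ B := (abs_nonneg _).trans h1
  have h2 : |Phi r u| ≤ |Phi r u - lam / u| + |lam / u| := by
    have := abs_add_le (Phi r u - lam / u) (lam / u); simpa using this
  have h3 : |lam / u| = |lam| * u⁻¹ := by rw [abs_div, abs_of_pos hu0, div_eq_mul_inv]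
  have h4 : 1 ≤ u⁻¹ := (one_le_inv₀ hu0).2 hu.2
  nlinarith

lemma Dat.convPhi (h : Dat r lam B) {s : ℂ} (hs : 1 < s.re) :
    MellinConvergent (fun u => (Phi r u : ℂ)) s :=
  mellinConvergent_of_isBigO_rpow_exp one_pos h.locint h.top h.bot hs

lemma Dat.locint_ff (h : Dat r lam B) (u0 : ℝ) :
    LocallyIntegrableOn (fun u => (ff r lam u0 u : ℂ)) (Ioi 0) := by
  have := h.locint.sub (locint_hh lam u0)
  convert! this using 2
  simp [ff, hh]

lemma Dat.top_ff (h : Dat r lam B) (u0 : ℝ) :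
    (fun u => (ff r lam u0 u : ℂ)) =O[atTop] fun t => Real.exp (-1 * t) := by
  refine h.top.congr' ?_ EventuallyEq.rfl
  filter_upwards [eventually_gt_atTop u0] with u hu
  simp [ff, not_le.2 hu]

lemma Dat.bot_ff (h : Dat r lam B) {u0 : ℝ} (hu0 : 0 < u0) :
    (fun u => (ff r lam u0 u : ℂ)) =O[𝓝[>] 0] fun t : ℝ => t ^ (-0 : ℝ) := by
  refine Asymptotics.IsBigO.of_bound B ?_
  filter_upwards [Ioc_mem_nhdsGT hu0] with u hu
  simp only [neg_zero, Real.rpow_zero, norm_one, mul_one, ff, hu.2, if_true]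
  rw [Complex.norm_real]
  exact h.bd u hu.1

lemma Dat.conv_ff (h : Dat r lam B) {u0 : ℝ} (hu0 : 0 < u0) {s : ℂ} (hs : 0 < s.re) :
    MellinConvergent (fun u => (ff r lam u0 u : ℂ)) s :=
  mellinConvergent_of_isBigO_rpow_exp one_pos (h.locint_ff u0) (h.top_ff u0) (h.bot_ff hu0) hs

lemma Dat.diff_ff (h : Dat r lam B) {u0 : ℝ} (hu0 : 0 < u0) {s : ℂ} (hs : 0 < s.re) :
    DifferentiableAt ℂ (mellin (fun u => (ff r lam u0 u : ℂ))) s :=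
  mellin_differentiableAt_of_isBigO_rpow_exp one_pos (h.locint_ff u0) (h.top_ff u0) (h.bot_ff hu0) hs

lemma mellin_hh (lam : ℝ) {u0 : ℝ} (hu0 : 0 < u0) {s : ℂ} (hs : 1 < s.re) :
    mellin (fun u => (hh lam u0 u : ℂ)) s = lam * (u0 : ℂ) ^ (s - 1) / (s - 1) := by
  unfold mellin
  have e : ∀ t ∈ Ioi (0 : ℝ), (t : ℂ) ^ (s - 1) • (hh lam u0 t : ℂ) =
      (Iic u0).indicator (fun t : ℝ => (lam : ℂ) * (t : ℂ) ^ (s - 2)) t := by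
    intro t ht
    have ht0 : (t : ℂ) ≠ 0 := by exact_mod_cast (ne_of_gt ht)
    by_cases h : t ≤ u0
    · simp only [hh, h, if_true, indicator, mem_Iic, smul_eq_mul]
      have : (t : ℂ) ^ (s - 1) = (t : ℂ) ^ (s - 2) * t := by
        rw [show s - 1 = (s - 2) + 1 by ring, Complex.cpow_add _ _ ht0, Complex.cpow_one]
      rw [this]; push_cast; field_simp
    · simp [hh, h, indicator]
  rw [setIntegral_congr_fun measurableSet_Ioi e, setIntegral_indicator measurableSet_Iic,
    Ioi_inter_Iic, ← intervalIntegral.integral_of_le hu0.le, intervalIntegral.integral_const_mul,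
    integral_cpow (Or.inl (by simp; linarith))]
  have hne : s - 1 ≠ 0 := by
    intro h
    have : s = 1 := by linear_combination h
    rw [this] at hs; simp at hs
  rw [show s - 2 + 1 = s - 1 by ring, Complex.ofReal_zero, Complex.zero_cpow hne]
  ring

lemma Dat.mellin_Phi (h : Dat r lam B) {s : ℂ} (hs : 1 < s.re) :
    mellin (fun u => (Phi r u : ℂ)) s = Complex.Gamma s * LSeries (fun n => (r n : ℂ)) s := by
  have h1 := hasSum_mellin (a := fun n : ℕ => (r n : ℂ)) (p := fun n : ℕ => (n : ℝ))
    (F := fun u => (Phi r u : ℂ)) (s := s) ?_ (by linarith) ?_ ?_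
  · rw [← h1.tsum_eq, LSeries, ← tsum_mul_left]
    refine tsum_congr fun n => ?_
    rcases Nat.eq_zero_or_pos n with rfl | hn
    · simp [h.zero]
    · rw [LSeries.term_of_ne_zero hn.ne']; simp [mul_div_assoc]
  · intro n
    rcases Nat.eq_zero_or_pos n with rfl | hn
    · left; simp [h.zero]
    · right; exact_mod_cast hn
  · intro t ht
    have := Complex.hasSum_ofReal.2 (h.sumexp t ht).hasSum
    simpa [Phi] using this
  · refine (h.sumpow s.re hs).congr fun n => ?_
    rw [Complex.norm_real, Real.norm_of_nonneg (h.nonneg n)]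

lemma Dat.mellin_ff (h : Dat r lam B) {u0 : ℝ} (hu0 : 0 < u0) {s : ℂ} (hs : 1 < s.re) :
    mellin (fun u => (ff r lam u0 u : ℂ)) s + lam * (u0 : ℂ) ^ (s - 1) / (s - 1) =
      Complex.Gamma s * LSeries (fun n => (r n : ℂ)) s := by
  have h1 := hasMellin_sub (h.convPhi hs) (h.conv_ff hu0 (s := s) (by linarith))
  have e : (fun t => (Phi r t : ℂ) - (ff r lam u0 t : ℂ)) = fun t => (hh lam u0 t : ℂ) := by
    ext t; simp [ff, hh]
  rw [e] at h1
  rw [← h.mellin_Phi hs, ← mellin_hh lam hu0 hs, h1.2]; ring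

def II (r : ℕ → ℝ) (u0 s : ℝ) : ℝ := ∫ u in Ioi u0, u ^ (s - 1) * Phi r u
def JJ (r : ℕ → ℝ) (lam u0 s : ℝ) : ℝ := ∫ u in Ioc 0 u0, u ^ (s - 1) * (Phi r u - lam / u)

lemma Dat.int_real (h : Dat r lam B) {u0 : ℝ} (hu0 : 0 < u0) {s : ℝ} (hs : 0 < s) :
    IntegrableOn (fun u : ℝ => u ^ (s - 1) * ff r lam u0 u) (Ioi 0) ∧
    mellin (fun u => (ff r lam u0 u : ℂ)) s = ((∫ u in Ioi 0, u ^ (s - 1) * ff r lam u0 u : ℝ) : ℂ) := by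
  have h1 := h.conv_ff hu0 (s := (s : ℂ)) (by simpa using hs)
  have e : ∀ t ∈ Ioi (0:ℝ), (t : ℂ) ^ ((s : ℂ) - 1) • (ff r lam u0 t : ℂ) =
      ((t ^ (s - 1) * ff r lam u0 t : ℝ) : ℂ) := by
    intro t ht
    rw [smul_eq_mul, Complex.ofReal_mul, Complex.ofReal_cpow (le_of_lt ht)]; simp
  constructor
  · have h2 := (integrableOn_congr_fun e measurableSet_Ioi).1 h1
    have := h2.re
    simpa using! this
  · unfold mellin
    rw [setIntegral_congr_fun measurableSet_Ioi e]
    exact integral_ofReal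

lemma Dat.int_I (h : Dat r lam B) {u0 : ℝ} (hu0 : 0 < u0) {s : ℝ} (hs : 0 < s) :
    IntegrableOn (fun u : ℝ => u ^ (s - 1) * Phi r u) (Ioi u0) := by
  have h1 := (h.int_real hu0 hs).1.mono_set (Ioi_subset_Ioi hu0.le)
  refine (integrableOn_congr_fun (fun u hu => ?_) measurableSet_Ioi).1 h1
  have : ¬ u ≤ u0 := not_le.2 hu
  simp [ff, this]

lemma Dat.mellin_real (h : Dat r lam B) {u0 : ℝ} (hu0 : 0 < u0) {s : ℝ} (hs : 0 < s) :
    mellin (fun u => (ff r lam u0 u : ℂ)) s = ((II r u0 s + JJ r lam u0 s : ℝ) : ℂ) := by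
  rw [(h.int_real hu0 hs).2]
  congr 1
  have hIntg := (h.int_real hu0 hs).1
  rw [← Ioc_union_Ioi_eq_Ioi hu0.le, setIntegral_union (Set.Ioc_disjoint_Ioi le_rfl) measurableSet_Ioi
    (hIntg.mono_set Ioc_subset_Ioi_self) (hIntg.mono_set (Ioi_subset_Ioi hu0.le)), add_comm]
  congr 1
  · refine setIntegral_congr_fun measurableSet_Ioi fun u hu => ?_
    have : ¬ u ≤ u0 := not_le.2 hu
    simp [ff, this]
  · refine setIntegral_congr_fun measurableSet_Ioc fun u hu => ?_
    simp [ff, hu.2]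

lemma Dat.J_le (h : Dat r lam B) {u0 : ℝ} (hu0 : 0 < u0) {s : ℝ} (hs : 0 < s) :
    |JJ r lam u0 s| ≤ B * (u0 ^ s / s) := by
  have hI : IntegrableOn (fun u : ℝ => u ^ (s - 1)) (Ioc 0 u0) := by
    have := intervalIntegral.intervalIntegrable_rpow' (a := 0) (b := u0) (r := s - 1) (by linarith)
    rwa [intervalIntegrable_iff_integrableOn_Ioc_of_le hu0.le] at this
  have h1 : ‖JJ r lam u0 s‖ ≤ ∫ u in Ioc 0 u0, B * u ^ (s - 1) := by
    refine norm_integral_le_of_norm_le (hI.const_mul B) ?_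
    refine (ae_restrict_iff' measurableSet_Ioc).2 (Eventually.of_forall fun u hu => ?_)
    have hp : 0 ≤ u ^ (s - 1) := Real.rpow_nonneg hu.1.le _
    rw [norm_mul, Real.norm_of_nonneg hp, mul_comm]
    exact mul_le_mul_of_nonneg_right (h.bd u hu.1) hp
  rw [Real.norm_eq_abs] at h1
  refine h1.trans_eq ?_
  rw [integral_const_mul, ← intervalIntegral.integral_of_le hu0.le,
    integral_rpow (Or.inl (by linarith))]
  simp [Real.zero_rpow hs.ne']

lemma Dat.I_mono (h : Dat r lam B) {u0 : ℝ} (hu0 : 0 < u0) {s s' : ℝ} (hs : 0 < s) (hss : s ≤ s') :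
    II r u0 s ≤ u0 ^ (-(s' - s)) * II r u0 s' := by
  unfold II
  rw [← integral_const_mul]
  refine setIntegral_mono_on (h.int_I hu0 hs) ((h.int_I hu0 (by linarith)).const_mul _)
    measurableSet_Ioi fun u hu => ?_
  have hu1 : 0 < u := hu0.trans hu
  rw [← mul_assoc]
  refine mul_le_mul_of_nonneg_right ?_ (h.Phi_nonneg u)
  have : u ^ (s - 1) = u ^ (-(s' - s)) * u ^ (s' - 1) := by
    rw [← Real.rpow_add hu1]; congr 1; ring
  rw [this]
  refine mul_le_mul_of_nonneg_right ?_ (Real.rpow_nonneg hu1.le _)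
  exact Real.rpow_le_rpow_of_nonpos hu0 (le_of_lt hu) (by linarith)

lemma Dat.I_lower (h : Dat r lam B) {u0 : ℝ} (hu0 : 0 < u0) (hu1 : u0 ≤ 1 / 2) {s : ℝ} (hs : 0 < s)
    (hs2 : s ≤ 2) : Phi r 1 / 4 ≤ ∫ u in Ioc u0 1, u ^ (s - 1) * Phi r u := by
  have hIntg := (h.int_I hu0 hs).mono_set (Set.Ioc_subset_Ioi_self : Set.Ioc u0 1 ⊆ Set.Ioi u0)
  have h2 : ∫ u in Ioc (1/2 : ℝ) 1, u ^ (s - 1) * Phi r u ≤ ∫ u in Ioc u0 1, u ^ (s - 1) * Phi r u := by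
    refine setIntegral_mono_set hIntg ?_ (Ioc_subset_Ioc_left hu1).eventuallyLE
    refine (ae_restrict_iff' measurableSet_Ioc).2 (Eventually.of_forall fun u hu => ?_)
    exact mul_nonneg (Real.rpow_nonneg (hu0.trans hu.1).le _) (h.Phi_nonneg u)
  refine le_trans ?_ h2
  have h3 : ∫ u in Ioc (1/2 : ℝ) 1, (1/2) * Phi r 1 = Phi r 1 / 4 := by
    rw [setIntegral_const, Real.volume_real_Ioc_of_le (by norm_num), smul_eq_mul]; ring
  rw [← h3]
  refine setIntegral_mono_on (integrableOn_const (by simp)) (hIntg.mono_set (Ioc_subset_Ioc_left hu1)) measurableSet_Ioc fun u hu => ?_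
  have hu0' : 0 < u := by linarith [hu.1]
  have a1 : Phi r 1 ≤ Phi r u := h.anti hu0' (mem_Ioi.2 one_pos) hu.2
  have a2 : (1/2 : ℝ) ≤ u ^ (s - 1) := by
    have : u ^ (1 : ℝ) ≤ u ^ (s - 1) := Real.rpow_le_rpow_of_exponent_ge hu0' hu.2 (by linarith)
    rw [Real.rpow_one] at this
    linarith [hu.1]
  have := h.Phi_nonneg 1
  exact mul_le_mul a2 a1 this (by positivity)

lemma Dat.I_split (h : Dat r lam B) {u0 : ℝ} (hu0 : 0 < u0) (hu1 : u0 ≤ 1 / 2) {s : ℝ} (hs : 0 < s) :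
    II r u0 s = (∫ u in Ioc u0 1, u ^ (s - 1) * Phi r u) + ∫ u in Ioi 1, u ^ (s - 1) * Phi r u := by
  have hIntg := h.int_I hu0 hs
  have h01 : u0 ≤ 1 := by linarith
  unfold II
  rw [← Ioc_union_Ioi_eq_Ioi h01, setIntegral_union (Set.Ioc_disjoint_Ioi le_rfl) measurableSet_Ioi
    (hIntg.mono_set Ioc_subset_Ioi_self) (hIntg.mono_set (Ioi_subset_Ioi h01))]

lemma Dat.I_tail_nonneg (h : Dat r lam B) {s : ℝ} : 0 ≤ ∫ u in Ioi 1, u ^ (s - 1) * Phi r u :=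
  setIntegral_nonneg measurableSet_Ioi fun u hu =>
    mul_nonneg (Real.rpow_nonneg (zero_lt_one.trans hu).le _) (h.Phi_nonneg u)

lemma Dat.I_ge (h : Dat r lam B) {u0 : ℝ} (hu0 : 0 < u0) (hu1 : u0 ≤ 1 / 2) {s : ℝ} (hs : 0 < s)
    (hs2 : s ≤ 2) : 1 / 12 ≤ II r u0 s := by
  rw [h.I_split hu0 hu1 hs]
  have := h.I_lower hu0 hu1 hs hs2
  have := h.I_tail_nonneg (s := s)
  have := h.Phi_one
  linarith

lemma Dat.I_anti (h : Dat r lam B) {u0 : ℝ} (hu0 : 0 < u0) (hu1 : u0 ≤ 1 / 2) {s s' : ℝ} (hs : 0 < s)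
    (hss : s ≤ s') (hs2 : s' ≤ 2) : II r u0 s' ≤ 17 * II r u0 s := by
  have hs' : 0 < s' := by linarith
  rw [h.I_split hu0 hu1 hs, h.I_split hu0 hu1 hs']
  have a1 := h.I_lower hu0 hu1 hs (by linarith)
  have a2 := h.I_tail_nonneg (s := s)
  have a3 : ∫ u in Ioc u0 1, u ^ (s' - 1) * Phi r u ≤ ∫ u in Ioc u0 1, u ^ (s - 1) * Phi r u := by
    refine setIntegral_mono_on ((h.int_I hu0 hs').mono_set Ioc_subset_Ioi_self)
      ((h.int_I hu0 hs).mono_set Ioc_subset_Ioi_self) measurableSet_Ioc fun u hu => ?_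
    exact mul_le_mul_of_nonneg_right (Real.rpow_le_rpow_of_exponent_ge (hu0.trans hu.1) hu.2 (by linarith))
      (h.Phi_nonneg u)
  have a4 : ∫ u in Ioi 1, u ^ (s' - 1) * Phi r u ≤ ∫ u in Ioi 1, (2 * Real.exp (1/2) * Phi r 1) * Real.exp (-(1/2) * u) := by
    refine setIntegral_mono_on ((h.int_I hu0 hs').mono_set (Ioi_subset_Ioi (by linarith)))
      ((integrableOn_exp_mul_Ioi (by norm_num) 1).const_mul _) measurableSet_Ioi fun u hu => ?_
    have hu' : 1 < u := hu
    have b1 : u ^ (s' - 1) ≤ u := by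
      have := Real.rpow_le_rpow_of_exponent_le hu'.le (show s' - 1 ≤ 1 by linarith)
      rwa [Real.rpow_one] at this
    have b2 : u ≤ 2 * Real.exp ((u - 1) / 2) := by
      have := Real.add_one_le_exp ((u - 1) / 2); linarith
    have b3 := h.decay hu'.le
    have b4 := h.Phi_nonneg 1
    calc u ^ (s' - 1) * Phi r u ≤ (2 * Real.exp ((u - 1) / 2)) * (Phi r 1 * Real.exp (-(u - 1))) :=
          mul_le_mul (b1.trans b2) b3 (h.Phi_nonneg u) (by positivity)
      _ = 2 * Phi r 1 * (Real.exp ((u - 1) / 2) * Real.exp (-(u - 1))) := by ring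
      _ = 2 * Phi r 1 * (Real.exp (1/2) * Real.exp (-(1/2) * u)) := by
          rw [← Real.exp_add, ← Real.exp_add]; congr 2; ring
      _ = _ := by ring
  rw [integral_const_mul, integral_exp_mul_Ioi (by norm_num)] at a4
  have e : 2 * Real.exp (1/2) * Phi r 1 * (-Real.exp (-(1/2) * 1) / (-(1/2))) = 4 * Phi r 1 := by
    have : Real.exp (1/2) * Real.exp (-(1/2) * 1) = 1 := by rw [← Real.exp_add]; norm_num
    linear_combination 4 * Phi r 1 * this
  rw [e] at a4
  linarith

end QM

namespace QM
open MeasureTheory Set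

/-- regularised `(s-1) ζ(s) Γ(s)` -/
def MM (s : ℂ) : ℂ := DirichletCharacter.LFunctionTrivChar₁ 1 s * Complex.Gamma s

lemma MM_one : MM 1 = 1 := by
  simp [MM, DirichletCharacter.LFunctionTrivChar₁]

lemma MM_of_ne {s : ℂ} (hs : s ≠ 1) : MM s = (s - 1) * riemannZeta s * Complex.Gamma s := by
  unfold MM DirichletCharacter.LFunctionTrivChar₁
  rw [Function.update_of_ne hs]
  congr 2
  have := DirichletCharacter.LFunctionTrivChar_eq_mul_riemannZeta (N := 1) hs
  simpa using this

lemma MM_diff {s : ℂ} (hs : 0 < s.re) : DifferentiableAt ℂ MM s := by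
  refine (DirichletCharacter.differentiable_LFunctionTrivChar₁ 1 s).mul ?_
  refine Complex.differentiableAt_Gamma s fun m => ?_
  intro h
  rw [h] at hs
  simp at hs
  linarith [(Nat.cast_nonneg m : (0:ℝ) ≤ m)]

lemma MM_bound : ∃ ε m m2 : ℝ, 0 < ε ∧ ε ≤ 1 / 2 ∧ 0 < m ∧ m ≤ 1 ∧ 1 ≤ m2 ∧ ∀ s : ℝ, 1 - ε ≤ s → s ≤ 2 →
    m ≤ ‖MM s‖ ∧ ‖MM s‖ ≤ m2 := by
  have hcont : ContinuousOn (fun s : ℝ => ‖MM s‖) (Ioi 0) := by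
    intro s hs
    have h1 : ContinuousAt MM (s : ℂ) := (MM_diff (by simpa using hs)).continuousAt
    have h2 : ContinuousAt (fun s : ℝ => MM s) s :=
      ContinuousAt.comp (f := fun s : ℝ => (s : ℂ)) h1 Complex.continuous_ofReal.continuousAt
    exact h2.norm.continuousWithinAt
  have h1 : ContinuousAt (fun s : ℝ => ‖MM s‖) 1 := hcont.continuousAt (Ioi_mem_nhds one_pos)
  have h2 : ∀ᶠ s : ℝ in 𝓝 1, 0 < ‖MM s‖ := by
    refine h1.eventually (lt_mem_nhds ?_)
    simp [MM_one]
  obtain ⟨ε, hε, hε2⟩ := Metric.eventually_nhds_iff.1 h2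
  set e := min (ε / 2) (1 / 2) with he
  have he0 : 0 < e := by positivity
  have hsub : Icc (1 - e) 2 ⊆ Ioi (0:ℝ) := by
    intro s hs
    have : e ≤ 1/2 := min_le_right _ _
    simp only [mem_Icc] at hs
    simp only [mem_Ioi]; linarith [hs.1]
  have hpos : ∀ s ∈ Icc (1 - e) (2:ℝ), 0 < ‖MM s‖ := by
    intro s hs
    rcases le_or_gt s 1 with h | h
    · apply hε2
      have : e ≤ ε / 2 := min_le_left _ _
      rw [Real.dist_eq, abs_lt]; constructor <;> linarith [hs.1]
    · have hs1 : (s : ℂ) ≠ 1 := by exact_mod_cast h.ne'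
      rw [MM_of_ne hs1, norm_pos_iff]
      refine mul_ne_zero (mul_ne_zero (sub_ne_zero.2 hs1) ?_) ?_
      · exact riemannZeta_ne_zero_of_one_le_re (by simpa using h.le)
      · exact Complex.Gamma_ne_zero_of_re_pos (by simp; linarith)
  have hne : (Icc (1 - e) (2:ℝ)).Nonempty := ⟨1, by constructor <;> linarith⟩
  obtain ⟨x, hx, hx2⟩ := isCompact_Icc.exists_isMinOn hne (hcont.mono hsub)
  obtain ⟨y, hy, hy2⟩ := isCompact_Icc.exists_isMaxOn hne (hcont.mono hsub)
  refine ⟨e, min ‖MM x‖ 1, max ‖MM y‖ 1, he0, min_le_right _ _, lt_min (hpos x hx) one_pos,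
    min_le_right _ _, le_max_right _ _, fun s h1 h2 => ⟨?_, ?_⟩⟩
  · exact (min_le_left _ _).trans (hx2 (show s ∈ Icc (1-e) (2:ℝ) from ⟨h1, h2⟩))
  · exact le_trans (hy2 (show s ∈ Icc (1-e) (2:ℝ) from ⟨h1, h2⟩)) (le_max_left _ _)

section chi
variable {q : ℕ} [NeZero q] {χ : DirichletCharacter ℂ q}

lemma chi_cases (h2 : χ ^ 2 = 1) (a : ZMod q) : χ a = 0 ∨ χ a = 1 ∨ χ a = -1 :=
  MulChar.isQuadratic_iff_sq_eq_one.mpr h2 a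

lemma chi_re (h2 : χ ^ 2 = 1) (a : ZMod q) : (((χ a).re : ℝ) : ℂ) = χ a := by
  rcases chi_cases h2 a with h | h | h <;> simp [h]

lemma chi_abs (h2 : χ ^ 2 = 1) (a : ZMod q) : |(χ a).re| ≤ 1 := by
  rcases chi_cases h2 a with h | h | h <;> simp [h]

lemma psum_periodic (f : ZMod q → ℝ) (hf : ∑ x, f x = 0) (hf1 : ∀ x, |f x| ≤ 1) (N : ℕ) :
    |∑ i ∈ Finset.range N, f ((i + 1 : ℕ) : ZMod q)| ≤ q := by
  have hq : 0 < q := Nat.pos_of_ne_zero (NeZero.ne q)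
  have hper : ∀ M, ∑ i ∈ Finset.range q, f ((M + i + 1 : ℕ) : ZMod q) = 0 := by
    intro M
    rw [← hf]
    refine Finset.sum_bij (fun i _ => ((M + i + 1 : ℕ) : ZMod q)) (fun _ _ => Finset.mem_univ _) ?_ ?_
      (fun _ _ => rfl)
    · intro i hi j hj hij
      rw [ZMod.natCast_eq_natCast_iff] at hij
      have : i ≡ j [MOD q] := by
        have h1 : M + 1 + i ≡ M + 1 + j [MOD q] := by
          convert hij using 1 <;> ring
        exact Nat.ModEq.add_left_cancel' _ h1
      exact Nat.ModEq.eq_of_lt_of_lt this (Finset.mem_range.1 hi) (Finset.mem_range.1 hj)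
    · intro b _
      refine ⟨(b - (M + 1 : ℕ)).val, Finset.mem_range.2 (ZMod.val_lt _), ?_⟩
      have : ((M + (b - (M + 1 : ℕ)).val + 1 : ℕ) : ZMod q) = (M + 1 : ℕ) + (((b - (M + 1 : ℕ)).val : ℕ) : ZMod q) := by
        push_cast; ring
      rw [this, ZMod.natCast_zmod_val]; ring
  induction N using Nat.strong_induction_on with
  | _ N ih =>
    rcases lt_or_ge N q with h | h
    · calc |∑ i ∈ Finset.range N, f ((i + 1 : ℕ) : ZMod q)| ≤ ∑ i ∈ Finset.range N, |f ((i + 1 : ℕ) : ZMod q)| :=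
            Finset.abs_sum_le_sum_abs _ _
        _ ≤ ∑ i ∈ Finset.range N, (1:ℝ) := Finset.sum_le_sum fun i _ => hf1 _
        _ = N := by simp
        _ ≤ q := by exact_mod_cast h.le
    · obtain ⟨M, rfl⟩ := Nat.exists_eq_add_of_le' h
      rw [Finset.sum_range_add, hper M, add_zero]
      exact ih M (by omega)

lemma sum_chi (_ : χ ^ 2 = 1) (h1 : χ ≠ 1) : ∑ x : ZMod q, (χ x).re = 0 := by
  have := MulChar.sum_eq_zero_of_ne_one h1
  have h := congrArg Complex.re this
  simpa using h

lemma rr_eq (h2 : χ ^ 2 = 1) (n : ℕ) :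
    ((rr (fun n => (χ (n : ZMod q)).re) n : ℝ) : ℂ) = χ.zetaMul n := by
  unfold rr DirichletCharacter.zetaMul
  rw [ArithmeticFunction.coe_zeta_mul_apply]
  push_cast
  refine Finset.sum_congr rfl fun d hd => ?_
  have : d ≠ 0 := (Nat.pos_of_mem_divisors hd).ne'
  rw [chi_re h2]
  simp [toArithmeticFunction, this]

lemma exists_dat (h2 : χ ^ 2 = 1) (h1 : χ ≠ 1) :
    ∃ (r : ℕ → ℝ) (lam : ℝ), Dat r lam q ∧ ∀ s : ℂ, 1 < s.re →
      LSeries (fun n => (r n : ℂ)) s = riemannZeta s * χ.LFunction s := by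
  set a : ℕ → ℝ := fun n => (χ (n : ZMod q)).re with ha
  have ha1 : ∀ n, |a n| ≤ 1 := fun n => chi_abs h2 _
  obtain ⟨lam, hlam⟩ := key_const (a := a) (B := q) ha1
    (fun N => psum_periodic (fun x => (χ x).re) (sum_chi h2 h1) (fun x => chi_abs h2 x) N)
  have hrr : (fun n => ((rr a n : ℝ) : ℂ)) = fun n => χ.zetaMul n := by
    ext n; exact rr_eq h2 n
  refine ⟨rr a, lam, ⟨?_, ?_, ?_, ?_, ?_, ?_⟩, ?_⟩
  · intro n
    have := DirichletCharacter.zetaMul_nonneg h2 n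
    rw [← rr_eq h2] at this
    exact_mod_cast this
  · simp [rr]
  · simp [rr, ha]
  · intro u hu
    obtain ⟨S, hS, -⟩ := lambert ha1 hu
    exact hS.summable
  · intro σ hσ
    have := DirichletCharacter.LSeriesSummable_zetaMul χ (s := (σ : ℂ)) (by simpa using hσ)
    have h3 : LSeriesSummable (fun n => ((rr a n : ℝ) : ℂ)) (σ : ℂ) := by rw [hrr]; exact this
    have h4 := h3.norm
    refine h4.of_norm_bounded fun n => ?_
    rcases Nat.eq_zero_or_pos n with rfl | hn
    · simp [rr]
    · rw [LSeries.term_of_ne_zero hn.ne', norm_div, norm_div, Complex.norm_real,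
        Complex.norm_natCast_cpow_of_pos hn]
      simp only [Complex.ofReal_re]
      rw [Real.norm_of_nonneg (Real.rpow_nonneg (Nat.cast_nonneg n) _)]
  · intro u hu
    exact hlam u hu
  · intro s hs
    rw [hrr]
    have e1 := ArithmeticFunction.LSeries_mul' (f := (ArithmeticFunction.zeta : ArithmeticFunction ℂ))
      (g := toArithmeticFunction (χ ·)) (s := s) (ArithmeticFunction.LSeriesSummable_zeta_iff.mpr hs)
      (LSeriesSummable_of_bounded_of_one_lt_re (m := 1) (fun n hn ↦ by
        simpa only [toArithmeticFunction, ArithmeticFunction.coe_mk, hn, ↓reduceIte]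
          using DirichletCharacter.norm_le_one χ _) hs)
    rw [DirichletCharacter.zetaMul, e1]
    congr 1
    · exact ArithmeticFunction.LSeries_zeta_eq_riemannZeta hs
    · rw [DirichletCharacter.LFunction_eq_LSeries χ hs]
      refine LSeries_congr (fun {n} hn => ?_) s
      simp [toArithmeticFunction, hn]

lemma Dat.ident {r : ℕ → ℝ} {lam B : ℝ} (h : Dat r lam B) (h1 : χ ≠ 1)
    (hL : ∀ s : ℂ, 1 < s.re → LSeries (fun n => (r n : ℂ)) s = riemannZeta s * χ.LFunction s)
    {u0 : ℝ} (hu0 : 0 < u0) {s : ℂ} (hs : 0 < s.re) :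
    MM s * χ.LFunction s = (s - 1) * mellin (fun u => (ff r lam u0 u : ℂ)) s + lam * (u0 : ℂ) ^ (s - 1) := by
  set U : Set ℂ := {s | 0 < s.re} with hU
  have hUo : IsOpen U := isOpen_lt continuous_const Complex.continuous_re
  have hUc : IsPreconnected U := (convex_halfSpace_re_gt 0).isPreconnected
  have hu0c : (u0 : ℂ) ≠ 0 := by exact_mod_cast hu0.ne'
  have hf : AnalyticOnNhd ℂ (fun s => MM s * χ.LFunction s) U := by
    refine DifferentiableOn.analyticOnNhd (fun z hz => ?_) hUo
    exact ((MM_diff hz).mul (DirichletCharacter.differentiable_LFunction h1 z)).differentiableWithinAt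
  have hg : AnalyticOnNhd ℂ (fun s => (s - 1) * mellin (fun u => (ff r lam u0 u : ℂ)) s + lam * (u0 : ℂ) ^ (s - 1)) U := by
    refine DifferentiableOn.analyticOnNhd (fun z hz => ?_) hUo
    refine DifferentiableAt.differentiableWithinAt ?_
    refine DifferentiableAt.add ((differentiableAt_id.sub_const 1).mul (h.diff_ff hu0 hz)) ?_
    refine DifferentiableAt.const_mul ?_ _
    exact (differentiableAt_id.sub_const 1).const_cpow (Or.inl hu0c)
  refine hf.eqOn_of_preconnected_of_eventuallyEq hg hUc (z₀ := 2) (by simp [hU]) ?_ hs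
  have : {s : ℂ | 1 < s.re} ∈ 𝓝 (2:ℂ) := (isOpen_lt continuous_const Complex.continuous_re).mem_nhds (by simp)
  filter_upwards [this] with z hz
  have hz1 : z ≠ 1 := by rintro rfl; simp at hz
  have hz2 : z - 1 ≠ 0 := sub_ne_zero.2 hz1
  have e := h.mellin_ff hu0 (s := z) hz
  rw [hL z hz] at e
  rw [MM_of_ne hz1]
  field_simp at e
  linear_combination -e

end chi
end QM

namespace QM
open MeasureTheory Set

/-- `1 / log Q` -/
def dl (Q : ℝ) : ℝ := 1 / Real.log Q

lemma log16 : (2.7 : ℝ) < Real.log 16 := by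
  have : (16:ℝ) = 2 ^ 4 := by norm_num
  rw [this, Real.log_pow]
  have := Real.log_two_gt_d9
  push_cast; linarith

lemma logQ {Q : ℝ} (hQ : 16 ≤ Q) : 2.7 < Real.log Q :=
  log16.trans_le (Real.log_le_log (by norm_num) hQ)

lemma dl_pos {Q : ℝ} (hQ : 16 ≤ Q) : 0 < dl Q := by
  have := logQ hQ
  unfold dl; positivity

lemma dl_le {Q : ℝ} (hQ : 16 ≤ Q) : dl Q ≤ 1 / 2 := by
  have := logQ hQ
  unfold dl
  rw [div_le_div_iff₀ (by linarith) (by norm_num)]; linarith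

def K0 : ℝ := 3 * Real.exp 12

lemma K0_ge : 51 ≤ K0 := by
  have h := Real.add_one_le_exp (12:ℝ)
  have h2 : (7:ℝ) ≤ Real.exp 6 := by have := Real.add_one_le_exp (6:ℝ); linarith
  have h3 : Real.exp 12 = Real.exp 6 * Real.exp 6 := by rw [← Real.exp_add]; norm_num
  unfold K0; nlinarith

section chi
variable {q : ℕ} [NeZero q] {χ : DirichletCharacter ℂ q}

lemma core (h2 : χ ^ 2 = 1) (h1 : χ ≠ 1) {Q : ℝ} (hQ : 16 ≤ Q) (hq : (q : ℝ) ≤ Q) :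
    ∃ (G : ℝ → ℝ) (lam : ℝ), 0 < lam ∧ χ.LFunction 1 = lam ∧ (∀ η ∈ Icc (-1:ℝ) 1, 0 < G η) ∧
      (∀ η ∈ Icc (-1:ℝ) 1, ∀ η' ∈ Icc (-1:ℝ) 1, G η ≤ K0 * G η') ∧
      ContinuousOn (fun η : ℝ => η * G η) (Icc (-1:ℝ) 1) ∧
      ∀ η ∈ Icc (-1:ℝ) 1, MM ((1 + η * dl Q : ℝ) : ℂ) * χ.LFunction ((1 + η * dl Q : ℝ) : ℂ) =
        ((η * G η + lam * Real.exp (-6 * η) : ℝ) : ℂ) := by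
  obtain ⟨r, lam, h, hL⟩ := exists_dat h2 h1
  have hd0 := dl_pos hQ
  have hd1 := dl_le hQ
  have hQ0 : 0 < Q := by linarith
  have hlog := logQ hQ
  set u0 : ℝ := Q ^ (-6 : ℝ) with hu
  have hu0 : 0 < u0 := Real.rpow_pos_of_pos hQ0 _
  have hpow : ∀ t : ℝ, u0 ^ t = Real.exp (-6 * t * Real.log Q) := by
    intro t
    rw [hu, ← Real.rpow_mul hQ0.le, Real.rpow_def_of_pos hQ0]; congr 1; ring
  have hdlog : dl Q * Real.log Q = 1 := by unfold dl; field_simp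
  have hpowd : ∀ η : ℝ, u0 ^ (η * dl Q) = Real.exp (-6 * η) := by
    intro η
    rw [hpow]; congr 1; linear_combination (-6 * η) * hdlog
  have hJ : ∀ s : ℝ, 1/2 ≤ s → q * (u0 ^ s / s) ≤ 1/24 := by
    intro s hs
    have b1 : u0 ^ s ≤ Real.exp (-3 * Real.log Q) := by
      rw [hpow]; apply Real.exp_le_exp.2; nlinarith
    have b2 : Real.exp (-3 * Real.log Q) = (Q ^ 3)⁻¹ := by
      rw [neg_mul, Real.exp_neg, ← Real.exp_log (pow_pos hQ0 3), Real.log_pow]; push_cast; rfl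
    rw [b2] at b1
    have b3 : u0 ^ s / s ≤ 2 * (Q ^ 3)⁻¹ := by
      rw [div_le_iff₀ (by linarith)]
      have : 0 < (Q^3)⁻¹ := by positivity
      nlinarith
    have b4 : (q:ℝ) * (u0 ^ s / s) ≤ Q * (2 * (Q ^ 3)⁻¹) := by
      refine mul_le_mul hq b3 ?_ hQ0.le
      have := Real.rpow_nonneg hu0.le s
      positivity
    refine b4.trans ?_
    have : Q * (2 * (Q^3)⁻¹) = 2 / Q ^ 2 := by field_simp
    rw [this, div_le_div_iff₀ (by positivity) (by norm_num)]
    nlinarith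
  have hu1 : u0 ≤ 1 / 2 := by
    have b2 := Real.rpow_le_rpow_of_nonpos (by norm_num : (0:ℝ) < 16) hQ (by norm_num : (-6:ℝ) ≤ 0)
    refine b2.trans ?_
    rw [Real.rpow_neg (by norm_num)]
    norm_num
  have hs_mem : ∀ η ∈ Icc (-1:ℝ) 1, 1/2 ≤ 1 + η * dl Q ∧ 1 + η * dl Q ≤ 2 := by
    intro η hη
    constructor <;> nlinarith [hη.1, hη.2]
  set g : ℝ → ℝ := fun η => II r u0 (1 + η * dl Q) + JJ r lam u0 (1 + η * dl Q) with hg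
  have hIJ : ∀ η ∈ Icc (-1:ℝ) 1, II r u0 (1 + η * dl Q) / 2 ≤ g η ∧ g η ≤ 3 / 2 * II r u0 (1 + η * dl Q) := by
    intro η hη
    obtain ⟨a, b⟩ := hs_mem η hη
    have c1 := h.I_ge hu0 hu1 (s := 1 + η * dl Q) (by linarith) b
    have c2 := (h.J_le hu0 (s := 1 + η * dl Q) (by linarith)).trans (hJ _ a)
    rw [abs_le] at c2
    simp only [hg]
    constructor <;> linarith [c2.1, c2.2]
  have hIpos : ∀ η ∈ Icc (-1:ℝ) 1, 0 < II r u0 (1 + η * dl Q) := by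
    intro η hη
    obtain ⟨a, b⟩ := hs_mem η hη
    have c1 := h.I_ge hu0 hu1 (s := 1 + η * dl Q) (by linarith) b
    linarith
  have hIcomp : ∀ η ∈ Icc (-1:ℝ) 1, ∀ η' ∈ Icc (-1:ℝ) 1,
      II r u0 (1 + η * dl Q) ≤ Real.exp 12 * II r u0 (1 + η' * dl Q) := by
    intro η hη η' hη'
    obtain ⟨a, b⟩ := hs_mem η hη
    obtain ⟨a', b'⟩ := hs_mem η' hη'
    have := hIpos η' hη'
    rcases le_total η η' with hle | hle
    · have c := h.I_mono hu0 (s := 1 + η * dl Q) (s' := 1 + η' * dl Q) (by linarith) (by nlinarith)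
      rw [show -(1 + η' * dl Q - (1 + η * dl Q)) = (η - η') * dl Q by ring, hpowd] at c
      refine c.trans (mul_le_mul_of_nonneg_right (Real.exp_le_exp.2 ?_) this.le)
      linarith [hη.1, hη'.2]
    · have c := h.I_anti hu0 hu1 (s := 1 + η' * dl Q) (s' := 1 + η * dl Q) (by linarith) (by nlinarith) b
      refine c.trans (mul_le_mul_of_nonneg_right ?_ this.le)
      have := K0_ge; unfold K0 at this; linarith
  have hid : ∀ η ∈ Icc (-1:ℝ) 1, MM ((1 + η * dl Q : ℝ) : ℂ) * χ.LFunction ((1 + η * dl Q : ℝ) : ℂ) =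
        ((η * (dl Q * g η) + lam * Real.exp (-6 * η) : ℝ) : ℂ) := by
    intro η hη
    obtain ⟨a, b⟩ := hs_mem η hη
    rw [h.ident h1 hL hu0 (by rw [Complex.ofReal_re]; linarith), h.mellin_real hu0 (by linarith), ← hpowd]
    rw [show ((1 + η * dl Q : ℝ) : ℂ) - 1 = ((η * dl Q : ℝ) : ℂ) by push_cast; ring,
      ← Complex.ofReal_cpow hu0.le]
    simp only [hg]; push_cast; ring
  have hone : χ.LFunction 1 = lam := by
    have := hid 0 (by constructor <;> norm_num)
    simpa [MM_one] using this
  have hlam0 : 0 ≤ lam := by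
    by_contra hneg
    push Not at hneg
    have hq0 : (0:ℝ) ≤ q := Nat.cast_nonneg q
    have hup : 0 < -lam / (q + 1) := by apply div_pos <;> linarith
    have b := h.bd _ hup
    have c := h.Phi_nonneg (-lam / (q + 1))
    have e : lam / (-lam / (q + 1)) = -(q + 1) := by
      have : lam ≠ 0 := hneg.ne
      field_simp
    rw [e, abs_le] at b
    linarith [b.2]
  have hlam : 0 < lam := by
    rcases hlam0.lt_or_eq with h' | h'
    · exact h'
    · exfalso
      have := DirichletCharacter.LFunction_apply_one_ne_zero h1
      rw [hone, ← h'] at this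
      simp at this
  refine ⟨fun η => dl Q * g η, lam, hlam, hone, ?_, ?_, ?_, hid⟩
  · intro η hη
    have := (hIJ η hη).1
    have := hIpos η hη
    apply mul_pos hd0; linarith
  · intro η hη η' hη'
    have c1 := (hIJ η hη).2
    have c2 := (hIJ η' hη').1
    have c3 := hIcomp η hη η' hη'
    have : g η ≤ K0 * g η' := by
      unfold K0
      have := Real.exp_pos 12
      nlinarith
    calc dl Q * g η ≤ dl Q * (K0 * g η') := mul_le_mul_of_nonneg_left this hd0.le
      _ = _ := by ring
  · have e : EqOn (fun η : ℝ => η * (dl Q * g η)) (fun η : ℝ =>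
        (MM ((1 + η * dl Q : ℝ) : ℂ) * χ.LFunction ((1 + η * dl Q : ℝ) : ℂ)).re - lam * Real.exp (-6 * η))
        (Icc (-1:ℝ) 1) := by
      intro η hη
      simp only
      rw [hid η hη, Complex.ofReal_re]; ring
    refine ContinuousOn.congr ?_ e
    refine ContinuousOn.sub ?_ (by fun_prop)
    refine Complex.continuous_re.comp_continuousOn ?_
    intro η hη
    obtain ⟨a, b⟩ := hs_mem η hη
    have d : ContinuousAt (fun s => MM s * χ.LFunction s) ((1 + η * dl Q : ℝ) : ℂ) :=
      ((MM_diff (by rw [Complex.ofReal_re]; linarith)).mul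
        (DirichletCharacter.differentiable_LFunction h1 _)).continuousAt
    have d2 : ContinuousAt (fun η : ℝ => ((1 + η * dl Q : ℝ) : ℂ)) η := by fun_prop
    exact (ContinuousAt.comp (f := fun η : ℝ => ((1 + η * dl Q : ℝ) : ℂ)) d d2).continuousWithinAt

end chi

set_option maxHeartbeats 1600000 in
/-- All three consequences with absolute constants. -/
lemma ABC : ∃ ε K : ℝ, 0 < ε ∧ ε ≤ 1 / 2 ∧ 1 ≤ K ∧
    ∀ (q : ℕ) [NeZero q] (χ : DirichletCharacter ℂ q), χ ^ 2 = 1 → χ ≠ 1 →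
    ∀ Q : ℝ, 16 ≤ Q → (q : ℝ) ≤ Q →
      (∀ η : ℝ, 0 ≤ η → η ≤ 1 → ‖χ.LFunction ((1 + η * dl Q : ℝ) : ℂ)‖ ≤ K * ‖χ.LFunction ((1 + dl Q : ℝ) : ℂ)‖) ∧
      (∀ c : ℝ, 0 < c → c ≤ 1 → (∃ β : ℝ, χ.LFunction β = 0 ∧ 1 - c * dl Q < β) →
        ∀ η : ℝ, 0 ≤ η → η ≤ 1 →
          ‖χ.LFunction ((1 + η * dl Q : ℝ) : ℂ)‖ ≤ K * (η + c) * ‖χ.LFunction ((1 + dl Q : ℝ) : ℂ)‖) ∧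
      (∀ c : ℝ, 0 < c → c ≤ ε → (¬ ∃ β : ℝ, χ.LFunction β = 0 ∧ 1 - c * dl Q < β) →
        ‖χ.LFunction ((1 + dl Q : ℝ) : ℂ)‖ ≤ K / c * ‖χ.LFunction 1‖) := by
  obtain ⟨ε, m, m2, hε, hε2, hm, hm1, hm2, hM⟩ := MM_bound
  have hK0 := K0_ge
  have e6 : 1 ≤ Real.exp 6 := Real.one_le_exp (by norm_num)
  have e3 : 1 ≤ Real.exp 3 := Real.one_le_exp (by norm_num)
  have e63 : Real.exp 3 ≤ Real.exp 6 := Real.exp_le_exp.2 (by norm_num)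
  set K := 3 * K0 * Real.exp 6 * m2 / m with hK
  refine ⟨ε, K, hε, hε2, ?_, ?_⟩
  · rw [hK, le_div_iff₀ hm]
    have : 1 ≤ K0 * Real.exp 6 := by nlinarith
    nlinarith
  intro q _ χ h2 h1 Q hQ hq
  obtain ⟨G, lam, hlam, hL1, hG, hGK, hGc, hid⟩ := core h2 h1 hQ hq
  have hd0 := dl_pos hQ
  have hd1 := dl_le hQ
  have m1 : (1:ℝ) ∈ Icc (-1:ℝ) 1 := by constructor <;> norm_num
  have hG1 := hG 1 m1
  have hn1 : ‖χ.LFunction 1‖ = lam := by rw [hL1, Complex.norm_real, Real.norm_of_nonneg hlam.le]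
  have hnorm : ∀ η : ℝ, 0 ≤ η → η ≤ 1 → ‖MM ((1 + η * dl Q : ℝ) : ℂ)‖ * ‖χ.LFunction ((1 + η * dl Q : ℝ) : ℂ)‖
      = η * G η + lam * Real.exp (-6 * η) := by
    intro η h0 h1
    have mη : η ∈ Icc (-1:ℝ) 1 := ⟨by linarith, h1⟩
    rw [← norm_mul, hid η mη, Complex.norm_real, Real.norm_of_nonneg]
    have := hG η mη
    have := Real.exp_pos (-6 * η)
    positivity
  have hMM : ∀ η : ℝ, 0 ≤ η → η ≤ 1 → m ≤ ‖MM ((1 + η * dl Q : ℝ) : ℂ)‖ ∧ ‖MM ((1 + η * dl Q : ℝ) : ℂ)‖ ≤ m2 := by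
    intro η h0 h1
    exact hM _ (by nlinarith) (by nlinarith)
  have hup : ∀ η : ℝ, 0 ≤ η → η ≤ 1 → ‖χ.LFunction ((1 + η * dl Q : ℝ) : ℂ)‖ ≤ (K0 * η * G 1 + lam) / m := by
    intro η h0 h1
    have mη : η ∈ Icc (-1:ℝ) 1 := ⟨by linarith, h1⟩
    rw [le_div_iff₀ hm]
    have a1 := hnorm η h0 h1
    have a2 := (hMM η h0 h1).1
    have a3 := hGK η mη 1 m1
    have a4 : Real.exp (-6 * η) ≤ 1 := Real.exp_le_one_iff.2 (by linarith)
    have a5 := norm_nonneg (χ.LFunction ((1 + η * dl Q : ℝ) : ℂ))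
    nlinarith
  have hone : G 1 + lam * Real.exp (-6) = ‖MM ((1 + dl Q : ℝ) : ℂ)‖ * ‖χ.LFunction ((1 + dl Q : ℝ) : ℂ)‖ := by
    have := hnorm 1 zero_le_one le_rfl
    simp only [one_mul, mul_one] at this
    exact this.symm
  have hM1 : ‖MM ((1 + dl Q : ℝ) : ℂ)‖ ≤ m2 := by
    have := (hMM 1 zero_le_one le_rfl).2
    simpa only [one_mul] using this
  set X := ‖χ.LFunction ((1 + dl Q : ℝ) : ℂ)‖ with hX
  have hX0 : 0 ≤ X := norm_nonneg _
  have hGX : G 1 + lam * Real.exp (-6) ≤ m2 * X := by rw [hone]; exact mul_le_mul_of_nonneg_right hM1 hX0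
  have hexp6 : Real.exp 6 * Real.exp (-6) = 1 := by rw [← Real.exp_add]; norm_num
  have hGX1 : G 1 ≤ m2 * X := by
    have := mul_pos hlam (Real.exp_pos (-6)); linarith
  have hlX : lam ≤ Real.exp 6 * (m2 * X) := by
    have : Real.exp 6 * (lam * Real.exp (-6)) ≤ Real.exp 6 * (m2 * X) :=
      mul_le_mul_of_nonneg_left (by linarith) (by linarith)
    have e : Real.exp 6 * (lam * Real.exp (-6)) = lam := by linear_combination lam * hexp6
    linarith
  have hmX : 0 ≤ m2 * X := mul_nonneg (by linarith) hX0
  refine ⟨?_, ?_, ?_⟩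
  · intro η h0 h1
    refine (hup η h0 h1).trans ?_
    rw [hK, div_mul_eq_mul_div]
    refine div_le_div_of_nonneg_right ?_ hm.le
    have a : K0 * η * G 1 ≤ K0 * (m2 * X) := by
      have : η * G 1 ≤ m2 * X := by nlinarith
      nlinarith
    have b : K0 * (m2 * X) ≤ K0 * Real.exp 6 * (m2 * X) := by
      apply mul_le_mul_of_nonneg_right _ hmX; nlinarith
    have c : Real.exp 6 * (m2 * X) ≤ K0 * Real.exp 6 * (m2 * X) := by
      apply mul_le_mul_of_nonneg_right _ hmX; nlinarith
    have d : 0 ≤ K0 * Real.exp 6 * (m2 * X) := by positivity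
    linarith
  · rintro c hc0 hc1 ⟨β, hβ, hβ2⟩ η h0 h1'
    have hβ1 : β < 1 := by
      by_contra hcon
      push Not at hcon
      exact DirichletCharacter.LFunction_ne_zero_of_one_le_re χ (Or.inl h1) (s := (β : ℂ)) (by simpa using hcon) hβ
    set θ := (1 - β) / dl Q with hθ
    have hθ0 : 0 < θ := div_pos (by linarith) hd0
    have hθc : θ < c := by rw [hθ, div_lt_iff₀ hd0]; linarith
    have hβe : β = 1 + (-θ) * dl Q := by rw [hθ]; field_simp; ring
    have mθ : -θ ∈ Icc (-1:ℝ) 1 := ⟨by linarith, by linarith⟩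
    have e := hid (-θ) mθ
    rw [← hβe, hβ, mul_zero] at e
    have e' : 0 = -θ * G (-θ) + lam * Real.exp (-6 * -θ) := by exact_mod_cast e
    have a1 : 1 ≤ Real.exp (-6 * -θ) := Real.one_le_exp (by linarith)
    have a2 := hGK (-θ) mθ 1 m1
    have a3 := hG _ mθ
    have a4 : lam ≤ c * (K0 * G 1) := by
      have : lam ≤ θ * G (-θ) := by nlinarith
      have : θ * G (-θ) ≤ c * (K0 * G 1) := mul_le_mul hθc.le a2 a3.le hc0.le
      linarith
    refine (hup η h0 h1').trans ?_
    rw [hK, div_mul_eq_mul_div, div_mul_eq_mul_div]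
    refine div_le_div_of_nonneg_right ?_ hm.le
    have b1 : K0 * η * G 1 + lam ≤ K0 * (η + c) * G 1 := by linarith
    have b2 : K0 * (η + c) * G 1 ≤ K0 * (η + c) * (m2 * X) := mul_le_mul_of_nonneg_left hGX1 (by positivity)
    have b3 : K0 * (η + c) * (m2 * X) ≤ (3 * Real.exp 6) * (K0 * (η + c) * (m2 * X)) :=
      le_mul_of_one_le_left (by positivity) (by linarith)
    linarith
  · intro c hc0 hcε hno
    have hZpos : 0 < -(c/2) * G (-(c/2)) + lam * Real.exp (-6 * -(c/2)) := by
      by_contra hcon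
      push Not at hcon
      set Z : ℝ → ℝ := fun η => η * G η + lam * Real.exp (-6 * η) with hZ
      have hZc : ContinuousOn Z (Icc (-(c/2)) 1) := by
        refine ContinuousOn.add (hGc.mono (Icc_subset_Icc (by linarith) le_rfl)) (by fun_prop)
      have hZ1 : 0 ≤ Z 1 := by
        simp only [hZ]
        have := Real.exp_pos (-6 * 1)
        positivity
      obtain ⟨η, hη, hη0⟩ := intermediate_value_Icc (by linarith : -(c/2) ≤ 1) hZc ⟨hcon, hZ1⟩
      have mη : η ∈ Icc (-1:ℝ) 1 := ⟨by linarith [hη.1], hη.2⟩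
      have e := hid η mη
      have e2 : η * G η + lam * Real.exp (-6 * η) = 0 := hη0
      rw [e2, Complex.ofReal_zero, mul_eq_zero] at e
      have hMne : MM ((1 + η * dl Q : ℝ) : ℂ) ≠ 0 := by
        have := (hM (1 + η * dl Q) (by nlinarith [hη.1]) (by nlinarith [hη.2])).1
        rw [← norm_pos_iff]; linarith
      rcases e with e | e
      · exact hMne e
      · exact hno ⟨_, e, by nlinarith [hη.1]⟩
    have mc : -(c/2) ∈ Icc (-1:ℝ) 1 := ⟨by linarith, by linarith⟩
    have a1 := hGK 1 m1 _ mc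
    have a2 : Real.exp (-6 * -(c/2)) ≤ Real.exp 3 := Real.exp_le_exp.2 (by linarith)
    have a3 : (c/2) * G (-(c/2)) ≤ lam * Real.exp 3 := by nlinarith
    have a4 : c * G 1 ≤ 2 * K0 * (Real.exp 3 * lam) := by nlinarith
    have b := hup 1 zero_le_one le_rfl
    have b' : X ≤ (G 1 + lam) / m := by
      rw [le_div_iff₀ hm]
      have := (hMM 1 zero_le_one le_rfl).1
      simp only [one_mul] at this
      have h6 : Real.exp (-6) ≤ 1 := Real.exp_le_one_iff.2 (by norm_num)
      nlinarith
    rw [hn1]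
    refine b'.trans ?_
    rw [hK, div_div, div_mul_eq_mul_div, div_le_div_iff₀ hm (by positivity)]
    have c1 : c * (G 1 + lam) ≤ 3 * K0 * Real.exp 6 * m2 * lam := by
      have d1 : c * lam ≤ K0 * (Real.exp 3 * lam) := by
        have : c * lam ≤ lam := by nlinarith
        have : lam ≤ Real.exp 3 * lam := le_mul_of_one_le_left hlam.le e3
        have : Real.exp 3 * lam ≤ K0 * (Real.exp 3 * lam) := le_mul_of_one_le_left (by positivity) (by linarith)
        linarith
      have d2 : K0 * (Real.exp 3 * lam) ≤ K0 * (Real.exp 6 * lam) := by gcongr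
      have d3 : K0 * (Real.exp 6 * lam) ≤ m2 * (K0 * (Real.exp 6 * lam)) :=
        le_mul_of_one_le_left (by positivity) hm2
      linarith
    have c2 := mul_le_mul_of_nonneg_left c1 hm.le
    linarith

end QM

namespace QM

/-- prime sum with coefficients -/
def SS (f : Nat.Primes → ℝ) (s : ℝ) : ℝ := ∑' p : Nat.Primes, f p * (p : ℝ) ^ (-s)

lemma prime_summable {s : ℝ} (hs : 1 < s) : Summable fun p : Nat.Primes => (p : ℝ) ^ (-s) :=
  Nat.Primes.summable_rpow.2 (by linarith)

lemma pp_nonneg (p : Nat.Primes) (s : ℝ) : 0 ≤ (p : ℝ) ^ s := Real.rpow_nonneg (Nat.cast_nonneg _) _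

lemma SS_summable {f : Nat.Primes → ℝ} (hf : ∀ p, |f p| ≤ 1) {s : ℝ} (hs : 1 < s) :
    Summable fun p : Nat.Primes => f p * (p : ℝ) ^ (-s) := by
  refine (prime_summable hs).of_norm_bounded fun p => ?_
  rw [norm_mul, Real.norm_eq_abs, Real.norm_of_nonneg (pp_nonneg p _)]
  exact mul_le_of_le_one_left (pp_nonneg p _) (hf p)

def B0 : ℝ := ∑' p : Nat.Primes, (p : ℝ) ^ (-2 : ℝ)

lemma B0_nonneg : 0 ≤ B0 := tsum_nonneg fun p => pp_nonneg p _

lemma log_sum (f : Nat.Primes → ℂ) (hf : ∀ p, ‖f p‖ ≤ 1) {s : ℝ} (hs : 1 < s) :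
    |Real.log ‖Complex.exp (∑' p : Nat.Primes, -Complex.log (1 - f p * (p : ℂ) ^ (-(s : ℂ))))‖
      - SS (fun p => (f p).re) s| ≤ B0 := by
  set z : Nat.Primes → ℂ := fun p => f p * (p : ℂ) ^ (-(s : ℂ)) with hz
  have hpc : ∀ p : Nat.Primes, ((p : ℂ) ^ (-(s : ℂ))) = (((p : ℝ) ^ (-s) : ℝ) : ℂ) := by
    intro p
    rw [Complex.ofReal_cpow (Nat.cast_nonneg _)]; simp
  have hzn : ∀ p, ‖z p‖ ≤ (p : ℝ) ^ (-s) := by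
    intro p
    simp only [hz]
    rw [hpc, norm_mul, Complex.norm_real, Real.norm_of_nonneg (pp_nonneg p _)]
    exact mul_le_of_le_one_left (pp_nonneg p _) (hf p)
  have hp2 : ∀ p : Nat.Primes, (2:ℝ) ≤ p := fun p => by exact_mod_cast p.2.two_le
  have hp1 : ∀ p : Nat.Primes, (p : ℝ) ^ (-s) ≤ (p:ℝ) ^ (-1 : ℝ) := fun p =>
    Real.rpow_le_rpow_of_exponent_le (by linarith [hp2 p]) (by linarith)
  have hph : ∀ p : Nat.Primes, (p:ℝ) ^ (-1 : ℝ) ≤ 1 / 2 := fun p => by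
    rw [Real.rpow_neg_one, one_div]; exact inv_anti₀ (by norm_num) (hp2 p)
  have hzre : ∀ p, (z p).re = (f p).re * (p : ℝ) ^ (-s) := by
    intro p; simp only [hz]; rw [hpc, Complex.re_mul_ofReal]
  have hdiff : ∀ p, ‖-Complex.log (1 - z p) - z p‖ ≤ (p : ℝ) ^ (-2 : ℝ) := by
    intro p
    have h0 := hzn p
    have h1 : ‖z p‖ ≤ 1 / 2 := (h0.trans (hp1 p)).trans (hph p)
    have h2 := Complex.norm_log_one_add_sub_self_le (z := - z p) (by rw [norm_neg]; linarith)
    rw [norm_neg] at h2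
    have e : -Complex.log (1 - z p) - z p = -(Complex.log (1 + -z p) - -z p) := by
      rw [← sub_eq_add_neg]; ring
    rw [e, norm_neg]
    refine h2.trans ?_
    have h3 : (1 - ‖z p‖)⁻¹ ≤ 2 := by
      rw [inv_le_comm₀ (by linarith) (by norm_num)]; linarith
    have h4 : ‖z p‖ ^ 2 ≤ (p : ℝ) ^ (-2 : ℝ) := by
      have : (p : ℝ) ^ (-2 : ℝ) = ((p:ℝ) ^ (-1 : ℝ)) ^ 2 := by
        rw [← Real.rpow_natCast, ← Real.rpow_mul (Nat.cast_nonneg _)]; norm_num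
      rw [this]
      exact pow_le_pow_left₀ (norm_nonneg _) (h0.trans (hp1 p)) 2
    have h5 : 0 ≤ ‖z p‖ ^ 2 := by positivity
    nlinarith
  have hsz : Summable z := (prime_summable hs).of_norm_bounded hzn
  have hs2 : Summable fun p : Nat.Primes => (p : ℝ) ^ (-2 : ℝ) := Nat.Primes.summable_rpow.2 (by norm_num)
  have hsd : Summable fun p => -Complex.log (1 - z p) - z p := hs2.of_norm_bounded hdiff
  have hsl : Summable fun p => -Complex.log (1 - z p) := by
    refine (hsd.add hsz).congr fun p => by ring
  rw [Complex.norm_exp, Real.log_exp]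
  have e : SS (fun p => (f p).re) s = (∑' p, z p).re := by
    rw [Complex.re_tsum hsz]; unfold SS
    exact tsum_congr fun p => (hzre p).symm
  rw [e, ← Complex.sub_re, ← hsl.tsum_sub hsz]
  refine (Complex.abs_re_le_norm _).trans ?_
  exact tsum_of_norm_bounded hs2.hasSum hdiff

section chi
variable {q : ℕ} [NeZero q]

def chf (χ : DirichletCharacter ℂ q) (p : Nat.Primes) : ℝ := (χ ((p : ℕ) : ZMod q)).re

lemma chf_abs {χ : DirichletCharacter ℂ q} (p : Nat.Primes) : |chf χ p| ≤ 1 :=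
  (Complex.abs_re_le_norm _).trans (DirichletCharacter.norm_le_one χ _)

lemma log_L (χ : DirichletCharacter ℂ q) {s : ℝ} (hs : 1 < s) :
    |Real.log ‖χ.LFunction s‖ - SS (chf χ) s| ≤ B0 := by
  have h := log_sum (fun p => χ ((p : ℕ) : ZMod q)) (fun p => DirichletCharacter.norm_le_one χ _) hs
  have hs' : 1 < (s : ℂ).re := by simpa using hs
  rw [DirichletCharacter.LFunction_eq_LSeries χ hs', ← DirichletCharacter.LSeries_eulerProduct_exp_log χ hs']
  exact h
end chi

def S0 (s : ℝ) : ℝ := ∑' p : Nat.Primes, (p : ℝ) ^ (-s)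

lemma S0_eq (s : ℝ) : S0 s = SS (fun _ => 1) s := by simp [S0, SS]

lemma S0_nonneg (s : ℝ) : 0 ≤ S0 s := tsum_nonneg fun p => pp_nonneg p _

lemma SS_le_S0 {f : Nat.Primes → ℝ} (hf : ∀ p, |f p| ≤ 1) {s : ℝ} (hs : 1 < s) : |SS f s| ≤ S0 s := by
  rw [← Real.norm_eq_abs]
  refine tsum_of_norm_bounded (prime_summable hs).hasSum fun p => ?_
  rw [norm_mul, Real.norm_eq_abs, Real.norm_of_nonneg (pp_nonneg p _)]
  exact mul_le_of_le_one_left (pp_nonneg p _) (hf p)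

lemma S0_log : ∃ K : ℝ, 0 ≤ K ∧ ∀ t : ℝ, 0 < t → t ≤ 1 → |S0 (1 + t) - Real.log (1 / t)| ≤ K := by
  have hne : ∀ s : ℝ, 1 ≤ s → DirichletCharacter.LFunctionTrivChar₁ 1 s ≠ 0 := by
    intro s hs h0
    rcases hs.eq_or_lt with h | h
    · rw [← h] at h0
      exact DirichletCharacter.LFunctionTrivChar₁_apply_one_ne_zero 1 (by simpa using h0)
    · have hs1 : (s : ℂ) ≠ 1 := by exact_mod_cast h.ne'
      have : MM s = 0 := by rw [MM, h0, zero_mul]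
      rw [MM_of_ne hs1] at this
      refine mul_ne_zero (mul_ne_zero (sub_ne_zero.2 hs1) ?_) ?_ this
      · exact riemannZeta_ne_zero_of_one_le_re (by simpa using h.le)
      · exact Complex.Gamma_ne_zero_of_re_pos (by simp; linarith)
  have hc : ContinuousOn (fun s : ℝ => Real.log ‖DirichletCharacter.LFunctionTrivChar₁ 1 s‖) (Set.Icc 1 2) := by
    refine ContinuousOn.log ?_ (fun s hs => norm_ne_zero_iff.2 (hne s hs.1))
    have := (DirichletCharacter.differentiable_LFunctionTrivChar₁ 1).continuous
    exact (this.comp Complex.continuous_ofReal).norm.continuousOn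
  obtain ⟨C, hC⟩ := isCompact_Icc.exists_bound_of_continuousOn hc
  refine ⟨B0 + |C|, by have := B0_nonneg; positivity, fun t ht ht1 => ?_⟩
  have h1 := log_sum (fun _ => 1) (by simp) (s := 1 + t) (by linarith)
  simp only [one_mul, Complex.one_re] at h1
  rw [riemannZeta_eulerProduct_exp_log (by simpa using ht), ← S0_eq] at h1
  have h2 := hC (1 + t) ⟨by linarith, by linarith⟩
  have hs1 : ((1 + t : ℝ) : ℂ) ≠ 1 := by
    intro h
    have : 1 + t = 1 := by exact_mod_cast h
    linarith
  have e : DirichletCharacter.LFunctionTrivChar₁ 1 ((1 + t : ℝ) : ℂ) = t * riemannZeta ((1 + t : ℝ) : ℂ) := by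
    unfold DirichletCharacter.LFunctionTrivChar₁
    rw [Function.update_of_ne hs1]
    have := DirichletCharacter.LFunctionTrivChar_eq_mul_riemannZeta (N := 1) hs1
    simp only [Nat.primeFactors_one, Finset.prod_empty, one_mul] at this
    rw [this]; push_cast; ring
  have hz : riemannZeta ((1 + t : ℝ) : ℂ) ≠ 0 := riemannZeta_ne_zero_of_one_le_re (by simp; linarith)
  rw [e, norm_mul, Complex.norm_real, Real.norm_of_nonneg ht.le,
    Real.log_mul ht.ne' (norm_ne_zero_iff.2 hz), Real.norm_eq_abs] at h2
  rw [one_div, Real.log_inv]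
  have h3 := le_abs_self C
  rw [abs_le] at h1 h2 ⊢
  constructor <;> linarith [h1.1, h1.2, h2.1, h2.2]

/-- existence of an exceptional zero -/
def Exc {q : ℕ} [NeZero q] (c Q : ℝ) (χ : DirichletCharacter ℂ q) : Prop :=
  ∃ β : ℝ, χ.LFunction β = 0 ∧ 1 - c * dl Q < β

lemma L_pos {q : ℕ} [NeZero q] {χ : DirichletCharacter ℂ q} (h : χ ≠ 1) {s : ℝ} (hs : 1 ≤ s) : 0 < ‖χ.LFunction s‖ :=
  norm_pos_iff.2 (DirichletCharacter.LFunction_ne_zero_of_one_le_re χ (Or.inl h) (by simpa using hs))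

lemma package : ∃ c K : ℝ, 0 < c ∧ c ≤ 1 ∧ 0 ≤ K ∧
    (∀ t : ℝ, 0 < t → t ≤ 1 → |S0 (1 + t) - Real.log (1 / t)| ≤ K) ∧
    ∀ (q : ℕ) [NeZero q] (Q : ℝ), 16 ≤ Q → (q : ℝ) ≤ Q →
      (∀ χ : DirichletCharacter ℂ q, χ ^ 2 = 1 → χ ≠ 1 →
        (∀ η : ℝ, 0 < η → η ≤ 1 → SS (chf χ) (1 + η * dl Q) ≤ SS (chf χ) (1 + dl Q) + K) ∧
        Real.log ‖χ.LFunction 1‖ ≤ SS (chf χ) (1 + dl Q) + K ∧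
        (¬ Exc c Q χ → SS (chf χ) (1 + dl Q) ≤ Real.log ‖χ.LFunction 1‖ + K)) ∧
      (∀ χ₁ χ₂ : DirichletCharacter ℂ q, χ₁ ^ 2 = 1 → χ₁ ≠ 1 → χ₂ ^ 2 = 1 → χ₂ ≠ 1 →
        Exc c Q χ₁ → Exc c Q χ₂ → χ₁ = χ₂) := by
  obtain ⟨ε, K, hε, hε2, hK, H⟩ := ABC
  obtain ⟨K', hK', hS0⟩ := S0_log
  have hB := B0_nonneg
  have hK0 : 0 < K := by linarith
  have hlK : 0 ≤ Real.log K := Real.log_nonneg hK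
  set A := 2 * K' + 6 * B0 + 3 * Real.log K + 2 * Real.log 2 with hA
  set c := min ε (Real.exp (-A - 1)) with hc
  have hc0 : 0 < c := lt_min hε (Real.exp_pos _)
  have hcε : c ≤ ε := min_le_left _ _
  have hcA : Real.log c ≤ -A - 1 := by
    have := Real.log_le_log hc0 (min_le_right ε (Real.exp (-A - 1)))
    rwa [Real.log_exp] at this
  have hlc : 0 ≤ -Real.log c := by
    have : Real.log c ≤ 0 := Real.log_nonpos hc0.le (by linarith)
    linarith
  refine ⟨c, K' + 2 * B0 + Real.log K - Real.log c, hc0, by linarith, by linarith, ?_, ?_⟩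
  · intro t ht ht1
    have := hS0 t ht ht1
    linarith
  intro q _ Q hQ hq
  have hd0 := dl_pos hQ
  have hd1 := dl_le hQ
  have hA1 : ∀ χ : DirichletCharacter ℂ q, χ ^ 2 = 1 → χ ≠ 1 → ∀ η : ℝ, 0 < η → η ≤ 1 →
      SS (chf χ) (1 + η * dl Q) ≤ SS (chf χ) (1 + dl Q) + (Real.log K + 2 * B0) := by
    intro χ h2 h1 η h0 h1'
    have hη : 0 < η * dl Q := by positivity
    have a := (H q χ h2 h1 Q hQ hq).1 η h0.le h1'
    have p1 := L_pos h1 (s := 1 + η * dl Q) (by linarith)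
    have p2 := L_pos h1 (s := 1 + dl Q) (by linarith)
    have b := Real.log_le_log p1 a
    rw [Real.log_mul hK0.ne' p2.ne'] at b
    have l1 := log_L χ (s := 1 + η * dl Q) (by linarith)
    have l2 := log_L χ (s := 1 + dl Q) (by linarith)
    rw [abs_le] at l1 l2
    linarith [l1.1, l2.2]
  refine ⟨?_, ?_⟩
  · intro χ h2 h1
    refine ⟨?_, ?_, ?_⟩
    · intro η h0 h1'
      have := hA1 χ h2 h1 η h0 h1'
      linarith
    · have a := (H q χ h2 h1 Q hQ hq).1 0 le_rfl zero_le_one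
      simp only [zero_mul, add_zero, Complex.ofReal_one] at a
      have p1 := L_pos h1 (s := 1) le_rfl
      have p2 := L_pos h1 (s := 1 + dl Q) (by linarith)
      rw [Complex.ofReal_one] at p1
      have b := Real.log_le_log p1 a
      rw [Real.log_mul hK0.ne' p2.ne'] at b
      have l2 := log_L χ (s := 1 + dl Q) (by linarith)
      rw [abs_le] at l2
      linarith [l2.2]
    · intro hne
      have a := (H q χ h2 h1 Q hQ hq).2.2 c hc0 hcε hne
      have p1 := L_pos h1 (s := 1) le_rfl
      have p2 := L_pos h1 (s := 1 + dl Q) (by linarith)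
      rw [Complex.ofReal_one] at p1
      have b := Real.log_le_log p2 a
      rw [Real.log_mul (div_pos hK0 hc0).ne' p1.ne', Real.log_div hK0.ne' hc0.ne'] at b
      have l2 := log_L χ (s := 1 + dl Q) (by linarith)
      rw [abs_le] at l2
      linarith [l2.1]
  · intro χ₁ χ₂ h21 h11 h22 h12 e1 e2
    by_contra hne
    have hcd : 0 < c * dl Q := by positivity
    have hexc : ∀ χ : DirichletCharacter ℂ q, χ ^ 2 = 1 → χ ≠ 1 → Exc c Q χ →
        SS (chf χ) (1 + c * dl Q) ≤ SS (chf χ) (1 + dl Q) + (Real.log K + Real.log 2 + Real.log c + 2 * B0) := by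
      intro χ h2 h1 he
      have a := (H q χ h2 h1 Q hQ hq).2.1 c hc0 (by linarith) he c hc0.le (by linarith)
      have p1 := L_pos h1 (s := 1 + c * dl Q) (by linarith)
      have p2 := L_pos h1 (s := 1 + dl Q) (by linarith)
      have b := Real.log_le_log p1 a
      rw [show K * (c + c) = K * (2 * c) by ring, Real.log_mul (by positivity) p2.ne', Real.log_mul hK0.ne' (by positivity),
        Real.log_mul (by norm_num) hc0.ne'] at b
      have l1 := log_L χ (s := 1 + c * dl Q) (by linarith)
      have l2 := log_L χ (s := 1 + dl Q) (by linarith)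
      rw [abs_le] at l1 l2
      linarith [l1.1, l2.2]
    have x1 := hexc χ₁ h21 h11 e1
    have x2 := hexc χ₂ h22 h12 e2
    have h12sq : (χ₁ * χ₂) ^ 2 = 1 := by rw [mul_pow, h21, h22, one_mul]
    have h12ne : χ₁ * χ₂ ≠ 1 := by
      intro h
      apply hne
      have : χ₁ * χ₂ = χ₂ * χ₂ := by rw [h, ← sq, h22]
      exact mul_right_cancel this
    have x3 := hA1 (χ₁ * χ₂) h12sq h12ne c hc0 (by linarith)
    have z1 := hS0 (c * dl Q) hcd (by nlinarith)
    have z2 := hS0 (dl Q) hd0 (by linarith)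
    rw [one_div, Real.log_inv, Real.log_mul hc0.ne' hd0.ne', abs_le] at z1
    rw [one_div, Real.log_inv, abs_le] at z2
    have s1 : 1 < 1 + c * dl Q := by linarith
    have s2 : 1 < 1 + dl Q := by linarith
    have key : S0 (1 + dl Q) + SS (chf χ₁) (1 + dl Q) + SS (chf χ₂) (1 + dl Q) + SS (chf (χ₁ * χ₂)) (1 + dl Q) ≤
        S0 (1 + c * dl Q) + SS (chf χ₁) (1 + c * dl Q) + SS (chf χ₂) (1 + c * dl Q) + SS (chf (χ₁ * χ₂)) (1 + c * dl Q) := by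
      have hsum : ∀ s : ℝ, 1 < s → HasSum (fun p : Nat.Primes => ((1 + chf χ₁ p) * (1 + chf χ₂ p)) * (p : ℝ) ^ (-s))
          (S0 s + SS (chf χ₁) s + SS (chf χ₂) s + SS (chf (χ₁ * χ₂)) s) := by
        intro s hs
        have t1 := (prime_summable hs).hasSum
        have t2 := (SS_summable (f := chf χ₁) chf_abs hs).hasSum
        have t3 := (SS_summable (f := chf χ₂) chf_abs hs).hasSum
        have t4 := (SS_summable (f := chf (χ₁ * χ₂)) chf_abs hs).hasSum
        refine (((t1.add t2).add t3).add t4).congr_fun ?_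
        intro p
        have : chf (χ₁ * χ₂) p = chf χ₁ p * chf χ₂ p := by
          unfold chf
          rw [MulChar.mul_apply, ← chi_re h21, ← chi_re h22, ← Complex.ofReal_mul, Complex.ofReal_re,
            Complex.ofReal_re, Complex.ofReal_re]
        rw [this]; ring
      refine hasSum_le (fun p => ?_) (hsum _ s2) (hsum _ s1)
      have q1 := abs_le.1 (chf_abs (χ := χ₁) p)
      have q2 := abs_le.1 (chf_abs (χ := χ₂) p)
      refine mul_le_mul_of_nonneg_left ?_ (mul_nonneg (by linarith [q1.1]) (by linarith [q2.1]))
      have hp : (1:ℝ) ≤ p := by exact_mod_cast p.2.one_lt.le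
      exact Real.rpow_le_rpow_of_exponent_le hp (by nlinarith)
    linarith [z1.1, z1.2, z2.1, z2.2]

end QM

namespace QM

/-- characters with trivial square -/
def QF (q : ℕ) [NeZero q] : Finset (DirichletCharacter ℂ q) :=
  Set.Finite.toFinset (s := {χ : DirichletCharacter ℂ q | χ ^ 2 = 1}) (Set.toFinite _)

lemma mem_QF {q : ℕ} [NeZero q] {χ : DirichletCharacter ℂ q} : χ ∈ QF q ↔ χ ^ 2 = 1 := by
  simp [QF]

lemma QF_card_pos (q : ℕ) [NeZero q] : 0 < (QF q).card :=
  Finset.card_pos.2 ⟨1, mem_QF.2 (one_pow 2)⟩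

lemma sum_QF_zero {q : ℕ} [NeZero q] {x : ZMod q} {ψ : DirichletCharacter ℂ q} (hψ : ψ ^ 2 = 1)
    (hx : ψ x ≠ 1) : ∑ χ ∈ QF q, (χ x).re = 0 := by
  have h1 : ∑ χ ∈ QF q, χ x = ψ x * ∑ χ ∈ QF q, χ x := by
    rw [Finset.mul_sum]
    refine Finset.sum_nbij' (fun χ => ψ * χ) (fun χ => ψ * χ) ?_ ?_ ?_ ?_ ?_
    · intro χ h; rw [mem_QF] at *; rw [mul_pow, hψ, h, one_mul]
    · intro χ h; rw [mem_QF] at *; rw [mul_pow, hψ, h, one_mul]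
    · intro χ _; rw [← mul_assoc, ← sq, hψ, one_mul]
    · intro χ _; rw [← mul_assoc, ← sq, hψ, one_mul]
    · intro χ _
      have : χ = ψ * (ψ * χ) := by rw [← mul_assoc, ← sq, hψ, one_mul]
      conv_lhs => rw [this]
      rw [MulChar.mul_apply]
  have h2 : (1 - ψ x) * ∑ χ ∈ QF q, χ x = 0 := by linear_combination h1
  rcases mul_eq_zero.1 h2 with h | h
  · exact absurd (by linear_combination -h) hx
  · have := congrArg Complex.re h
    simpa using this

lemma sum_QF_nonneg {q : ℕ} [NeZero q] (x : ZMod q) : 0 ≤ ∑ χ ∈ QF q, (χ x).re := by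
  by_cases h : ∃ ψ : DirichletCharacter ℂ q, ψ ^ 2 = 1 ∧ ψ x ≠ 1
  · obtain ⟨ψ, a, b⟩ := h
    rw [sum_QF_zero a b]
  · push Not at h
    refine Finset.sum_nonneg fun χ hχ => ?_
    rw [h χ (mem_QF.1 hχ)]; simp

lemma transfer {q P : ℕ} [NeZero q] [NeZero P] (hP : P ∣ q) (n : ℕ) :
    ∑ χ ∈ QF q, (χ (n : ZMod q)).re ≤
      (QF q).card * ((∑ ψ ∈ QF P, (ψ (n : ZMod P)).re) / (QF P).card) := by
  have hc : (0:ℝ) < (QF P).card := by exact_mod_cast QF_card_pos P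
  by_cases h : ∃ ψ : DirichletCharacter ℂ q, ψ ^ 2 = 1 ∧ ψ (n : ZMod q) ≠ 1
  · obtain ⟨ψ, a, b⟩ := h
    rw [sum_QF_zero a b]
    have := sum_QF_nonneg (q := P) (n : ZMod P)
    positivity
  · push Not at h
    have hun : IsUnit (n : ZMod q) := by
      by_contra hn
      have := h 1 (one_pow 2)
      rw [MulChar.map_nonunit _ hn] at this
      exact zero_ne_one this
    obtain ⟨u, hu⟩ := hun
    have hψ : ∀ ψ ∈ QF P, (ψ (n : ZMod P)).re = 1 := by
      intro ψ hψ
      have h1 := h (DirichletCharacter.changeLevel hP ψ) (by rw [← map_pow, mem_QF.1 hψ, map_one])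
      rw [← hu, DirichletCharacter.changeLevel_eq_cast_of_dvd, hu, ZMod.cast_natCast hP] at h1
      rw [h1]; rfl
    rw [Finset.sum_congr rfl hψ, Finset.sum_congr rfl (fun χ hχ => by rw [h χ (mem_QF.1 hχ)])]
    simp [hc.ne']

lemma chf_mul {q : ℕ} [NeZero q] {χ : DirichletCharacter ℂ q} (h : χ ^ 2 = 1) (p p' : Nat.Primes) :
    chf χ p * chf χ p' = (χ (((p * p' : ℕ)) : ZMod q)).re := by
  unfold chf
  rw [Nat.cast_mul, map_mul, ← chi_re h (p : ℕ), ← chi_re h (p' : ℕ), ← Complex.ofReal_mul,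
    Complex.ofReal_re, Complex.ofReal_re, Complex.ofReal_re]

lemma second {q P : ℕ} [NeZero q] [NeZero P] (hP : P ∣ q) {s T : ℝ} (hs : 1 < s)
    (hT : ∑ ψ ∈ QF P, |SS (chf ψ) s| ≤ (QF P).card * T) :
    ∑ χ ∈ QF q, SS (chf χ) s ^ 2 ≤ (QF q).card * (S0 s * T) := by
  have hc : (0:ℝ) < (QF P).card := by exact_mod_cast QF_card_pos P
  have e1 : ∀ χ ∈ QF q, HasSum (fun p : Nat.Primes => (p : ℝ) ^ (-s) * (chf χ p * SS (chf χ) s)) (SS (chf χ) s ^ 2) := by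
    intro χ _
    have := (SS_summable (f := chf χ) chf_abs hs).hasSum.mul_right (SS (chf χ) s)
    convert! this using 1
    · ext p; ring
    · rw [sq]; rfl
  have e2 := hasSum_sum e1
  have e3 : HasSum (fun p : Nat.Primes => (p : ℝ) ^ (-s) * ((QF q).card * T)) (S0 s * ((QF q).card * T)) :=
    (prime_summable hs).hasSum.mul_right _
  have := hasSum_le (fun p => ?_) e2 e3
  · refine this.trans_eq ?_
    ring
  rw [← Finset.mul_sum]
  refine mul_le_mul_of_nonneg_left ?_ (pp_nonneg p _)
  have f1 : ∀ (r : ℕ) [NeZero r], HasSum (fun p' : Nat.Primes => (∑ χ ∈ QF r, chf χ p * chf χ p') * (p' : ℝ) ^ (-s))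
      (∑ χ ∈ QF r, chf χ p * SS (chf χ) s) := by
    intro r _
    have := hasSum_sum (s := QF r) (fun χ _ => (SS_summable (f := chf χ) chf_abs hs).hasSum.mul_left (chf χ p))
    convert! this using 1
    ext p'
    rw [Finset.sum_mul]
    exact Finset.sum_congr rfl fun χ _ => by ring
  have f2 := (f1 P).mul_left ((QF q).card / (QF P).card : ℝ)
  have f3 := hasSum_le (fun p' => ?_) (f1 q) f2
  · refine f3.trans ?_
    have : ∑ χ ∈ QF P, chf χ p * SS (chf χ) s ≤ (QF P).card * T := by
      refine le_trans (Finset.sum_le_sum fun χ _ => ?_) hT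
      refine (le_abs_self _).trans ?_
      rw [abs_mul]
      exact mul_le_of_le_one_left (abs_nonneg _) (chf_abs p)
    refine (mul_le_mul_of_nonneg_left this (by positivity)).trans_eq ?_
    field_simp
  · rw [← mul_assoc]
    refine mul_le_mul_of_nonneg_right ?_ (pp_nonneg p' _)
    rw [Finset.sum_congr rfl (fun χ hχ => chf_mul (mem_QF.1 hχ) p p'),
      Finset.sum_congr rfl (fun χ hχ => chf_mul (q := P) (mem_QF.1 hχ) p p')]
    refine (transfer hP _).trans_eq ?_
    ring

lemma QF_card_ge (S : Finset ℕ) (hS : ∀ p ∈ S, p.Prime ∧ p ≠ 2) [NeZero (∏ i : S, (i : ℕ))] :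
    2 ^ S.card ≤ (QF (∏ i : S, (i : ℕ))).card := by
  classical
  set P := ∏ i : S, (i : ℕ) with hP
  obtain ⟨e⟩ := DirichletCharacter.mulEquiv_units ℂ P
  have hcop : Pairwise (Function.onFun Nat.Coprime fun i : S => (i : ℕ)) := by
    intro i j hij
    exact (Nat.coprime_primes (hS i i.2).1 (hS j j.2).1).2 fun h => hij (Subtype.ext h)
  let f : ZMod P ≃+* ∀ i : S, ZMod (i : ℕ) := ZMod.prodEquivPi (fun i : S => (i : ℕ)) hcop
  let v : (S → Bool) → (∀ i : S, ZMod (i : ℕ)) := fun b i => if b i then 1 else -1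
  have hv : ∀ b, v b * v b = 1 := by
    intro b
    ext i
    simp only [v, Pi.mul_apply, Pi.one_apply]
    split_ifs <;> simp
  have hvf : ∀ b, f.symm (v b) * f.symm (v b) = 1 := by
    intro b; rw [← map_mul, hv, map_one]
  let u : (S → Bool) → (ZMod P)ˣ := fun b => ⟨f.symm (v b), f.symm (v b), hvf b, hvf b⟩
  have hu : Function.Injective u := by
    intro b b' h
    have h1 : f.symm (v b) = f.symm (v b') := congrArg Units.val h
    have h2 := f.symm.injective h1
    ext i
    have h3 := congrFun h2 i
    simp only [v] at h3
    have hp := hS i i.2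
    have : Fact (2 < (i : ℕ)) := ⟨lt_of_le_of_ne hp.1.two_le (Ne.symm hp.2)⟩
    have hne : (-1 : ZMod (i:ℕ)) ≠ 1 := ZMod.neg_one_ne_one
    rcases hb : b i <;> rcases hb' : b' i <;> simp [hb, hb'] at h3 ⊢
    · exact hne h3
    · exact hne h3.symm
  have := Finset.card_le_card_of_injOn (s := (Finset.univ : Finset (S → Bool))) (t := QF P)
    (fun b => e.symm (u b)) (fun b _ => ?_) (fun b _ b' _ h => hu (e.symm.injective h))
  · have hcard : (Finset.univ : Finset (S → Bool)).card = 2 ^ S.card := by simp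
    rw [hcard] at this
    exact this
  · rw [Finset.mem_coe, mem_QF, ← map_pow]
    have : u b ^ 2 = 1 := by
      rw [sq]; ext; exact hvf b
    rw [this, map_one]

end QM

namespace QM

lemma L_one_re {q : ℕ} [NeZero q] {χ : DirichletCharacter ℂ q} (h2 : χ ^ 2 = 1) (h1 : χ ≠ 1) :
    (χ.LFunction 1).re = ‖χ.LFunction 1‖ := by
  obtain ⟨G, lam, hlam, hL, -⟩ := core h2 h1 (Q := max 16 q) (le_max_left _ _) (le_max_right _ _)
  rw [hL, Complex.norm_real, Complex.ofReal_re, Real.norm_of_nonneg hlam.le]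

open Classical in
def bad (q : ℕ) [NeZero q] (c Q : ℝ) : Finset (DirichletCharacter ℂ q) :=
  (QF q).filter (fun ψ => ψ = 1 ∨ Exc c Q ψ)

lemma bad_card {q : ℕ} [NeZero q] {c Q : ℝ}
    (h : ∀ χ₁ χ₂ : DirichletCharacter ℂ q, χ₁ ^ 2 = 1 → χ₁ ≠ 1 → χ₂ ^ 2 = 1 → χ₂ ≠ 1 →
        Exc c Q χ₁ → Exc c Q χ₂ → χ₁ = χ₂) : (bad q c Q).card ≤ 2 := by
  classical
  have h1 : ((bad q c Q).erase 1).card ≤ 1 := by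
    rw [Finset.card_le_one]
    intro a ha b hb
    simp only [bad, Finset.mem_erase, Finset.mem_filter, mem_QF] at ha hb
    exact h a b ha.2.1 ha.1 hb.2.1 hb.1 (ha.2.2.resolve_left ha.1) (hb.2.2.resolve_left hb.1)
  have := Finset.pred_card_le_card_erase (s := bad q c Q) (a := 1)
  omega

lemma omega_eq (Y : ℝ) (D : ℤ) (hD : D ≠ 0) :
    omegaY Y D = (D.natAbs.primeFactors.filter (fun p : ℕ => (p : ℝ) ≤ Y)).card := by
  unfold omegaY
  rw [Nat.subtype_card]
  intro p
  simp only [Finset.mem_filter, Nat.mem_primeFactors, Int.natCast_dvd]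
  have : D.natAbs ≠ 0 := by simpa using hD
  tauto

/-- numerics -/
lemma numeric {K X W y T v : ℝ} (hK : 0 ≤ K) (hX : 1 / 2 ≤ X) (hW : 1 / 2 ≤ W) (hy : 0 ≤ y) (hv : 0 ≤ v)
    (hT : T ≤ (2 + W + 3 * K) + 4 * y * (X + K)) :
    2 * (3 * v * ((X + K) * T)) + 2 * K ^ 2 * v ≤
      (6 * (1 + 2 * K) * (5 + 8 * K) + 8 * K ^ 2 + 1) * v * (X * W + X ^ 2 * y) := by
  have a1 : X + K ≤ (1 + 2 * K) * X := by nlinarith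
  have a2 : T ≤ (5 + 8 * K) * (W + y * X) := by
    have b1 : 2 + W + 3 * K ≤ (5 + 8 * K) * W := by nlinarith
    have b2 : 4 * y * (X + K) ≤ (5 + 8 * K) * (y * X) := by
      have : y * (X + K) ≤ y * ((1 + 2 * K) * X) := mul_le_mul_of_nonneg_left a1 hy
      have : 0 ≤ y * X := by positivity
      nlinarith
    linarith
  have a3 : (X + K) * T ≤ ((1 + 2 * K) * X) * ((5 + 8 * K) * (W + y * X)) := by
    have t1 : (X + K) * T ≤ (X + K) * ((5 + 8 * K) * (W + y * X)) := mul_le_mul_of_nonneg_left a2 (by linarith)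
    have t2 : (X + K) * ((5 + 8 * K) * (W + y * X)) ≤ ((1 + 2 * K) * X) * ((5 + 8 * K) * (W + y * X)) :=
      mul_le_mul_of_nonneg_right a1 (by positivity)
    linarith
  have a4 : 1 ≤ 4 * (X * W + X ^ 2 * y) := by
    have : 0 ≤ X ^ 2 * y := by positivity
    nlinarith
  have a5 : 2 * K ^ 2 * v ≤ 2 * K ^ 2 * v * (4 * (X * W + X ^ 2 * y)) := le_mul_of_one_le_right (by positivity) a4
  have a6 : 3 * v * ((X + K) * T) ≤ 3 * v * (((1 + 2 * K) * X) * ((5 + 8 * K) * (W + y * X))) :=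
    mul_le_mul_of_nonneg_left a3 (by positivity)
  have a7 : 0 ≤ v * (X * W + X ^ 2 * y) := by positivity
  nlinarith

lemma inner_bound {c K : ℝ} (hK : 0 ≤ K)
    (H : ∀ (q : ℕ) [NeZero q] (Q : ℝ), 16 ≤ Q → (q : ℝ) ≤ Q →
      (∀ χ : DirichletCharacter ℂ q, χ ^ 2 = 1 → χ ≠ 1 →
        (∀ η : ℝ, 0 < η → η ≤ 1 → SS (chf χ) (1 + η * dl Q) ≤ SS (chf χ) (1 + dl Q) + K) ∧
        Real.log ‖χ.LFunction 1‖ ≤ SS (chf χ) (1 + dl Q) + K ∧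
        (¬ Exc c Q χ → SS (chf χ) (1 + dl Q) ≤ Real.log ‖χ.LFunction 1‖ + K)) ∧
      (∀ χ₁ χ₂ : DirichletCharacter ℂ q, χ₁ ^ 2 = 1 → χ₁ ≠ 1 → χ₂ ^ 2 = 1 → χ₂ ≠ 1 →
        Exc c Q χ₁ → Exc c Q χ₂ → χ₁ = χ₂))
    (P : ℕ) [NeZero P] {Q' Q : ℝ} (h16 : 16 ≤ Q') (hPQ : (P : ℝ) ≤ Q') (hQ : Q' ≤ Q) :
    ∑ ψ ∈ QF P, |SS (chf ψ) (1 + dl Q)| ≤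
      (QF P).card * (S0 (1 + dl Q') + 2 * K + 2 * S0 (1 + dl Q) / (QF P).card) := by
  classical
  have hd0 := dl_pos (h16.trans hQ)
  have hd0' := dl_pos h16
  have hdd : dl Q ≤ dl Q' := by
    unfold dl
    have := logQ h16
    exact one_div_le_one_div_of_le (by linarith) (Real.log_le_log (by linarith) hQ)
  have hc : (0:ℝ) < (QF P).card := by exact_mod_cast QF_card_pos P
  have hb := bad_card (H P Q' h16 hPQ).2
  have key : ∀ ψ ∈ QF P, |SS (chf ψ) (1 + dl Q)| ≤ (S0 (1 + dl Q') + 2 * K) +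
      (if ψ ∈ bad P c Q' then S0 (1 + dl Q) else 0) := by
    intro ψ hψ
    have hS' := S0_nonneg (1 + dl Q')
    split_ifs with hbad
    · have := SS_le_S0 (f := chf ψ) chf_abs (s := 1 + dl Q) (by linarith)
      linarith
    · simp only [bad, Finset.mem_filter, not_and, not_or] at hbad
      obtain ⟨h1, hne⟩ := hbad hψ
      obtain ⟨a1, -, a3⟩ := (H P Q' h16 hPQ).1 ψ (mem_QF.1 hψ) h1
      obtain ⟨-, a2, -⟩ := (H P Q (h16.trans hQ) (hPQ.trans hQ)).1 ψ (mem_QF.1 hψ) h1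
      have b1 := a1 (dl Q / dl Q') (by positivity) ((div_le_one hd0').2 hdd)
      rw [div_mul_cancel₀ _ hd0'.ne'] at b1
      have b3 := a3 hne
      have := abs_le.1 (SS_le_S0 (f := chf ψ) chf_abs (s := 1 + dl Q') (by linarith))
      rw [add_zero, abs_le]
      constructor <;> linarith [this.1, this.2]
  refine (Finset.sum_le_sum key).trans ?_
  have e : ((QF P).card : ℝ) * (S0 (1 + dl Q') + 2 * K + 2 * S0 (1 + dl Q) / (QF P).card) =
      (QF P).card * (S0 (1 + dl Q') + 2 * K) + 2 * S0 (1 + dl Q) := by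
    field_simp
  rw [e, Finset.sum_add_distrib, Finset.sum_const, nsmul_eq_mul, ← Finset.sum_filter,
    Finset.sum_const, nsmul_eq_mul]
  have h3 : ((QF P).filter (fun ψ => ψ ∈ bad P c Q')).card ≤ 2 := by
    refine le_trans (Finset.card_le_card ?_) hb
    intro ψ hψ
    exact (Finset.mem_filter.1 hψ).2
  have h4 : (((QF P).filter (fun ψ => ψ ∈ bad P c Q')).card : ℝ) ≤ 2 := by exact_mod_cast h3
  have := mul_le_mul_of_nonneg_right h4 (S0_nonneg (1 + dl Q))
  linarith

lemma loglog3 : 0 ≤ Real.log (Real.log 3) := by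
  apply Real.log_nonneg
  rw [Real.le_log_iff_exp_le (by norm_num)]
  have := Real.exp_one_lt_d9
  linarith

set_option maxHeartbeats 1600000 in
lemma main_aux {c K : ℝ} (hK : 0 ≤ K)
    (hS0 : ∀ δ : ℝ, 0 < δ → δ ≤ 1 → |S0 (1 + δ) - Real.log (1 / δ)| ≤ K)
    (H : ∀ (q : ℕ) [NeZero q] (Q : ℝ), 16 ≤ Q → (q : ℝ) ≤ Q →
      (∀ χ : DirichletCharacter ℂ q, χ ^ 2 = 1 → χ ≠ 1 →
        (∀ η : ℝ, 0 < η → η ≤ 1 → SS (chf χ) (1 + η * dl Q) ≤ SS (chf χ) (1 + dl Q) + K) ∧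
        Real.log ‖χ.LFunction 1‖ ≤ SS (chf χ) (1 + dl Q) + K ∧
        (¬ Exc c Q χ → SS (chf χ) (1 + dl Q) ≤ Real.log ‖χ.LFunction 1‖ + K)) ∧
      (∀ χ₁ χ₂ : DirichletCharacter ℂ q, χ₁ ^ 2 = 1 → χ₁ ≠ 1 → χ₂ ^ 2 = 1 → χ₂ ≠ 1 →
        Exc c Q χ₁ → Exc c Q χ₂ → χ₁ = χ₂))
    (q : ℕ) [NeZero q] (Q : ℝ) (hqQ : (q : ℝ) = Q) (hQ16 : 16 ≤ Q) (Y : ℝ) (hY : 3 ≤ Y) (w : ℕ)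
    (hw : w = (q.primeFactors.filter (fun p : ℕ => (p : ℝ) ≤ Y)).card)
    (V : Finset (DirichletCharacter ℂ q))
    (hV : ∀ χ, χ ∈ V ↔ χ ^ 2 = 1 ∧ χ ≠ 1 ∧
              ¬∃ β : ℝ, χ.LFunction β = 0 ∧ 1 - c / Real.log Q < β) (hVne : V.Nonempty) :
    ∑ χ ∈ V, Real.log (χ.LFunction 1).re ^ 2 ≤
      (6 * (1 + 2 * K) * (5 + 8 * K) + 8 * K ^ 2 + 1) * V.card * (Real.log (Real.log Q) *
          (Real.log ((w : ℝ) + 2) + Real.log (Real.log Y)) +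
        Real.log (Real.log Q) ^ 2 / 2 ^ w) := by
  classical
  -- the primes
  set S := (q.primeFactors.filter (fun p : ℕ => (p : ℝ) ≤ Y)).erase 2 with hS
  have hSp : ∀ p ∈ S, p.Prime ∧ p ≠ 2 := by
    intro p hp
    simp only [hS, Finset.mem_erase, Finset.mem_filter, Nat.mem_primeFactors] at hp
    exact ⟨hp.2.1.1, hp.1⟩
  have hω : w ≤ S.card + 1 := by
    rw [hw]
    have := Finset.pred_card_le_card_erase
      (s := q.primeFactors.filter (fun p : ℕ => (p : ℝ) ≤ Y)) (a := 2)
    rw [← hS] at this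
    omega
  have hω2 : S.card ≤ w := by
    rw [hw]
    exact Finset.card_le_card (Finset.erase_subset _ _)
  set P := ∏ i : S, (i : ℕ) with hP
  have hPS : P = ∏ i ∈ S, i := by rw [hP]; exact Finset.prod_coe_sort S (fun i => i)
  have hP0 : P ≠ 0 := by
    rw [hPS]; exact Finset.prod_ne_zero_iff.2 fun p hp => (hSp p hp).1.ne_zero
  have : NeZero P := ⟨hP0⟩
  have hPq : P ∣ q := by
    rw [hPS]
    refine Finset.prod_primes_dvd q (fun p hp => (hSp p hp).1.prime) fun p hp => ?_
    simp only [hS, Finset.mem_erase, Finset.mem_filter, Nat.mem_primeFactors] at hp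
    exact hp.2.1.2.1
  have hPQ : (P : ℝ) ≤ Q := by
    rw [← hqQ]; exact_mod_cast Nat.le_of_dvd (Nat.pos_of_ne_zero (NeZero.ne q)) hPq
  set Q' : ℝ := max 16 P with hQ'
  have h16 : 16 ≤ Q' := le_max_left _ _
  have hQQ : Q' ≤ Q := max_le hQ16 hPQ
  have hG : 2 ^ S.card ≤ (QF P).card := QF_card_ge S hSp
  -- quantities
  set X := Real.log (Real.log Q) with hX
  set W := Real.log ((w : ℝ) + 2) + Real.log (Real.log Y) with hW
  have hlQ := logQ hQ16
  have hlQ' := logQ h16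
  have hX1 : 1 / 2 ≤ X := by
    have h1 : Real.log 2 ≤ X := Real.log_le_log (by norm_num) (by linarith)
    have := Real.log_two_gt_d9
    linarith
  have hlogY : Real.log 3 ≤ Real.log Y := Real.log_le_log (by norm_num) hY
  have hlog3 : 1 ≤ Real.log 3 := by
    rw [Real.le_log_iff_exp_le (by norm_num)]
    have := Real.exp_one_lt_d9
    linarith
  have hW1 : 1 / 2 ≤ W := by
    have h1 : Real.log 2 ≤ Real.log ((w : ℝ) + 2) :=
      Real.log_le_log (by norm_num) (by have : (0:ℝ) ≤ w := Nat.cast_nonneg w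
                                        linarith)
    have h2 : 0 ≤ Real.log (Real.log Y) := Real.log_nonneg (by linarith)
    have := Real.log_two_gt_d9
    linarith
  have hSd : S0 (1 + dl Q) ≤ X + K := by
    have := hS0 (dl Q) (dl_pos hQ16) (by have := dl_le hQ16; linarith)
    rw [show 1 / dl Q = Real.log Q by unfold dl; rw [one_div_one_div], abs_le] at this
    linarith [this.2]
  have hlogQ' : Real.log Q' ≤ 3 * (((w : ℝ) + 2) * Real.log Y) := by
    have hw0 : (0:ℝ) ≤ w := Nat.cast_nonneg w
    rcases max_choice (16:ℝ) (P:ℝ) with h | h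
    · rw [hQ', h]
      have : Real.log 16 < 2.8 := by
        rw [show (16:ℝ) = 2 ^ 4 by norm_num, Real.log_pow]
        have := Real.log_two_lt_d9
        push_cast; linarith
      nlinarith
    · rw [hQ', h]
      have h1 : Real.log P ≤ S.card * Real.log Y := by
        rw [hPS, Nat.cast_prod, Real.log_prod]
        · rw [← nsmul_eq_mul]
          refine Finset.sum_le_card_nsmul _ _ _ fun p hp => ?_
          refine Real.log_le_log (by exact_mod_cast (hSp p hp).1.pos) ?_
          simp only [hS, Finset.mem_erase, Finset.mem_filter] at hp
          exact hp.2.2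
        · intro p hp
          exact_mod_cast (hSp p hp).1.ne_zero
      have h2 : (S.card : ℝ) ≤ w := by exact_mod_cast hω2
      nlinarith
  have hSd' : S0 (1 + dl Q') ≤ 2 + W + K := by
    have := hS0 (dl Q') (dl_pos h16) (by have := dl_le h16; linarith)
    rw [show 1 / dl Q' = Real.log Q' by unfold dl; rw [one_div_one_div], abs_le] at this
    have h2 := Real.log_le_log (by linarith) hlogQ'
    have hw0 : (0:ℝ) ≤ w := Nat.cast_nonneg w
    rw [Real.log_mul (by norm_num) (by apply mul_ne_zero <;> linarith),
      Real.log_mul (by linarith) (by linarith)] at h2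
    have h3 : Real.log 3 ≤ 2 := by
      have := Real.log_le_sub_one_of_pos (by norm_num : (0:ℝ) < 3); linarith
    linarith [this.2]
  have hinner := inner_bound hK H P h16 (le_max_right _ _) hQQ
  set T := S0 (1 + dl Q') + 2 * K + 2 * S0 (1 + dl Q) / (QF P).card with hT
  have hGr : (2:ℝ) ^ w ≤ 2 * (QF P).card := by
    have : 2 ^ w ≤ 2 * (QF P).card := by
      calc 2 ^ w ≤ 2 ^ (S.card + 1) := Nat.pow_le_pow_right (by norm_num) hω
        _ = 2 * 2 ^ S.card := by ring
        _ ≤ _ := by omega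
    exact_mod_cast this
  have hTle : T ≤ (2 + W + 3 * K) + 4 * (1 / 2 ^ w) * (X + K) := by
    have hgc : (0:ℝ) < (QF P).card := by exact_mod_cast QF_card_pos P
    have h1 : 2 * S0 (1 + dl Q) / (QF P).card ≤ 4 * (1 / 2 ^ w) * (X + K) := by
      rw [div_le_iff₀ hgc]
      have h2 : 1 ≤ 2 * (1 / 2 ^ w) * ((QF P).card : ℝ) := by
        rw [mul_one_div, div_mul_eq_mul_div, le_div_iff₀ (by positivity)]; linarith
      have h3 : X + K ≤ (X + K) * (2 * (1 / 2 ^ w) * ((QF P).card : ℝ)) :=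
        le_mul_of_one_le_right (by linarith) h2
      linarith
    linarith
  have hsec := second hPq (s := 1 + dl Q) (by have := dl_pos hQ16; linarith) hinner
  have hT0 : 0 ≤ T := by
    have := S0_nonneg (1 + dl Q')
    have := S0_nonneg (1 + dl Q)
    positivity
  -- card comparison
  have hHQ := H q Q hQ16 hqQ.le
  have hcard : ((QF q).card : ℝ) ≤ 3 * V.card := by
    have h1 : QF q ⊆ V ∪ bad q c Q := by
      intro χ hχ
      rw [Finset.mem_union]
      by_cases hb : χ ∈ bad q c Q
      · exact Or.inr hb
      · left
        simp only [bad, Finset.mem_filter, not_and, not_or] at hb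
        obtain ⟨a, b⟩ := hb hχ
        rw [hV]
        refine ⟨mem_QF.1 hχ, a, ?_⟩
        rw [show c / Real.log Q = c * dl Q by unfold dl; ring]
        exact b
    have h2 := (Finset.card_le_card h1).trans (Finset.card_union_le _ _)
    have h3 := bad_card hHQ.2
    have h4 : 1 ≤ V.card := Finset.card_pos.2 hVne
    have : (QF q).card ≤ 3 * V.card := by omega
    exact_mod_cast this
  have hterm : ∀ χ ∈ V, Real.log (χ.LFunction 1).re ^ 2 ≤ 2 * SS (chf χ) (1 + dl Q) ^ 2 + 2 * K ^ 2 := by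
    intro χ hχ
    obtain ⟨h2, h1, hno⟩ := (hV χ).1 hχ
    rw [show c / Real.log Q = c * dl Q by unfold dl; ring] at hno
    obtain ⟨-, a2, a3⟩ := hHQ.1 χ h2 h1
    have b := a3 hno
    rw [L_one_re h2 h1]
    set l := Real.log ‖χ.LFunction 1‖
    set σ := SS (chf χ) (1 + dl Q)
    have h3 : (l - σ) ^ 2 ≤ K ^ 2 := sq_le_sq' (by linarith) (by linarith)
    nlinarith [sq_nonneg (l - 2 * σ)]
  have hVsub : V ⊆ QF q := fun χ hχ => mem_QF.2 ((hV χ).1 hχ).1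
  have hfin : ∑ χ ∈ V, Real.log (χ.LFunction 1).re ^ 2 ≤
      2 * (3 * V.card * ((X + K) * T)) + 2 * K ^ 2 * V.card := by
    calc ∑ χ ∈ V, Real.log (χ.LFunction 1).re ^ 2
        ≤ ∑ χ ∈ V, (2 * SS (chf χ) (1 + dl Q) ^ 2 + 2 * K ^ 2) := Finset.sum_le_sum hterm
      _ = 2 * ∑ χ ∈ V, SS (chf χ) (1 + dl Q) ^ 2 + 2 * K ^ 2 * V.card := by
          rw [Finset.sum_add_distrib, ← Finset.mul_sum, Finset.sum_const, nsmul_eq_mul]; ring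
      _ ≤ 2 * (3 * V.card * ((X + K) * T)) + 2 * K ^ 2 * V.card := by
          have h1 : ∑ χ ∈ V, SS (chf χ) (1 + dl Q) ^ 2 ≤ ∑ χ ∈ QF q, SS (chf χ) (1 + dl Q) ^ 2 :=
            Finset.sum_le_sum_of_subset_of_nonneg hVsub fun _ _ _ => sq_nonneg _
          have h2 : S0 (1 + dl Q) * T ≤ (X + K) * T := mul_le_mul_of_nonneg_right hSd hT0
          have h3 : ((QF q).card : ℝ) * (S0 (1 + dl Q) * T) ≤ 3 * V.card * ((X + K) * T) :=
            mul_le_mul hcard h2 (mul_nonneg (S0_nonneg _) hT0) (by positivity)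
          linarith
  refine hfin.trans ?_
  have := numeric (v := V.card) hK hX1 hW1 (y := 1 / 2 ^ w) (by positivity) (Nat.cast_nonneg _) hTle
  refine this.trans_eq ?_
  ring

lemma main : ∃ c C : ℝ, 0 < c ∧ 0 < C ∧
      ∀ (D : ℤ) [NeZero D.natAbs], 16 ≤ |D| →
        ∀ Y : ℝ, 3 ≤ Y →
          ∀ V : Finset (DirichletCharacter ℂ D.natAbs),
            (∀ χ, χ ∈ V ↔ χ ^ 2 = 1 ∧ χ ≠ 1 ∧
              ¬∃ β : ℝ, χ.LFunction β = 0 ∧ 1 - c / Real.log |(D : ℝ)| < β) →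
            ∑ χ ∈ V, Real.log (χ.LFunction 1).re ^ 2 ≤
              C * V.card * (Real.log (Real.log |(D : ℝ)|) *
                  (Real.log ((omegaY Y D : ℝ) + 2) + Real.log (Real.log Y)) +
                Real.log (Real.log |(D : ℝ)|) ^ 2 / 2 ^ omegaY Y D) := by
  classical
  obtain ⟨c, K, hc0, hc1, hK, hS0, H⟩ := package
  refine ⟨c, 6 * (1 + 2 * K) * (5 + 8 * K) + 8 * K ^ 2 + 1, hc0, by positivity, ?_⟩
  intro D _ hD Y hY V hV
  rcases V.eq_empty_or_nonempty with rfl | hVne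
  · simp
  have hD0 : D ≠ 0 := by rintro rfl; simp at hD
  have hqQ : (D.natAbs : ℝ) = |(D : ℝ)| := by rw [Nat.cast_natAbs, Int.cast_abs]
  have hQ16 : 16 ≤ |(D : ℝ)| := by
    rw [← Int.cast_abs]; exact_mod_cast hD
  exact main_aux hK hS0 H D.natAbs _ hqQ hQ16 Y hY _ (omega_eq Y D hD0) V hV hVne

end QM

/-- Second-moment bound: there are absolute constants `c, C > 0` such that for every fundamental
discriminant `D` with `|D| ≥ 16` and every `3 ≤ Y < |D|`, with `V` the set of quadratic Dirichlet
characters mod `|D|` whose `L`-function has no real zero `β > 1 - c/log |D|`,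
`∑_{χ ∈ V} (log L(1,χ))² ≤ C·#V·[(log log |D|)(log(ω_Y(D)+2) + log log Y) + (log log |D|)²/2^{ω_Y(D)}]`. -/
theorem statement_7 :
    ∃ c C : ℝ, 0 < c ∧ 0 < C ∧
      ∀ (D : ℤ) [NeZero D.natAbs], IsFundDiscr D → 16 ≤ |D| →
        ∀ Y : ℝ, 3 ≤ Y → Y < |(D : ℝ)| →
          ∀ V : Finset (DirichletCharacter ℂ D.natAbs),
            (∀ χ, χ ∈ V ↔ χ ^ 2 = 1 ∧ χ ≠ 1 ∧
              ¬∃ β : ℝ, χ.LFunction β = 0 ∧ 1 - c / Real.log |(D : ℝ)| < β) →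
            ∑ χ ∈ V, Real.log (χ.LFunction 1).re ^ 2 ≤
              C * V.card * (Real.log (Real.log |(D : ℝ)|) *
                  (Real.log ((omegaY Y D : ℝ) + 2) + Real.log (Real.log Y)) +
                Real.log (Real.log |(D : ℝ)|) ^ 2 / 2 ^ omegaY Y D) := by
  obtain ⟨c, C, hc, hC, H⟩ := QM.main
  exact ⟨c, C, hc, hC, fun D _ _ h16 Y hY _ V hV => H D h16 Y hY V hV⟩
end
end
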